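/- arXiv:1909.01972 — 2 statements merged into one kernel-verified Lean document; each statement's English description precedes it below -/
import Mathlib

section
/- Assume x, x' ∈ G_n with tx(B_{G_n}(x,R)) = 0 and tx(B_{G_n}(x',R)) = 0 satisfy B_{G_n}(x,R) ∩ B_{G_n}(x',R) = ∅ for some R ≥ 1, and let U ⊆ B_{G_n}(x,R−1) ∪ B_{G_n}(x',R−1). Then there exists a coupling of the zero-average Gaussian free field Ψ_{G_n} and the Gaussian free field φ_{T_d} under which, almost surely, Ψ_{G_n}(y) − E_y^{G_n}[ Ψ_{G_n}(X_{T_U}) ] = φ_{T_d}(ρ_{x,x',R}(y)) − E_{ρ_{x,x',R}(y)}^{T_d}[ φ_{T_d}(X_{T_{ρ_{x,x',R}(U)}}) ] for all y ∈ B_{G_n}(x,R) ∪ B_{G_n}(x',R). Similarly, for a single x ∈ G_n with tx(B_{G_n}(x,R)) = 0 and U ⊆ B_{G_n}(x,R−1), the identity holds for all y ∈ B_{G_n}(x,R) with ρ_{x,x',R} replaced by ρ_{x,R}. -/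
open MeasureTheory ProbabilityTheory Filter Set
open scoped ENNReal NNReal ENat Classical

namespace GFF

variable {V : Type*} {T : Type*}

/-- Number of ordered adjacent pairs inside `U` (twice the number of edges of the induced
subgraph). -/
noncomputable def adjPairs (G : SimpleGraph V) (U : Set V) : ℕ :=
  Set.ncard {p : V × V | p.1 ∈ U ∧ p.2 ∈ U ∧ G.Adj p.1 p.2}

/-- `U` (assumed connected) induces a tree, i.e. has tree excess zero. -/
def TxZero (G : SimpleGraph V) (U : Set V) : Prop :=
  adjPairs G U = 2 * (Set.ncard U - 1)

/-- Closed ball of radius `R` for the graph distance. -/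
def gball (G : SimpleGraph V) (x : V) (R : ℕ) : Set V := {y | G.dist x y ≤ R}

/-- Set of vertices within distance `R` of the set `A`. -/
def sball (G : SimpleGraph V) (A : Set V) (R : ℕ) : Set V := {y | ∃ a ∈ A, G.dist a y ≤ R}

/-- Connected component containing `x` of the level set `{ω ≥ h}`. -/
def levelComp (G : SimpleGraph V) (h : ℝ) (ω : V → ℝ) (x : V) : Set V :=
  {y | ∃ p : G.Walk x y, ∀ v ∈ p.support, h ≤ ω v}

/-- `G` is `d`-regular. -/
def IsReg (G : SimpleGraph V) (d : ℕ) : Prop := ∀ v, Nat.card (G.neighborSet v) = d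

/-- `G` is an infinite `d`-regular tree. -/
def IsRegTree (G : SimpleGraph V) (d : ℕ) : Prop :=
  G.Connected ∧ G.IsAcyclic ∧ IsReg G d

/-- Transition matrix of SRW on a `d`-regular graph. -/
noncomputable def transP [Fintype V] (G : SimpleGraph V) (d : ℕ) : Matrix V V ℝ :=
  Matrix.of fun u v => if G.Adj u v then ((d : ℝ))⁻¹ else 0

/-- All non-zero eigenvalues of `I - P` are at least `β`. -/
def SpectralGapLB [Fintype V] (G : SimpleGraph V) (d : ℕ) (β : ℝ) : Prop :=
  ∀ (f : V → ℝ) (lam : ℝ),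
    Matrix.mulVec ((1 : Matrix V V ℝ) - transP G d) f = lam • f → f ≠ 0 → lam = 0 ∨ β ≤ lam

/-- `P_x[X̄_t = y]` for the continuous-time SRW with i.i.d. mean-one exponential holding
times (Poissonized jump chain). -/
noncomputable def heatK [Fintype V] (G : SimpleGraph V) (d : ℕ) (t : ℝ) (x y : V) : ℝ :=
  ∑' k : ℕ, Real.exp (-t) * t ^ k / (Nat.factorial k) * ((transP G d) ^ k) x y

/-- The zero-average Green function. -/
noncomputable def zGreen [Fintype V] (G : SimpleGraph V) (d Nn : ℕ) (x y : V) : ℝ :=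
  ∫ t in Set.Ioi (0 : ℝ), (heatK G d t x y - 1 / (Nn : ℝ))

/-- Green function of SRW on the `d`-regular tree. -/
noncomputable def treeGreen (G : SimpleGraph V) (d : ℕ) (x y : V) : ℝ :=
  (((d : ℝ) - 1) / ((d : ℝ) - 2)) * (((d : ℝ) - 1)⁻¹) ^ (G.dist x y)

/-- `μ` is the law of the centred Gaussian field with covariance `K`. -/
def IsGaussianField {I : Type*} (μ : Measure (I → ℝ)) (K : I → I → ℝ) : Prop :=
  IsProbabilityMeasure μ ∧
    ∀ c : I →₀ ℝ,
      μ.map (fun ω => ∑ i ∈ c.support, c i * ω i) =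
        gaussianReal 0 (Real.toNNReal (∑ i ∈ c.support, ∑ j ∈ c.support, c i * c j * K i j))

/-- One-step transition probability of SRW. -/
noncomputable def srwStep (G : SimpleGraph V) (d : ℕ) (u v : V) : ℝ≥0∞ :=
  if G.Adj u v then (d : ℝ≥0∞)⁻¹ else 0

/-- `W x` is the law of discrete-time SRW on `G` started at `x`. -/
def IsSRW [MeasurableSpace V] (G : SimpleGraph V) (d : ℕ) (W : V → Measure (ℕ → V)) : Prop :=
  (∀ x, IsProbabilityMeasure (W x)) ∧
    ∀ (x : V) (k : ℕ) (p : ℕ → V),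
      W x {ω | ∀ i ≤ k, ω i = p i} =
        (if p 0 = x then 1 else 0) * ∏ i ∈ Finset.range k, srwStep G d (p i) (p (i + 1))

/-- Entrance time of the set `A` (`⊤` if never entered). -/
noncomputable def hitTime (A : Set V) (ω : ℕ → V) : ℕ∞ :=
  sInf ((Nat.cast : ℕ → ℕ∞) '' {k | ω k ∈ A})

/-- Exit time of the set `U`. -/
noncomputable def exitTime (U : Set V) (ω : ℕ → V) : ℕ∞ := hitTime Uᶜ ω

/-- Position of the walk at the entrance time of `A`. -/
noncomputable def stopAt (A : Set V) (ω : ℕ → V) : V := ω (hitTime A ω).toNat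

/-- `π` is a cover tree of `G` at `x`. -/
def IsCoverMap (Gt : SimpleGraph T) (G : SimpleGraph V) (o : T) (x : V) (π : T → V) : Prop :=
  π o = x ∧ Function.Surjective π ∧ ∀ y : T, π '' (Gt.neighborSet y) = G.neighborSet (π y)

/-- `T_d^+`: the vertices of the tree whose geodesic to `o` avoids the fixed neighbour
`obar` of `o`. -/
def treePlus (Gt : SimpleGraph T) (o obar : T) : Set T :=
  {z | Gt.dist z obar = Gt.dist z o + 1}

/-- `S^+_{T_d}(o,R)`. -/
def spherePlus (Gt : SimpleGraph T) (o obar : T) (R : ℕ) : Set T :=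
  {z | z ∈ treePlus Gt o obar ∧ Gt.dist o z = R}

/-- The critical value for level-set percolation on the tree (w.r.t. the law `μT`). -/
noncomputable def hstar (Gt : SimpleGraph T) (o : T) (μT : Measure (T → ℝ)) : ℝ :=
  sInf {h : ℝ | μT {ω | (levelComp Gt h ω o).Infinite} = 0}

/-- The forward percolation probability `η⁺(h)`. -/
noncomputable def etaPlus (Gt : SimpleGraph T) (o obar : T) (μT : Measure (T → ℝ)) (h : ℝ) :
    ℝ :=
  (μT {ω | (levelComp Gt h ω o ∩ treePlus Gt o obar).Infinite}).toReal

/-- `s_n`. -/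
noncomputable def sn (d Nn : ℕ) : ℕ :=
  max 1 ⌊(8 : ℝ) * Real.logb ((d : ℝ) - 1) (Real.logb ((d : ℝ) - 1) (Nn : ℝ))⌋₊

/-- `c₀ = αβ/(d-1)`. -/
noncomputable def c0 (d : ℕ) (α β : ℝ) : ℝ := α * β / ((d : ℝ) - 1)

/-- `r_n`. -/
noncomputable def rn (d : ℕ) (α β : ℝ) (Nn : ℕ) : ℕ :=
  max 1 ⌊(c0 d α β / 18) * Real.logb ((d : ℝ) - 1) (Nn : ℝ)⌋₊

/-- `R_n`. -/
noncomputable def Rn (d : ℕ) (α β : ℝ) (Nn : ℕ) : ℕ :=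
  max 1 ⌊(c0 d α β / 6) * Real.logb ((d : ℝ) - 1) (Nn : ℝ)⌋₊

/-- `F_A(x,s)`: the vertices of `B(A,s) ∖ A` connected to `x` within `B(A,s) ∖ A`. -/
def Fset (G : SimpleGraph V) (A : Set V) (s : ℕ) (x : V) : Set V :=
  {z | ∃ p : G.Walk x z, ∀ v ∈ p.support, v ∈ sball G A s ∧ v ∉ A}

/-- Good vertex at the boundary of `A`. -/
def GoodVertex (G : SimpleGraph V) (A : Set V) (s : ℕ) (x : V) : Prop :=
  x ∉ A ∧ (∃! y, y ∈ A ∧ G.Adj x y) ∧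
    TxZero G (Fset G A s x) ∧
    ∀ y : V, y ∉ A → (∃ a ∈ A, G.Adj y a) → y ≠ x →
      ∀ p : G.Walk y x, (∀ v ∈ p.support, v ∉ A) → ∃ v ∈ p.support, v ∉ sball G A s

end GFF
namespace GFF

lemma exists_nb {I : Type*} (G : SimpleGraph I) (d : ℕ) (hd : 3 ≤ d) (h : IsReg G d) :
    ∃ nb : I → Finset I, (∀ v w, w ∈ nb v ↔ G.Adj v w) ∧ ∀ v, (nb v).card = d := by
  have hf : ∀ v, (G.neighborSet v).Finite := by
    intro v
    have h1 := h v
    have : Finite (G.neighborSet v) := Nat.finite_of_card_ne_zero (by omega)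
    exact Set.toFinite _
  refine ⟨fun v => (hf v).toFinset, fun v w => by simp, fun v => ?_⟩
  rw [← h v, Nat.card_coe_set_eq, Set.ncard_eq_toFinset_card _ (hf v)]

lemma countable_of_conn {I : Type*} (G : SimpleGraph I) (hc : G.Connected)
    (nb : I → Finset I) (hnb : ∀ v w, w ∈ nb v ↔ G.Adj v w) : Countable I := by
  obtain ⟨o⟩ := hc.nonempty
  have h : ∀ n : ℕ, {y | ∃ p : G.Walk y o, p.length = n}.Countable := by
    intro n
    induction n with
    | zero =>
      refine (Set.countable_singleton o).mono ?_
      rintro y ⟨p, hp⟩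
      exact SimpleGraph.Walk.eq_of_length_eq_zero hp
    | succ n ih =>
      refine (ih.biUnion (fun z _ => (nb z).countable_toSet)).mono ?_
      rintro y ⟨p, hp⟩
      cases p with
      | nil => simp at hp
      | cons hadj q =>
        simp only [SimpleGraph.Walk.length_cons, Nat.add_right_cancel_iff] at hp
        simp only [Set.mem_iUnion]
        exact ⟨_, ⟨q, hp⟩, by simpa using (hnb _ _).2 hadj.symm⟩
  rw [← Set.countable_univ_iff]
  refine (Set.countable_iUnion h).mono ?_
  intro y _
  obtain ⟨p⟩ := hc.preconnected y o
  exact Set.mem_iUnion.2 ⟨p.length, p, rfl⟩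

lemma max_principle_aux {I : Type*} (G : SimpleGraph I) (hc : G.Connected) (d : ℕ) (hd : 3 ≤ d)
    (nb : I → Finset I) (hnb : ∀ v w, w ∈ nb v ↔ G.Adj v w) (hcard : ∀ v, (nb v).card = d)
    (S : Set I) (hS : S.Finite) (hSu : S ≠ Set.univ) (e : I → ℝ) (h0 : ∀ y, y ∉ S → e y = 0)
    (hh : ∀ y ∈ S, e y = (d : ℝ)⁻¹ * ∑ v ∈ nb y, e v) (y : I) : e y ≤ 0 := by
  by_contra hy
  push Not at hy
  have hyS : y ∈ S := by
    by_contra h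
    rw [h0 y h] at hy
    exact lt_irrefl _ hy
  obtain ⟨m, hmS, hm⟩ := Set.exists_max_image S e hS ⟨y, hyS⟩
  have hM : 0 < e m := lt_of_lt_of_le hy (hm y hyS)
  have hmax : ∀ v, e v ≤ e m := by
    intro v
    by_cases hv : v ∈ S
    · exact hm v hv
    · rw [h0 v hv]; exact hM.le
  have hd0 : (0 : ℝ) < d := by exact_mod_cast (by omega : 0 < d)
  have hstep : ∀ v w, G.Adj v w → e v = e m → e w = e m := by
    intro v w hvw hv
    have hvS : v ∈ S := by
      by_contra h
      rw [h0 v h] at hv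
      linarith
    have h1 := hh v hvS
    have h2 : ∑ u ∈ nb v, e u = ∑ u ∈ nb v, e m := by
      rw [Finset.sum_const, hcard, nsmul_eq_mul, ← hv, h1]
      field_simp
    exact (Finset.sum_eq_sum_iff_of_le (fun u _ => hmax u)).1 h2 w ((hnb _ _).2 hvw)
  have hall : ∀ v (_ : G.Walk m v), e v = e m := by
    intro v p
    have : ∀ a b (_ : G.Walk a b), e a = e m → e b = e m := by
      intro a b p
      induction p with
      | nil => exact id
      | cons h q ih => exact fun ha => ih (hstep _ _ h ha)
    exact this m v p rfl
  obtain ⟨z, hz⟩ := (Set.ne_univ_iff_exists_notMem S).1 hSu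
  obtain ⟨p⟩ := hc.preconnected m z
  have := hall z p
  rw [h0 z hz] at this
  linarith

lemma max_principle {I : Type*} (G : SimpleGraph I) (hc : G.Connected) (d : ℕ) (hd : 3 ≤ d)
    (nb : I → Finset I) (hnb : ∀ v w, w ∈ nb v ↔ G.Adj v w) (hcard : ∀ v, (nb v).card = d)
    (S : Set I) (hS : S.Finite) (hSu : S ≠ Set.univ) (e : I → ℝ) (h0 : ∀ y, y ∉ S → e y = 0)
    (hh : ∀ y ∈ S, e y = (d : ℝ)⁻¹ * ∑ v ∈ nb y, e v) (y : I) : e y = 0 := by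
  refine le_antisymm (max_principle_aux G hc d hd nb hnb hcard S hS hSu e h0 hh y) ?_
  have := max_principle_aux G hc d hd nb hnb hcard S hS hSu (fun v => - e v)
    (fun v hv => by simp [h0 v hv]) (fun v hv => by
      rw [Finset.sum_neg_distrib, mul_neg, ← hh v hv]) y
  linarith

lemma treeGreen_lap {I : Type*} (G : SimpleGraph I) (hc : G.Connected) (ha : G.IsAcyclic)
    (d : ℕ) (hd : 3 ≤ d)
    (nb : I → Finset I) (hnb : ∀ v w, w ∈ nb v ↔ G.Adj v w) (hcard : ∀ v, (nb v).card = d)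
    (x y : I) :
    treeGreen G d x y - (d : ℝ)⁻¹ * ∑ z ∈ nb x, treeGreen G d z y =
      (if x = y then 1 else 0) - 0 := by
  have hd3 : (3 : ℝ) ≤ d := by exact_mod_cast hd
  have hd1 : (d : ℝ) - 1 ≠ 0 := by linarith
  have hd2 : (d : ℝ) - 2 ≠ 0 := by linarith
  have hd0 : (d : ℝ) ≠ 0 := by linarith
  have htree : G.IsTree := ⟨hc, ha⟩
  unfold treeGreen
  by_cases hxy : x = y
  · subst hxy
    have : ∀ z ∈ nb x, ((d : ℝ) - 1) / ((d : ℝ) - 2) * (((d : ℝ) - 1)⁻¹) ^ (G.dist z x)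
        = 1 / ((d : ℝ) - 2) := by
      intro z hz
      have h1 : G.dist z x = 1 := SimpleGraph.dist_eq_one_iff_adj.2 ((hnb _ _).1 hz).symm
      rw [h1]; field_simp
    rw [Finset.sum_congr rfl this, Finset.sum_const, hcard]
    simp only [SimpleGraph.dist_self, pow_zero, nsmul_eq_mul, if_true]
    field_simp
    ring
  · obtain ⟨p, hp⟩ := hc.exists_walk_length_eq_dist x y
    cases p with
    | nil => exact absurd rfl hxy
    | @cons _ w _ hxw q =>
      rw [SimpleGraph.Walk.length_cons] at hp
      have hadj : ∀ z ∈ nb x, G.dist y x = G.dist y z + 1 ∨ G.dist y z = G.dist y x + 1 :=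
        fun z hz => htree.dist_eq_dist_add_one_of_adj y ((hnb _ _).1 hz)
      have hwd : G.dist w y + 1 = G.dist x y := by
        have h1 : G.dist w y ≤ q.length := SimpleGraph.dist_le q
        have h2 := hadj w ((hnb _ _).2 hxw)
        rw [SimpleGraph.dist_comm, SimpleGraph.dist_comm (u := y) (v := w)] at h2
        omega
      have huniq : ∀ z ∈ nb x, z ≠ w → G.dist z y = G.dist x y + 1 := by
        intro z hz hzw
        have h2 := hadj z hz
        rw [SimpleGraph.dist_comm, SimpleGraph.dist_comm (u := y) (v := z)] at h2
        rcases h2 with h2 | h2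
        · exfalso
          obtain ⟨r, hr⟩ := hc.exists_walk_length_eq_dist z y
          have hxz := (hnb _ _).1 hz
          have hp1 : (SimpleGraph.Walk.cons hxw q).IsPath :=
            SimpleGraph.Walk.isPath_of_length_eq_dist _ (by simpa using hp)
          have hp2 : (SimpleGraph.Walk.cons hxz r).IsPath :=
            SimpleGraph.Walk.isPath_of_length_eq_dist _ (by simp; omega)
          have := (ha.subsingleton_path _ _).elim ⟨_, hp1⟩ ⟨_, hp2⟩
          have h3 : (SimpleGraph.Walk.cons hxw q) = (SimpleGraph.Walk.cons hxz r) := by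
            simpa using congrArg Subtype.val this
          have h4 := congrArg SimpleGraph.Walk.snd h3
          simp at h4
          exact hzw h4.symm
        · exact h2
      have hw : w ∈ nb x := (hnb _ _).2 hxw
      rw [← Finset.add_sum_erase _ _ hw]
      have : ∀ z ∈ (nb x).erase w, ((d : ℝ) - 1) / ((d : ℝ) - 2) * (((d : ℝ) - 1)⁻¹) ^ (G.dist z y)
        = ((d : ℝ) - 1) / ((d : ℝ) - 2) * (((d : ℝ) - 1)⁻¹) ^ (G.dist w y + 2) := by
        intro z hz
        rw [Finset.mem_erase] at hz
        rw [huniq z hz.2 hz.1, ← hwd]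
      rw [Finset.sum_congr rfl this, Finset.sum_const, Finset.card_erase_of_mem hw, hcard, ← hwd]
      rw [if_neg hxy, nsmul_eq_mul, Nat.cast_sub (by omega)]
      push_cast
      rw [pow_add, pow_add]
      generalize (((d : ℝ) - 1)⁻¹) ^ (G.dist w y) = t
      field_simp
      ring

end GFF
namespace GFF

lemma exists_eigen {V : Type} [Fintype V] (G : SimpleGraph V) (hc : G.Connected)
    (d : ℕ) (hd : 3 ≤ d)
    (nb : V → Finset V) (hnb : ∀ v w, w ∈ nb v ↔ G.Adj v w) (hcard : ∀ v, (nb v).card = d) :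
    ∃ (e : V → V → ℝ) (lam : V → ℝ),
      (∀ x y, ∑ i, e i x * e i y = if x = y then 1 else 0) ∧
      (∀ i x, e i x - (d : ℝ)⁻¹ * ∑ z ∈ nb x, e i z = lam i * e i x) ∧
      (∀ i, 0 ≤ lam i) ∧ (∀ i, lam i = 0 → ∀ x y, e i x = e i y) := by
  have hd0 : (0 : ℝ) < d := by exact_mod_cast (by omega : 0 < d)
  have hA : (G.lapMatrix ℝ).PosSemidef := G.posSemidef_lapMatrix ℝ
  have hH := hA.isHermitian
  have hnf : ∀ v, G.neighborFinset v = nb v := by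
    intro v; ext w; simp [hnb]
  have hdeg : ∀ v, G.degree v = d := by
    intro v; rw [← SimpleGraph.card_neighborFinset_eq_degree, hnf, hcard]
  have hev : ∀ i, Matrix.mulVec (G.lapMatrix ℝ) ⇑(hH.eigenvectorBasis i)
      = hH.eigenvalues i • ⇑(hH.eigenvectorBasis i) := fun i => hH.mulVec_eigenvectorBasis i
  refine ⟨fun i x => hH.eigenvectorBasis i x, fun i => (d : ℝ)⁻¹ * hH.eigenvalues i, ?_, ?_, ?_, ?_⟩
  · intro x y
    have h := congrFun (congrFun (Unitary.coe_mul_star_self hH.eigenvectorUnitary) x) y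
    rw [Matrix.mul_apply] at h
    simpa [Matrix.star_apply, Matrix.one_apply] using h
  · intro i x
    have h := congrFun (hev i) x
    rw [SimpleGraph.lapMatrix_mulVec_apply, hnf, hdeg] at h
    simp only [Pi.smul_apply, smul_eq_mul] at h
    rw [mul_assoc, ← h]
    field_simp
  · intro i
    exact mul_nonneg (by positivity) (hA.eigenvalues_nonneg i)
  · intro i hi x y
    have hi' : hH.eigenvalues i = 0 := by
      rcases mul_eq_zero.1 hi with h | h
      · exact absurd h (by positivity)
      · exact h
    have h := hev i
    rw [hi', zero_smul, SimpleGraph.lapMatrix_mulVec_eq_zero_iff_forall_reachable] at h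
    exact h x y (hc.preconnected x y)

lemma zGreen_lap {V : Type} [Fintype V] (G : SimpleGraph V) (hc : G.Connected)
    (d : ℕ) (hd : 3 ≤ d)
    (nb : V → Finset V) (hnb : ∀ v w, w ∈ nb v ↔ G.Adj v w) (hcard : ∀ v, (nb v).card = d)
    (x y : V) :
    zGreen G d (Fintype.card V) x y - (d : ℝ)⁻¹ * ∑ z ∈ nb x, zGreen G d (Fintype.card V) z y =
      (if x = y then 1 else 0) - 1 / (Fintype.card V : ℝ) := by
  obtain ⟨e, lam, hcompl, heig, hpos, hconst⟩ := exists_eigen G hc d hd nb hnb hcard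
  have hd0 : (0 : ℝ) < d := by exact_mod_cast (by omega : 0 < d)
  have hN : (0 : ℝ) < Fintype.card V := by
    have := hc.nonempty
    exact_mod_cast Fintype.card_pos
  -- sum of non constant eigenvectors
  have hadjsum : ∀ f : V → ℝ, ∑ u, ∑ z ∈ nb u, f z = d * ∑ z, f z := by
    intro f
    have h1 : ∀ u, ∑ z ∈ nb u, f z = ∑ z, if z ∈ nb u then f z else 0 := by
      intro u; rw [← Finset.sum_filter]; congr 1; ext z; simp
    simp_rw [h1]
    rw [Finset.sum_comm, Finset.mul_sum]
    refine Finset.sum_congr rfl fun z _ => ?_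
    have h2 : ∀ u, (if z ∈ nb u then f z else 0) = if u ∈ nb z then f z else 0 := by
      intro u; simp only [hnb, G.adj_comm]
    simp_rw [h2]
    rw [← Finset.sum_filter]
    have : (Finset.univ.filter fun u => u ∈ nb z) = nb z := by ext; simp
    rw [this, Finset.sum_const, hcard, nsmul_eq_mul]
  have hsum0 : ∀ i, lam i ≠ 0 → ∑ u, e i u = 0 := by
    intro i hi
    have h : ∑ u, (e i u - (d : ℝ)⁻¹ * ∑ z ∈ nb u, e i z) = ∑ u, lam i * e i u :=
      Finset.sum_congr rfl fun u _ => heig i u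
    rw [Finset.sum_sub_distrib, ← Finset.mul_sum, ← Finset.mul_sum, hadjsum] at h
    have h3 : lam i * ∑ u, e i u = 0 := by
      rw [← h]; field_simp; ring
    exact (mul_eq_zero.1 h3).resolve_left hi
  have hproj : ∀ x y, ∑ i, (if lam i = 0 then e i x * e i y else 0) = 1 / (Fintype.card V : ℝ) := by
    intro x y
    have h1 : ∑ w, ∑ i, e i x * e i w = 1 := by
      simp_rw [hcompl]; simp
    rw [Finset.sum_comm] at h1
    have h2 : ∀ i, ∑ w, e i x * e i w
        = Fintype.card V * (if lam i = 0 then e i x * e i y else 0) := by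
      intro i
      split_ifs with hi
      · rw [Finset.sum_congr rfl (fun w _ => by rw [hconst i hi w y] :
          ∀ w ∈ Finset.univ, e i x * e i w = e i x * e i y)]
        simp
      · rw [← Finset.mul_sum, hsum0 i hi]; simp
    simp_rw [h2, ← Finset.mul_sum] at h1
    field_simp
    linarith
  -- powers
  have hmul : ∀ i x, ∑ z, transP G d x z * e i z = (1 - lam i) * e i x := by
    intro i x
    have h1 : ∑ z, transP G d x z * e i z = (d : ℝ)⁻¹ * ∑ z ∈ nb x, e i z := by
      rw [Finset.mul_sum]
      have : nb x = Finset.univ.filter fun z => G.Adj x z := by ext; simp [hnb]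
      rw [this, Finset.sum_filter]
      refine Finset.sum_congr rfl fun z _ => ?_
      simp [transP]
    rw [h1]
    linarith [heig i x]
  have hpow : ∀ (k : ℕ) x y, ((transP G d) ^ k) x y = ∑ i, (1 - lam i) ^ k * (e i x * e i y) := by
    intro k
    induction k with
    | zero => intro x y; simp [hcompl, Matrix.one_apply]
    | succ k ih =>
      intro x y
      rw [pow_succ', Matrix.mul_apply]
      simp_rw [ih, Finset.mul_sum]
      rw [Finset.sum_comm]
      refine Finset.sum_congr rfl fun i _ => ?_
      have : ∀ z, transP G d x z * ((1 - lam i) ^ k * (e i z * e i y))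
        = (transP G d x z * e i z) * ((1 - lam i) ^ k * e i y) := fun z => by ring
      simp_rw [this]
      rw [← Finset.sum_mul, hmul]
      ring
  have hheat : ∀ t x y, heatK G d t x y = ∑ i, Real.exp (-(lam i) * t) * (e i x * e i y) := by
    intro t x y
    unfold heatK
    refine HasSum.tsum_eq ?_
    have hterm : ∀ i, HasSum (fun k : ℕ => Real.exp (-t) * t ^ k / (Nat.factorial k) *
        ((1 - lam i) ^ k * (e i x * e i y))) (Real.exp (-(lam i) * t) * (e i x * e i y)) := by
      intro i
      have h1 : HasSum (fun k : ℕ => (t * (1 - lam i)) ^ k / (Nat.factorial k))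
          (Real.exp (t * (1 - lam i))) := by
        rw [Real.exp_eq_exp_ℝ]
        exact NormedSpace.expSeries_div_hasSum_exp (t * (1 - lam i))
      have h2 := h1.mul_left (Real.exp (-t) * (e i x * e i y))
      have ha : (fun k : ℕ => Real.exp (-t) * t ^ k / (Nat.factorial k) *
        ((1 - lam i) ^ k * (e i x * e i y))) = fun k : ℕ => Real.exp (-t) * (e i x * e i y) *
          ((t * (1 - lam i)) ^ k / (Nat.factorial k)) := by
        funext k; rw [mul_pow]; ring
      have hb : Real.exp (-(lam i) * t) * (e i x * e i y)
          = Real.exp (-t) * (e i x * e i y) * Real.exp (t * (1 - lam i)) := by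
        have : -(lam i) * t = -t + t * (1 - lam i) := by ring
        rw [this, Real.exp_add]; ring
      rw [ha, hb]
      exact h2
    have := hasSum_sum (s := Finset.univ) (fun i _ => hterm i)
    convert this using 1
    ext k
    rw [hpow, Finset.mul_sum]
  have hz : ∀ x y, zGreen G d (Fintype.card V) x y
      = ∑ i, (if lam i = 0 then 0 else (lam i)⁻¹) * (e i x * e i y) := by
    intro x y
    unfold zGreen
    have h1 : ∀ t, heatK G d t x y - 1 / (Fintype.card V : ℝ)
        = ∑ i, (if lam i = 0 then 0 else Real.exp (-(lam i) * t)) * (e i x * e i y) := by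
      intro t
      rw [hheat, ← hproj x y, ← Finset.sum_sub_distrib]
      refine Finset.sum_congr rfl fun i _ => ?_
      split_ifs with hi
      · simp [hi]
      · ring
    simp_rw [h1]
    rw [integral_finsetSum]
    · refine Finset.sum_congr rfl fun i _ => ?_
      rw [integral_mul_const]
      congr 1
      split_ifs with hi
      · simp
      · have hlt : 0 < lam i := lt_of_le_of_ne (hpos i) (Ne.symm hi)
        rw [integral_exp_mul_Ioi (by linarith)]
        simp
    · intro i _
      refine Integrable.mul_const ?_ _
      split_ifs with hi
      · simp
      · have hlt : 0 < lam i := lt_of_le_of_ne (hpos i) (Ne.symm hi)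
        exact integrableOn_exp_mul_Ioi (by linarith) 0
  simp_rw [hz]
  rw [Finset.sum_comm, Finset.mul_sum, ← Finset.sum_sub_distrib, ← hproj x y, ← hcompl x y,
    ← Finset.sum_sub_distrib]
  refine Finset.sum_congr rfl fun i _ => ?_
  rw [← Finset.mul_sum, ← Finset.sum_mul]
  have h := heig i x
  split_ifs with hi
  · simp
  · have : (lam i)⁻¹ * (e i x * e i y) - (d : ℝ)⁻¹ * ((lam i)⁻¹ * ((∑ z ∈ nb x, e i z) * e i y))
      = (lam i)⁻¹ * ((e i x - (d : ℝ)⁻¹ * ∑ z ∈ nb x, e i z) * e i y) := by ring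
    rw [this, h]
    field_simp
    ring

end GFF
namespace GFF

set_option linter.unusedSectionVars false

lemma srw_start {I : Type*} [MeasurableSpace I] (G : SimpleGraph I) (d : ℕ)
    (W : I → Measure (ℕ → I)) (hW : IsSRW G d W) (x y : I) :
    W x {ω | ω 0 = y} = if y = x then 1 else 0 := by
  have h := hW.2 x 0 (fun _ => y)
  simpa using h

lemma srw_msc {I : Type*} [MeasurableSpace I] [Countable I] (G : SimpleGraph I) (d : ℕ)
    (W : I → Measure (ℕ → I)) (hW : IsSRW G d W) : MeasurableSingletonClass I := by
  have hsep : ∀ y y' : I, y ≠ y' → ∃ A : Set I, MeasurableSet A ∧ y' ∈ A ∧ y ∉ A := by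
    intro y y' hne
    have h0 : W y {ω | ω 0 = y'} = 0 := by rw [srw_start G d W hW, if_neg hne.symm]
    have h1 : W y {ω | ω 0 = y} = 1 := by rw [srw_start G d W hW, if_pos rfl]
    set A := toMeasurable (W y) {ω : ℕ → I | ω 0 = y'} with hAdef
    have hA0 : W y A = 0 := by rw [hAdef, measure_toMeasurable, h0]
    have hAm : MeasurableSet A := measurableSet_toMeasurable _ _
    have hsub : {ω : ℕ → I | ω 0 = y'} ⊆ A := subset_toMeasurable _ _
    have : ∃ ω : ℕ → I, ω 0 = y ∧ ω ∉ A := by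
      by_contra hcon
      push Not at hcon
      have : W y {ω | ω 0 = y} ≤ W y A := measure_mono hcon
      rw [h1, hA0] at this
      simp at this
    obtain ⟨ω, hω, hωA⟩ := this
    refine ⟨(fun v => Function.update ω 0 v) ⁻¹' A, measurable_update ω hAm, ?_, ?_⟩
    · exact hsub (by simp)
    · simp only [Set.mem_preimage]
      rw [← hω, Function.update_eq_self]
      exact hωA
  refine ⟨fun y' => ?_⟩
  choose! A hA1 hA2 hA3 using hsep
  have : ({y'} : Set I) = ⋂ y : {y : I // y ≠ y'}, A y.1 y' := by
    ext z
    simp only [Set.mem_singleton_iff, Set.mem_iInter]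
    constructor
    · rintro rfl y
      exact hA2 _ _ y.2
    · intro h
      by_contra hz
      exact hA3 z y' hz (h ⟨z, hz⟩)
  rw [this]
  exact MeasurableSet.iInter fun y => hA1 _ _ y.2

section
variable {I : Type*} [MeasurableSpace I] [Countable I] [MeasurableSingletonClass I]

lemma meas_ext_cyl (μ ν : Measure (ℕ → I)) [IsFiniteMeasure μ]
    (hu : μ Set.univ = ν Set.univ)
    (h : ∀ (k : ℕ) (p : ℕ → I), μ {ω | ∀ i ≤ k, ω i = p i} = ν {ω | ∀ i ≤ k, ω i = p i}) :
    μ = ν := by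
  refine ext_of_generate_finite {A | ∃ (k : ℕ) (p : ℕ → I), A = {ω | ∀ i ≤ k, ω i = p i}}
    ?_ ?_ ?_ hu
  · refine le_antisymm ?_ ?_
    · refine iSup_le fun i => ?_
      rintro _ ⟨s, _, rfl⟩
      rw [← Set.biUnion_preimage_singleton]
      refine MeasurableSet.biUnion (Set.to_countable s) fun v _ => ?_
      have hun : (fun ω : ℕ → I => ω i) ⁻¹' {v} =
          ⋃ p : Fin (i + 1) → I, if p (Fin.last i) = v then
            {ω | ∀ j ≤ i, ω j = (fun n => if hn : n < i + 1 then p ⟨n, hn⟩ else v) j} else ∅ := by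
        ext ω
        simp only [Set.mem_preimage, Set.mem_singleton_iff, Set.mem_iUnion]
        constructor
        · intro hω
          refine ⟨fun j => ω j, ?_⟩
          rw [if_pos (by simpa using hω)]
          intro j hj
          simp [Nat.lt_succ_of_le hj]
        · rintro ⟨p, hp⟩
          split_ifs at hp with hpv
          · have := hp i le_rfl
            simp only [Nat.lt_succ_self, dif_pos] at this
            rw [this, ← hpv]
            rfl
          · exact absurd hp (by simp)
      rw [hun]
      refine MeasurableSet.iUnion fun p => ?_
      split_ifs
      · exact MeasurableSpace.measurableSet_generateFrom ⟨_, _, rfl⟩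
      · exact @MeasurableSet.empty _ (_)
    · refine MeasurableSpace.generateFrom_le ?_
      rintro A ⟨k, p, rfl⟩
      have : {ω : ℕ → I | ∀ i ≤ k, ω i = p i} = ⋂ i ∈ Set.Iic k, (fun ω => ω i) ⁻¹' {p i} := by
        ext; simp
      rw [this]
      exact MeasurableSet.biInter (Set.to_countable _) fun i _ =>
        measurable_pi_apply i (measurableSet_singleton _)
  · rintro A ⟨k, p, rfl⟩ B ⟨l, q, rfl⟩ ⟨ω, hω1, hω2⟩
    refine ⟨max k l, ω, ?_⟩
    ext η
    simp only [Set.mem_inter_iff, Set.mem_ofPred_eq] at *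
    constructor
    · rintro ⟨h1, h2⟩ i hi
      rcases le_max_iff.1 hi with hi | hi
      · rw [h1 i hi, hω1 i hi]
      · rw [h2 i hi, hω2 i hi]
    · intro h1
      exact ⟨fun i hi => by rw [h1 i (le_max_of_le_left hi), hω1 i hi],
        fun i hi => by rw [h1 i (le_max_of_le_right hi), hω2 i hi]⟩
  · rintro A ⟨k, p, rfl⟩
    exact h k p

/-- shift -/
def shf (ω : ℕ → I) : ℕ → I := fun i => ω (i + 1)

lemma measurable_shf : Measurable (shf : (ℕ → I) → (ℕ → I)) :=
  measurable_pi_lambda _ fun i => measurable_pi_apply (i + 1)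

lemma measurableSet_cyl (k : ℕ) (p : ℕ → I) : MeasurableSet {ω : ℕ → I | ∀ i ≤ k, ω i = p i} := by
  have : {ω : ℕ → I | ∀ i ≤ k, ω i = p i} = ⋂ i ∈ Set.Iic k, (fun ω => ω i) ⁻¹' {p i} := by
    ext; simp
  rw [this]
  exact MeasurableSet.biInter (Set.to_countable _) fun i _ =>
    measurable_pi_apply i (measurableSet_singleton _)

variable (G : SimpleGraph I) (d : ℕ) (hd : 3 ≤ d)
    (nb : I → Finset I) (hnb : ∀ v w, w ∈ nb v ↔ G.Adj v w) (hcard : ∀ v, (nb v).card = d)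
    (W : I → Measure (ℕ → I)) (hW : IsSRW G d W)
include hW

lemma srw_ae_start (y : I) : ∀ᵐ ω ∂(W y), ω 0 = y := by
  have := hW.1 y
  have h := srw_start G d W hW y y
  rw [if_pos rfl] at h
  have hm : MeasurableSet {ω : ℕ → I | ω 0 = y} :=
    (measurable_pi_apply (X := fun _ : ℕ => I) 0) (measurableSet_singleton y)
  rw [ae_iff]
  exact (prob_compl_eq_zero_iff hm).2 h

include hd hnb hcard

lemma srw_markov (y : I) :
    (W y).map shf = ∑ v ∈ nb y, (d : ℝ≥0∞)⁻¹ • W v := by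
  have := hW.1
  have hd0 : (d : ℝ≥0∞) ≠ 0 := by simp; omega
  have : IsProbabilityMeasure ((W y).map shf) :=
    Measure.isProbabilityMeasure_map measurable_shf.aemeasurable
  refine meas_ext_cyl _ _ ?_ ?_
  · rw [measure_univ, Measure.finsetSum_apply]
    simp only [Measure.smul_apply, measure_univ, smul_eq_mul, mul_one, Finset.sum_const, hcard,
      nsmul_eq_mul]
    rw [ENNReal.mul_inv_cancel hd0 (ENNReal.natCast_ne_top d)]
  · intro k p
    rw [Measure.map_apply measurable_shf (measurableSet_cyl k p), Measure.finsetSum_apply]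
    have h1 : W y (shf ⁻¹' {ω | ∀ i ≤ k, ω i = p i}) =
        W y {ω | ∀ i ≤ k + 1, ω i = (fun n => Nat.casesOn n y p : ℕ → I) i} := by
      refine measure_congr ?_
      filter_upwards [srw_ae_start G d W hW y] with ω hω
      refine propext ?_
      constructor
      · intro h i hi
        cases i with
        | zero => exact hω
        | succ i => exact h i (by omega)
      · intro h i hi
        exact h (i + 1) (by omega)
    rw [h1, hW.2, Finset.prod_range_succ']
    simp only [one_mul, Measure.smul_apply, hW.2, smul_eq_mul, ite_mul, zero_mul, mul_ite,
      mul_zero]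
    rw [Finset.sum_ite_eq]
    simp only [hnb, srwStep]
    change (if y = y then _ * (if G.Adj y (p 0) then _ else _) else 0) = _
    rw [if_pos rfl]
    split_ifs
    · rw [mul_comm]
    · simp

lemma srw_ae_adj (k : ℕ) : ∀ y : I, ∀ᵐ ω ∂(W y), G.Adj (ω k) (ω (k + 1)) := by
  have key : ∀ (A : Set (ℕ → I)), MeasurableSet A → ∀ y, (∀ v ∈ nb y, ∀ᵐ ω ∂(W v), ω ∈ A) →
      ∀ᵐ ω ∂(W y), shf ω ∈ A := by
    intro A hA y h
    rw [← ae_map_iff (p := fun ω => ω ∈ A) measurable_shf.aemeasurable hA,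
      srw_markov G d hd nb hnb hcard W hW y]
    rw [ae_iff, Measure.finsetSum_apply]
    refine Finset.sum_eq_zero fun v hv => ?_
    have := h v hv
    rw [ae_iff] at this
    rw [Measure.smul_apply, this]; simp
  induction k with
  | zero =>
    intro y
    have := key {ω | G.Adj y (ω 0)}
      (measurable_pi_apply 0 (Set.to_countable {v | G.Adj y v}).measurableSet) y (fun v hv => by
        filter_upwards [srw_ae_start G d W hW v] with ω hω
        simp only [hω]
        exact (hnb _ _).1 hv)
    filter_upwards [this, srw_ae_start G d W hW y] with ω h1 h2
    rw [h2]
    exact h1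
  | succ k ih =>
    intro y
    have := key {ω | G.Adj (ω k) (ω (k + 1))} (by
      have hm : Measurable (fun ω : ℕ → I => (ω k, ω (k + 1))) :=
        (measurable_pi_apply k).prodMk (measurable_pi_apply (k + 1))
      exact hm (Set.to_countable {v : I × I | G.Adj v.1 v.2}).measurableSet) y (fun v _ => ih v)
    exact this

omit hd hnb hcard hW in
lemma stopAt_of_exists (A : Set I) (ω : ℕ → I) (k : ℕ) (hk : ω k ∈ A) (hmin : ∀ i < k, ω i ∉ A) :
    stopAt A ω = ω k := by
  have : hitTime A ω = (k : ℕ∞) := by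
    unfold hitTime
    refine le_antisymm (sInf_le ⟨k, hk, rfl⟩) (le_sInf ?_)
    rintro _ ⟨j, hj, rfl⟩
    rw [Nat.cast_le]
    by_contra h
    exact hmin j (by omega) hj
  simp [stopAt, this]

omit hd hnb hcard hW in
lemma stopAt_of_never (A : Set I) (ω : ℕ → I) (h : ∀ k, ω k ∉ A) :
    stopAt A ω = ω 0 := by
  have : hitTime A ω = ⊤ := by
    unfold hitTime
    have : {k | ω k ∈ A} = ∅ := by ext k; simp [h k]
    rw [this]; simp
  simp [stopAt, this]

omit hd hnb hcard hW in
lemma exists_first (A : Set I) (ω : ℕ → I) (h : ∃ k, ω k ∈ A) :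
    ∃ k, ω k ∈ A ∧ ∀ i < k, ω i ∉ A :=
  ⟨Nat.find h, Nat.find_spec h, fun _ hi => Nat.find_min h hi⟩

omit hd hnb hcard hW in
lemma measurable_stopAt (A : Set I) : Measurable (stopAt A : (ℕ → I) → I) := by
  have hA : ∀ (B : Set I) (k : ℕ), MeasurableSet {ω : ℕ → I | ω k ∈ B} := fun B k =>
    measurable_pi_apply k (Set.to_countable B).measurableSet
  refine measurable_to_countable' fun v => ?_
  have : stopAt A ⁻¹' {v} = ({ω | ω 0 ∈ ({v} : Set I)} ∩ ⋂ k, {ω | ω k ∈ Aᶜ}) ∪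
      ⋃ k, ({ω | ω k ∈ A ∩ {v}} ∩ ⋂ i ∈ Set.Iio k, {ω | ω i ∈ Aᶜ}) := by
    ext ω
    simp only [Set.mem_preimage, Set.mem_singleton_iff, Set.mem_union, Set.mem_inter_iff,
      Set.mem_iInter, Set.mem_iUnion, Set.mem_ofPred_eq, Set.mem_Iio, Set.mem_compl_iff]
    constructor
    · intro h
      by_cases hex : ∃ k, ω k ∈ A
      · obtain ⟨k, hk, hm⟩ := exists_first A ω hex
        right
        rw [stopAt_of_exists A ω k hk hm] at h
        exact ⟨k, ⟨hk, h⟩, hm⟩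
      · push Not at hex
        left
        rw [stopAt_of_never A ω hex] at h
        exact ⟨h, hex⟩
    · rintro (⟨h1, h2⟩ | ⟨k, ⟨h1, h2⟩, h3⟩)
      · rw [stopAt_of_never A ω h2, h1]
      · rw [stopAt_of_exists A ω k h1 h3, h2]
  rw [this]
  refine MeasurableSet.union ((hA _ _).inter (MeasurableSet.iInter fun k => hA _ _))
    (MeasurableSet.iUnion fun k => (hA _ _).inter
      (MeasurableSet.biInter (Set.to_countable _) fun i _ => hA _ _))

lemma srw_integrable (S : Set I) (hS : S.Finite) (f : I → ℝ) (y : I) :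
    Integrable (fun ω => f (stopAt Sᶜ ω)) (W y) := by
  have := hW.1 y
  have hfm : Measurable f := measurable_of_countable f
  let D : Finset I := insert y (hS.toFinset.biUnion nb)
  refine Integrable.of_bound (C := ∑ v ∈ D, |f v|)
    (hfm.comp (measurable_stopAt _)).aestronglyMeasurable ?_
  have hadj := ae_all_iff.2 fun k => srw_ae_adj G d hd nb hnb hcard W hW k y
  filter_upwards [hadj, srw_ae_start G d W hW y] with ω h1 h2
  have hmem : stopAt Sᶜ ω ∈ D := by
    by_cases hex : ∃ k, ω k ∈ Sᶜ
    · obtain ⟨k, hk, hm⟩ := exists_first _ ω hex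
      rw [stopAt_of_exists _ ω k hk hm]
      cases k with
      | zero => simp [D, h2]
      | succ k =>
        have hkS : ω k ∈ S := by simpa using hm k (by omega)
        refine Finset.mem_insert_of_mem (Finset.mem_biUnion.2 ⟨ω k, by simpa using hkS, ?_⟩)
        exact (hnb _ _).2 (h1 k)
    · push Not at hex
      rw [stopAt_of_never _ ω hex, h2]
      simp [D]
  rw [Real.norm_eq_abs]
  exact Finset.single_le_sum (f := fun v => |f v|) (fun v _ => abs_nonneg _) hmem

lemma srw_markov_integral (F : (ℕ → I) → ℝ) (hF : Measurable F) (y : I)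
    (hint : ∀ v, Integrable F (W v)) :
    ∫ ω, F (shf ω) ∂(W y) = (d : ℝ)⁻¹ * ∑ v ∈ nb y, ∫ ω, F ω ∂(W v) := by
  have hd0 : (d : ℝ≥0∞) ≠ 0 := by simp; omega
  rw [← integral_map measurable_shf.aemeasurable hF.aestronglyMeasurable,
    srw_markov G d hd nb hnb hcard W hW y, integral_finsetSum_measure]
  · rw [Finset.mul_sum]
    refine Finset.sum_congr rfl fun v _ => ?_
    rw [integral_smul_measure]
    simp
  · intro v _
    exact (hint v).smul_measure (ENNReal.inv_ne_top.2 hd0)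

lemma srw_exits (hc : G.Connected) (S : Set I) (hS : S.Finite) (hSu : S ≠ Set.univ) (y : I) :
    ∀ᵐ ω ∂(W y), ∃ k, ω k ∉ S := by
  have := hW.1
  have hEm : MeasurableSet {ω : ℕ → I | ∀ k, ω k ∈ S} := by
    have : {ω : ℕ → I | ∀ k, ω k ∈ S} = ⋂ k, (fun ω => ω k) ⁻¹' S := by ext; simp
    rw [this]
    exact MeasurableSet.iInter fun k => measurable_pi_apply k (Set.to_countable S).measurableSet
  set F : (ℕ → I) → ℝ := Set.indicator {ω : ℕ → I | ∀ k, ω k ∈ S} (fun _ => 1) with hFdef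
  have hF : Measurable F := measurable_const.indicator hEm
  have hint : ∀ v, Integrable F (W v) := fun v => (integrable_const (1 : ℝ)).indicator hEm
  have h0 : ∀ v, ∫ ω, F ω ∂(W v) = 0 := by
    refine max_principle G hc d hd nb hnb hcard S hS hSu _ ?_ ?_
    · intro v hv
      rw [← integral_zero (ℕ → I) ℝ (μ := W v)]
      refine integral_congr_ae ?_
      filter_upwards [srw_ae_start G d W hW v] with ω hω
      refine Set.indicator_of_notMem (fun h => hv ?_) _
      rw [← hω]; exact h 0
    · intro v hv
      rw [← srw_markov_integral G d hd nb hnb hcard W hW F hF v hint]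
      refine integral_congr_ae ?_
      filter_upwards [srw_ae_start G d W hW v] with ω hω
      have : (∀ k, ω k ∈ S) ↔ ∀ k, shf ω k ∈ S := by
        constructor
        · intro h k; exact h (k + 1)
        · intro h k
          cases k with
          | zero => rw [hω]; exact hv
          | succ k => exact h k
      simp only [hFdef, Set.indicator_apply, Set.mem_ofPred_eq, this]
  have h1 := h0 y
  rw [hFdef, integral_indicator hEm, setIntegral_const] at h1
  simp only [smul_eq_mul, mul_one] at h1
  rw [measureReal_eq_zero_iff] at h1
  rw [ae_iff]
  simpa using h1

/-- harmonic extension characterization -/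
lemma harm_off (S : Set I) (f : I → ℝ) (y : I) (hy : y ∉ S) :
    ∫ p, f (stopAt Sᶜ p) ∂(W y) = f y := by
  have := hW.1 y
  have : ∫ p, f (stopAt Sᶜ p) ∂(W y) = ∫ p, f y ∂(W y) := by
    refine integral_congr_ae ?_
    filter_upwards [srw_ae_start G d W hW y] with ω hω
    rw [stopAt_of_exists _ ω 0 (by rw [hω]; exact hy) (by simp), hω]
  rw [this]; simp

lemma harm_on (hc : G.Connected) (S : Set I) (hS : S.Finite) (hSu : S ≠ Set.univ) (f : I → ℝ)
    (y : I) (hy : y ∈ S) :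
    ∫ p, f (stopAt Sᶜ p) ∂(W y) = (d : ℝ)⁻¹ * ∑ v ∈ nb y, ∫ p, f (stopAt Sᶜ p) ∂(W v) := by
  have hF : Measurable (fun p : ℕ → I => f (stopAt Sᶜ p)) :=
    (measurable_of_countable f).comp (measurable_stopAt _)
  rw [← srw_markov_integral G d hd nb hnb hcard W hW _ hF y
    (fun v => srw_integrable G d hd nb hnb hcard W hW S hS f v)]
  refine integral_congr_ae ?_
  filter_upwards [srw_ae_start G d W hW y, srw_exits G d hd nb hnb hcard W hW hc S hS hSu y]
    with ω h1 h2
  obtain ⟨k, hk, hm⟩ := exists_first Sᶜ ω h2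
  cases k with
  | zero => exact absurd (h1 ▸ hy) hk
  | succ k =>
    rw [stopAt_of_exists _ ω (k + 1) hk hm,
      stopAt_of_exists _ (shf ω) k hk (fun i hi => hm (i + 1) (by omega))]
    rfl

end

end GFF
namespace GFF

lemma glue {X Y E : Type*} [MeasurableSpace X] [MeasurableSpace Y] [MeasurableSpace E]
    [StandardBorelSpace X] [Nonempty X] [StandardBorelSpace Y] [Nonempty Y] [MeasurableEq E]
    (μ : Measure X) (ν : Measure Y) [IsProbabilityMeasure μ] [IsProbabilityMeasure ν]
    (F : X → E) (H : Y → E) (hF : Measurable F) (hH : Measurable H) (h : μ.map F = ν.map H) :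
    ∃ Q : Measure (X × Y), Q.map Prod.fst = μ ∧ Q.map Prod.snd = ν ∧ ∀ᵐ q ∂Q, F q.1 = H q.2 := by
  have hpF : IsProbabilityMeasure (μ.map F) := Measure.isProbabilityMeasure_map hF.aemeasurable
  let k1 : Kernel E X := condDistrib id F μ
  let k2 : Kernel E Y := condDistrib id H ν
  refine ⟨(k1 ×ₖ k2) ∘ₘ (μ.map F), ?_, ?_, ?_⟩
  · rw [Measure.map_comp _ _ measurable_fst, ← Kernel.fst_eq, Kernel.fst_prod]
    rw [condDistrib_comp_map hF.aemeasurable aemeasurable_id, Measure.map_id]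
  · rw [Measure.map_comp _ _ measurable_snd, ← Kernel.snd_eq, Kernel.snd_prod, h]
    rw [condDistrib_comp_map hH.aemeasurable aemeasurable_id, Measure.map_id]
  · have h1 : ∀ᵐ e ∂(μ.map F), ∀ᵐ x ∂(k1 e), F x = e := by
      refine Measure.ae_ae_of_ae_compProd (p := fun z : E × X => F z.2 = z.1) ?_
      rw [compProd_map_condDistrib aemeasurable_id]
      rw [ae_map_iff (by fun_prop)]
      · simp
      · exact measurableSet_eq_fun (hF.comp measurable_snd) measurable_fst
    have h2 : ∀ᵐ e ∂(μ.map F), ∀ᵐ x ∂(k2 e), H x = e := by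
      rw [h]
      refine Measure.ae_ae_of_ae_compProd (p := fun z : E × Y => H z.2 = z.1) ?_
      rw [compProd_map_condDistrib aemeasurable_id]
      rw [ae_map_iff (by fun_prop)]
      · simp
      · exact measurableSet_eq_fun (hH.comp measurable_snd) measurable_fst
    refine Measure.ae_comp_of_ae_ae
      (measurableSet_eq_fun (hF.comp measurable_fst) (hH.comp measurable_snd)) ?_
    filter_upwards [h1, h2] with e h1 h2
    rw [Kernel.prod_apply]
    filter_upwards [Measure.quasiMeasurePreserving_fst.ae h1,
      Measure.quasiMeasurePreserving_snd.ae h2] with q h3 h4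
    rw [h3, h4]

lemma pi_ext {ι : Type*} [Fintype ι] (μ ν : Measure (ι → ℝ)) [IsFiniteMeasure μ]
    [IsFiniteMeasure ν]
    (h : ∀ c : ι → ℝ, μ.map (fun v => ∑ i, c i * v i) = ν.map (fun v => ∑ i, c i * v i)) :
    μ = ν := by
  refine Measure.ext_of_charFunDual ?_
  funext L
  rw [charFunDual_eq_charFun_map_one, charFunDual_eq_charFun_map_one]
  have : (⇑L : (ι → ℝ) → ℝ) = fun v => ∑ i, L (Pi.single i 1) * v i := by
    funext v
    conv_lhs => rw [pi_eq_sum_univ' v]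
    rw [map_sum]
    refine Finset.sum_congr rfl fun i _ => ?_
    rw [map_smul, smul_eq_mul, mul_comm]
  rw [this, h]

lemma gauss_lap {I : Type*} (d : ℕ) (hd : 3 ≤ d) (nb : I → Finset I)
    (hcard : ∀ v, (nb v).card = d) (K : I → I → ℝ) (κ : ℝ)
    (hK : ∀ x y, K x y - (d : ℝ)⁻¹ * ∑ z ∈ nb x, K z y = (if x = y then 1 else 0) - κ)
    (μ : Measure (I → ℝ)) (hμ : IsGaussianField μ K) {ι : Type*} [Fintype ι] (u : ι → I)
    (c : ι → ℝ) :
    μ.map (fun ω => ∑ i, c i * (ω (u i) - (d : ℝ)⁻¹ * ∑ z ∈ nb (u i), ω z)) =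
      gaussianReal 0 (Real.toNNReal (∑ b, ∑ a, c b * (c a *
        ((if u a = u b then 1 else 0) - (d : ℝ)⁻¹ * (if u a ∈ nb (u b) then 1 else 0))))) := by
  have hd0 : (d : ℝ) ≠ 0 := by
    have : 0 < d := by omega
    exact_mod_cast this.ne'
  let c' : I →₀ ℝ := ∑ i, c i • (Finsupp.single (u i) (1 : ℝ)
    - (d : ℝ)⁻¹ • ∑ z ∈ nb (u i), Finsupp.single z (1 : ℝ))
  have hlin : ∀ g : I → ℝ, ∑ i ∈ c'.support, c' i * g i
      = ∑ i, c i * (g (u i) - (d : ℝ)⁻¹ * ∑ z ∈ nb (u i), g z) := by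
    intro g
    have h1 : ∑ i ∈ c'.support, c' i * g i = Finsupp.linearCombination ℝ g c' := by
      rw [Finsupp.linearCombination_apply, Finsupp.sum]; rfl
    rw [h1]
    simp [c', map_sum, map_smul, map_sub, Finsupp.linearCombination_single]
  have h := hμ.2 c'
  simp_rw [hlin] at h
  rw [h]
  congr 2
  have h2 : ∑ i ∈ c'.support, ∑ j ∈ c'.support, c' i * c' j * K i j
      = ∑ j ∈ c'.support, c' j * ∑ i ∈ c'.support, c' i * K i j := by
    rw [Finset.sum_comm]
    refine Finset.sum_congr rfl fun j _ => ?_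
    rw [Finset.mul_sum]
    exact Finset.sum_congr rfl fun i _ => by ring
  rw [h2]
  have h3 : ∀ j, ∑ i ∈ c'.support, c' i * K i j = ∑ a, c a * ((if u a = j then 1 else 0) - κ) := by
    intro j
    rw [hlin (fun i => K i j)]
    simp_rw [hK]
  simp_rw [h3]
  rw [hlin]
  refine Finset.sum_congr rfl fun b _ => ?_
  rw [← Finset.mul_sum]
  congr 1
  rw [Finset.sum_comm, Finset.mul_sum, ← Finset.sum_sub_distrib]
  refine Finset.sum_congr rfl fun a _ => ?_
  rw [← Finset.mul_sum, Finset.sum_sub_distrib, Finset.sum_const, hcard, Finset.sum_ite_eq,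
    nsmul_eq_mul]
  field_simp
  ring

lemma core (d : ℕ) (hd : 3 ≤ d)
    (V : Type) [Fintype V] [MeasurableSpace V]
    (G : SimpleGraph V) (hconn : G.Connected)
    (T : Type) [MeasurableSpace T]
    (Gt : SimpleGraph T) (hc : Gt.Connected) (ha : Gt.IsAcyclic)
    (nb : V → Finset V) (hnb : ∀ v w, w ∈ nb v ↔ G.Adj v w) (hcard : ∀ v, (nb v).card = d)
    (nt : T → Finset T) (hnt : ∀ v w, w ∈ nt v ↔ Gt.Adj v w) (htcard : ∀ v, (nt v).card = d)
    (μG : Measure (V → ℝ)) (hμG : GFF.IsGaussianField μG (GFF.zGreen G d (Fintype.card V)))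
    (μT : Measure (T → ℝ)) (hμT : GFF.IsGaussianField μT (GFF.treeGreen Gt d))
    (Wg : V → Measure (ℕ → V)) (hWg : GFF.IsSRW G d Wg)
    (Wt : T → Measure (ℕ → T)) (hWt : GFF.IsSRW Gt d Wt)
    (ρ : V → T) (B U : Set V) (hinj : Set.InjOn ρ B) (hUB : U ⊆ B)
    (hUnb : ∀ u ∈ U, ∀ v, G.Adj u v → v ∈ B)
    (him : ∀ u ∈ U, ∀ w, Gt.Adj (ρ u) w ↔ ∃ v, G.Adj u v ∧ ρ v = w)
    (hUu : U ≠ Set.univ) :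
    ∃ Q : Measure ((V → ℝ) × (T → ℝ)),
        Q.map Prod.fst = μG ∧ Q.map Prod.snd = μT ∧
        ∀ᵐ q ∂Q, ∀ y ∈ B,
          q.1 y - ∫ p, q.1 (GFF.stopAt Uᶜ p) ∂ Wg y =
            q.2 (ρ y) - ∫ p, q.2 (GFF.stopAt (ρ '' U)ᶜ p) ∂ Wt (ρ y) := by
  have hcT : Countable T := countable_of_conn Gt hc nt hnt
  have hcV : Countable V := Finite.to_countable
  have := srw_msc G d Wg hWg
  have := srw_msc Gt d Wt hWt
  have := hμG.1
  have := hμT.1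
  have hd0 : (d : ℝ) ≠ 0 := by
    have : 0 < d := by omega
    exact_mod_cast this.ne'
  have himg : ∀ u ∈ U, (nb u).image ρ = nt (ρ u) := by
    intro u hu
    ext w
    simp only [Finset.mem_image, hnb, hnt, him u hu]
  have hsum : ∀ u ∈ U, ∀ h : T → ℝ, ∑ w ∈ nt (ρ u), h w = ∑ v ∈ nb u, h (ρ v) := by
    intro u hu h
    rw [← himg u hu, Finset.sum_image]
    intro a ha b hb hab
    exact hinj (hUnb u hu a ((hnb _ _).1 ha)) (hUnb u hu b ((hnb _ _).1 hb)) hab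
  -- the set `ρ '' U` is not everything
  have hSu : ρ '' U ≠ Set.univ := by
    rcases Set.eq_empty_or_nonempty U with h | ⟨u, hu⟩
    · subst h
      have := hc.nonempty
      rw [Set.image_empty]
      exact Set.empty_ne_univ
    · obtain ⟨z, hz⟩ := (Set.ne_univ_iff_exists_notMem U).1 hUu
      have : ∀ a b (_ : G.Walk a b), a ∈ U → b ∉ U → ∃ s ∈ U, ∃ t, t ∉ U ∧ G.Adj s t := by
        intro a b p
        induction p with
        | nil => exact fun h1 h2 => absurd h1 h2
        | @cons a b' _ h q ih =>
          intro h1 h2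
          by_cases h3 : b' ∈ U
          · exact ih h3 h2
          · exact ⟨a, h1, b', h3, h⟩
      obtain ⟨p⟩ := hconn.preconnected u z
      obtain ⟨s, hs, t, ht, hst⟩ := this u z p hu hz
      intro hall
      obtain ⟨r, hr, hrt⟩ : ρ t ∈ ρ '' U := by rw [hall]; trivial
      exact ht (hinj (hUB hr) (hUnb s hs t hst) hrt ▸ hr)
  have hUf : U.Finite := Set.toFinite U
  have hSf : (ρ '' U).Finite := hUf.image ρ
  let F : (V → ℝ) → (U → ℝ) := fun ω i => ω i - (d : ℝ)⁻¹ * ∑ z ∈ nb i, ω z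
  let H : (T → ℝ) → (U → ℝ) := fun ω i => ω (ρ i) - (d : ℝ)⁻¹ * ∑ z ∈ nt (ρ i), ω z
  have hF : Measurable F := by
    refine measurable_pi_lambda _ fun i => ?_
    fun_prop
  have hH : Measurable H := by
    refine measurable_pi_lambda _ fun i => ?_
    fun_prop
  have hlaw : μG.map F = μT.map H := by
    have : IsProbabilityMeasure (μG.map F) := Measure.isProbabilityMeasure_map hF.aemeasurable
    have : IsProbabilityMeasure (μT.map H) := Measure.isProbabilityMeasure_map hH.aemeasurable
    refine pi_ext _ _ fun c => ?_
    have hm : Measurable (fun v : U → ℝ => ∑ i, c i * v i) := by fun_prop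
    rw [Measure.map_map hm hF, Measure.map_map hm hH]
    have h1 := gauss_lap d hd nb hcard _ _ (zGreen_lap G hconn d hd nb hnb hcard) μG hμG
      (fun i : U => (i : V)) c
    have h2 := gauss_lap d hd nt htcard _ _ (treeGreen_lap Gt hc ha d hd nt hnt htcard) μT hμT
      (fun i : U => ρ i) c
    refine h1.trans (Eq.trans ?_ h2.symm)
    congr 2
    refine Finset.sum_congr rfl fun b _ => Finset.sum_congr rfl fun a _ => ?_
    have e1 : ρ a = ρ b ↔ (a : V) = b :=
      ⟨fun h => hinj (hUB a.2) (hUB b.2) h, fun h => by rw [h]⟩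
    have e2 : ρ a ∈ nt (ρ b) ↔ (a : V) ∈ nb b := by
      rw [← himg b b.2, Finset.mem_image]
      constructor
      · rintro ⟨v, hv, hva⟩
        rwa [← hinj (hUnb b b.2 v ((hnb _ _).1 hv)) (hUB a.2) hva]
      · intro h; exact ⟨a, h, rfl⟩
    simp only [e1, e2]
  obtain ⟨Q, hQ1, hQ2, hQ⟩ := glue μG μT F H hF hH hlaw
  refine ⟨Q, hQ1, hQ2, ?_⟩
  filter_upwards [hQ] with q hq
  set f := q.1
  set g := q.2
  let a : V → ℝ := fun y => ∫ p, f (GFF.stopAt Uᶜ p) ∂ Wg y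
  let b : T → ℝ := fun y => ∫ p, g (GFF.stopAt (ρ '' U)ᶜ p) ∂ Wt y
  have key : ∀ y, (if y ∈ B then (f y - a y) - (g (ρ y) - b (ρ y)) else 0) = 0 := by
    refine max_principle G hconn d hd nb hnb hcard U hUf hUu _ ?_ ?_
    · intro y hy
      split_ifs with hyB
      · have h1 : a y = f y := harm_off G d hd nb hnb hcard Wg hWg U f y hy
        have hy' : ρ y ∉ ρ '' U := by
          rintro ⟨r, hr, hry⟩
          exact hy (hinj (hUB hr) hyB hry ▸ hr)
        have h2 : b (ρ y) = g (ρ y) := harm_off Gt d hd nt hnt htcard Wt hWt _ g _ hy'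
        rw [h1, h2]; ring
      · rfl
    · intro y hy
      rw [if_pos (hUB hy)]
      have h0 : ∀ v ∈ nb y, (if v ∈ B then (f v - a v) - (g (ρ v) - b (ρ v)) else 0)
          = (f v - a v) - (g (ρ v) - b (ρ v)) := fun v hv =>
        if_pos (hUnb y hy v ((hnb _ _).1 hv))
      rw [Finset.sum_congr rfl h0]
      have h1 : a y = (d : ℝ)⁻¹ * ∑ v ∈ nb y, a v :=
        harm_on G d hd nb hnb hcard Wg hWg hconn U hUf hUu f y hy
      have h2 : b (ρ y) = (d : ℝ)⁻¹ * ∑ v ∈ nt (ρ y), b v :=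
        harm_on Gt d hd nt hnt htcard Wt hWt hc _ hSf hSu g _ ⟨y, hy, rfl⟩
      rw [hsum y hy] at h2
      have h3 : f y - (d : ℝ)⁻¹ * ∑ z ∈ nb y, f z = g (ρ y) - (d : ℝ)⁻¹ * ∑ z ∈ nt (ρ y), g z :=
        congrFun hq ⟨y, hy⟩
      rw [hsum y hy] at h3
      simp only [Finset.sum_sub_distrib, mul_sub]
      linarith
  intro y hy
  have := key y
  rw [if_pos hy] at this
  change f y - a y = g (ρ y) - b (ρ y)
  linarith

end GFF
namespace GFF

lemma tree_not_finite {T : Type*} (Gt : SimpleGraph T) (hc : Gt.Connected) (ha : Gt.IsAcyclic)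
    (d : ℕ) (hd : 3 ≤ d)
    (nt : T → Finset T) (hnt : ∀ v w, w ∈ nt v ↔ Gt.Adj v w) (htcard : ∀ v, (nt v).card = d)
    (hf : Finite T) : False := by
  have := Fintype.ofFinite T
  have htr : Gt.IsTree := ⟨hc, ha⟩
  have h1 := htr.card_edgeFinset
  have h2 := Gt.sum_degrees_eq_twice_card_edges
  have h3 : ∀ v, Gt.degree v = d := by
    intro v
    rw [← htcard v, ← SimpleGraph.card_neighborFinset_eq_degree]
    congr 1
    ext w
    simp [hnt]
  simp only [h3, Finset.sum_const, Finset.card_univ, smul_eq_mul] at h2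
  have h4 : 0 < Fintype.card T := by
    have := hc.nonempty
    exact Fintype.card_pos
  nlinarith

lemma U_ne_univ {V T : Type*} [Finite V] (G : SimpleGraph V) (hG : G.Connected)
    (Gt : SimpleGraph T) (hc : Gt.Connected) (ha : Gt.IsAcyclic)
    (d : ℕ) (hd : 3 ≤ d)
    (nt : T → Finset T) (hnt : ∀ v w, w ∈ nt v ↔ Gt.Adj v w) (htcard : ∀ v, (nt v).card = d)
    (ρ : V → T) (U : Set V)
    (him : ∀ u ∈ U, ∀ w, Gt.Adj (ρ u) w ↔ ∃ v, G.Adj u v ∧ ρ v = w) : U ≠ Set.univ := by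
  rintro rfl
  obtain ⟨v0⟩ := hG.nonempty
  have key : ∀ a b : T, Gt.Walk a b → (∃ v, ρ v = a) → ∃ v, ρ v = b := by
    intro a b p
    induction p with
    | nil => exact id
    | cons h p ih =>
      rintro ⟨v, rfl⟩
      obtain ⟨w, _, hw⟩ := (him v trivial _).1 h
      exact ih ⟨w, hw⟩
  have hs : Function.Surjective ρ := by
    intro b
    obtain ⟨p⟩ := hc.preconnected (ρ v0) b
    exact key _ _ p ⟨v0, rfl⟩
  exact tree_not_finite Gt hc ha d hd nt hnt htcard (Finite.of_surjective ρ hs)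

lemma lift_walk {V T : Type*} (G : SimpleGraph V) (Gt : SimpleGraph T) (hc : Gt.Connected)
    (π : T → V) (h : ∀ y : T, π '' (Gt.neighborSet y) = G.neighborSet (π y))
    {a b : V} (p : G.Walk a b) : ∀ z, π z = a → ∃ w, π w = b ∧ Gt.dist z w ≤ p.length := by
  induction p with
  | nil => intro z hz; exact ⟨z, hz, by simp⟩
  | @cons u v w hadj p ih =>
    intro z hz
    have : v ∈ π '' (Gt.neighborSet z) := by rw [h, hz]; exact hadj
    obtain ⟨z1, hz1, rfl⟩ := this
    obtain ⟨w1, hw1, hd1⟩ := ih z1 rfl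
    refine ⟨w1, hw1, ?_⟩
    have h1 : Gt.dist z z1 = 1 := SimpleGraph.dist_eq_one_iff_adj.2 hz1
    have h2 := hc.dist_triangle (u := z) (v := z1) (w := w1)
    simp only [SimpleGraph.Walk.length_cons]
    omega

lemma lift_ball {V T : Type*} (G : SimpleGraph V) (hG : G.Connected)
    (Gt : SimpleGraph T) (hc : Gt.Connected)
    (π : T → V) (h : ∀ y : T, π '' (Gt.neighborSet y) = G.neighborSet (π y))
    (z : T) (v : V) (r : ℕ) (hv : v ∈ gball G (π z) r) : ∃ w ∈ gball Gt z r, π w = v := by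
  obtain ⟨p, hp⟩ := hG.exists_walk_length_eq_dist (π z) v
  obtain ⟨w, hw, hd⟩ := lift_walk G Gt hc π h p z rfl
  exact ⟨w, le_trans hd (hp ▸ hv), hw⟩

lemma gball_adj {V : Type*} (G : SimpleGraph V) (hG : G.Connected) (x u v : V) (R : ℕ)
    (hR : 1 ≤ R) (hu : u ∈ gball G x (R - 1)) (huv : G.Adj u v) : v ∈ gball G x R := by
  have h1 : G.dist u v = 1 := SimpleGraph.dist_eq_one_iff_adj.2 huv
  have h2 := hG.dist_triangle (u := x) (v := u) (w := v)
  simp only [gball, Set.mem_setOf_eq] at *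
  omega

/-- geometry of one ball -/
lemma him_ball {V T : Type*} (G : SimpleGraph V) (hG : G.Connected)
    (Gt : SimpleGraph T) (hc : Gt.Connected)
    (π : T → V) (h : ∀ y : T, π '' (Gt.neighborSet y) = G.neighborSet (π y))
    (z : T) (R : ℕ) (hR : 1 ≤ R) (ρ : V → T) (hρ : ∀ w ∈ gball Gt z R, ρ (π w) = w)
    (u : V) (hu : u ∈ gball G (π z) (R - 1)) (w : T) :
    Gt.Adj (ρ u) w ↔ ∃ v, G.Adj u v ∧ ρ v = w := by
  obtain ⟨y, hy, rfl⟩ := lift_ball G hG Gt hc π h z u _ hu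
  have hyR : y ∈ gball Gt z R := le_trans hy (Nat.sub_le _ _)
  rw [hρ y hyR]
  constructor
  · intro hw
    refine ⟨π w, ?_, hρ w (gball_adj Gt hc z y w R hR hy hw)⟩
    have : π w ∈ π '' (Gt.neighborSet y) := ⟨w, hw, rfl⟩
    rw [h] at this
    exact this
  · rintro ⟨v, hv, rfl⟩
    have : v ∈ π '' (Gt.neighborSet y) := by rw [h]; exact hv
    obtain ⟨w, hw, rfl⟩ := this
    rw [hρ w (gball_adj Gt hc z y w R hR hy hw)]
    exact hw

end GFF

/-- exact coupling of the zero-average GFF and the tree GFF modulo harmonic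
extensions, on (unions of) tree-like balls. -/
theorem gff_exact_local_coupling
    (d : ℕ) (hd : 3 ≤ d)
    (V : Type) [Fintype V] [MeasurableSpace V]
    (G : SimpleGraph V) (hconn : G.Connected) (hreg : GFF.IsReg G d)
    (T : Type) [MeasurableSpace T]
    (Gt : SimpleGraph T) (o : T) (htree : GFF.IsRegTree Gt d)
    (μG : Measure (V → ℝ)) (hμG : GFF.IsGaussianField μG (GFF.zGreen G d (Fintype.card V)))
    (μT : Measure (T → ℝ)) (hμT : GFF.IsGaussianField μT (GFF.treeGreen Gt d))
    (Wg : V → Measure (ℕ → V)) (hWg : GFF.IsSRW G d Wg)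
    (Wt : T → Measure (ℕ → T)) (hWt : GFF.IsSRW Gt d Wt) :
    (∀ (x x' : V) (π : T → V), GFF.IsCoverMap Gt G o x π →
      ∀ R : ℕ, 1 ≤ R →
      GFF.TxZero G (GFF.gball G x R) → GFF.TxZero G (GFF.gball G x' R) →
      GFF.gball G x R ∩ GFF.gball G x' R = ∅ →
      ∀ z' : T, π z' = x' →
      ∀ ρ : V → T,
        (∀ z ∈ GFF.gball Gt o R ∪ GFF.gball Gt z' R, ρ (π z) = z) →
        (∀ v ∈ GFF.gball G x R ∪ GFF.gball G x' R,
          π (ρ v) = v ∧ ρ v ∈ GFF.gball Gt o R ∪ GFF.gball Gt z' R) →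
      ∀ U : Set V, U ⊆ GFF.gball G x (R - 1) ∪ GFF.gball G x' (R - 1) →
      ∃ Q : Measure ((V → ℝ) × (T → ℝ)),
        Q.map Prod.fst = μG ∧ Q.map Prod.snd = μT ∧
        ∀ᵐ q ∂Q, ∀ y ∈ GFF.gball G x R ∪ GFF.gball G x' R,
          q.1 y - ∫ p, q.1 (GFF.stopAt Uᶜ p) ∂ Wg y =
            q.2 (ρ y) - ∫ p, q.2 (GFF.stopAt (ρ '' U)ᶜ p) ∂ Wt (ρ y)) ∧
    (∀ (x : V) (π : T → V), GFF.IsCoverMap Gt G o x π →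
      ∀ R : ℕ, 1 ≤ R → GFF.TxZero G (GFF.gball G x R) →
      ∀ ρ : V → T,
        (∀ z ∈ GFF.gball Gt o R, ρ (π z) = z) →
        (∀ v ∈ GFF.gball G x R, π (ρ v) = v ∧ ρ v ∈ GFF.gball Gt o R) →
      ∀ U : Set V, U ⊆ GFF.gball G x (R - 1) →
      ∃ Q : Measure ((V → ℝ) × (T → ℝ)),
        Q.map Prod.fst = μG ∧ Q.map Prod.snd = μT ∧
        ∀ᵐ q ∂Q, ∀ y ∈ GFF.gball G x R,
          q.1 y - ∫ p, q.1 (GFF.stopAt Uᶜ p) ∂ Wg y =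
            q.2 (ρ y) - ∫ p, q.2 (GFF.stopAt (ρ '' U)ᶜ p) ∂ Wt (ρ y)) := by
  obtain ⟨nb, hnb, hcard⟩ := GFF.exists_nb G d hd hreg
  obtain ⟨nt, hnt, htcard⟩ := GFF.exists_nb Gt d hd htree.2.2
  have hc := htree.1
  have ha := htree.2.1
  have main : ∀ (ρ : V → T) (B U : Set V) (π : T → V), (∀ v ∈ B, π (ρ v) = v) → U ⊆ B →
      (∀ u ∈ U, ∀ v, G.Adj u v → v ∈ B) →
      (∀ u ∈ U, ∀ w, Gt.Adj (ρ u) w ↔ ∃ v, G.Adj u v ∧ ρ v = w) →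
      ∃ Q : Measure ((V → ℝ) × (T → ℝ)),
        Q.map Prod.fst = μG ∧ Q.map Prod.snd = μT ∧
        ∀ᵐ q ∂Q, ∀ y ∈ B,
          q.1 y - ∫ p, q.1 (GFF.stopAt Uᶜ p) ∂ Wg y =
            q.2 (ρ y) - ∫ p, q.2 (GFF.stopAt (ρ '' U)ᶜ p) ∂ Wt (ρ y) := by
    intro ρ B U π hπ hUB hUnb him
    refine GFF.core d hd V G hconn T Gt hc ha nb hnb hcard nt hnt htcard μG hμG μT hμT
      Wg hWg Wt hWt ρ B U ?_ hUB hUnb him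
      (GFF.U_ne_univ G hconn Gt hc ha d hd nt hnt htcard ρ U him)
    intro a ha b hb hab
    rw [← hπ a ha, ← hπ b hb, hab]
  constructor
  · intro x x' π hcov R hR _ _ _ z' hz' ρ hρ hρ2 U hU
    obtain ⟨rfl, _, hcov⟩ := hcov
    subst hz'
    refine main ρ _ U π (fun v hv => (hρ2 v hv).1) ?_ ?_ ?_
    · intro u hu
      rcases hU hu with h | h
      · exact Or.inl (le_trans h (Nat.sub_le _ _))
      · exact Or.inr (le_trans h (Nat.sub_le _ _))
    · intro u hu v huv
      rcases hU hu with h | h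
      · exact Or.inl (GFF.gball_adj G hconn _ u v R hR h huv)
      · exact Or.inr (GFF.gball_adj G hconn _ u v R hR h huv)
    · intro u hu w
      rcases hU hu with h | h
      · exact GFF.him_ball G hconn Gt hc π hcov o R hR ρ (fun w hw => hρ w (Or.inl hw)) u h w
      · exact GFF.him_ball G hconn Gt hc π hcov z' R hR ρ (fun w hw => hρ w (Or.inr hw)) u h w
  · intro x π hcov R hR _ ρ hρ hρ2 U hU
    obtain ⟨rfl, _, hcov⟩ := hcov
    refine main ρ _ U π (fun v hv => (hρ2 v hv).1) ?_ ?_ ?_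
    · intro u hu
      exact le_trans (hU hu) (Nat.sub_le _ _)
    · intro u hu v huv
      exact GFF.gball_adj G hconn _ u v R hR (hU hu) huv
    · intro u hu w
      exact GFF.him_ball G hconn Gt hc π hcov o R hR ρ hρ u (hU hu) w
end

section
/- For all sufficiently large n, all x, x' ∈ G_n and all 1 ≤ r < R ≤ (c_0/6)·log_{d−1}(N_n) such that tx(B_{G_n}(x,2R)) = 0, tx(B_{G_n}(x',2R)) = 0 and B_{G_n}(x,2R) ∩ B_{G_n}(x',2R) = ∅, there exists a coupling Q_n of Ψ_{G_n} and φ_{T_d} such that for all ε > 0: Q_n[ sup_{y ∈ B_{G_n}(x,r) ∪ B_{G_n}(x',r)} |Ψ_{G_n}(y) − φ_{T_d}(ρ_{x,x',2R}(y))| > ε ] ≤ 8d(d−1)^r · exp( −(ε²(d−1)(d−2)/(24d²))·(d−1)^{R−2r} ). In particular, for a single x ∈ G_n with tx(B_{G_n}(x,2R)) = 0 there exists a coupling Q_n such that the same bound applies to Q_n[ sup_{y ∈ B_{G_n}(x,r)} |Ψ_{G_n}(y) − φ_{T_d}(ρ_{x,2R}(y))| > ε ]. -/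
open MeasureTheory ProbabilityTheory Filter Set
open scoped ENNReal NNReal ENat Classical

namespace GFF

section Combi

variable {V : Type*} {T : Type*} {W : Type*}

lemma chain_map_of_locinj {H : SimpleGraph V} {C : SimpleGraph W} (f : H →g C)
    (hf : ∀ b a c, H.Adj b a → H.Adj b c → f a = f c → a = c) {u v : V} (p : H.Walk u v)
    (hp : List.IsChain (· ≠ ·) p.edges) : List.IsChain (· ≠ ·) (p.map f).edges := by
  induction p with
  | nil => simp
  | @cons a b c h p ih =>
    cases p with
    | nil => simp
    | @cons _ b' _ h' q =>
      simp only [SimpleGraph.Walk.map_cons, SimpleGraph.Walk.edges_cons,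
        List.isChain_cons_cons] at hp ih ⊢
      refine ⟨?_, ih hp.2⟩
      intro heq
      apply hp.1
      have : f a = f b' := by
        rw [Sym2.eq_iff] at heq
        rcases heq with ⟨h1, h2⟩ | ⟨h1, h2⟩
        · rw [h1, h2]
        · exact h1
      have := hf b a b' h.symm h' this
      subst this
      exact Sym2.eq_swap

lemma inj_of_locinj {H : SimpleGraph V} {C : SimpleGraph W} (f : H →g C)
    (hf : ∀ b a c, H.Adj b a → H.Adj b c → f a = f c → a = c) (hC : C.IsAcyclic)
    {u v : V} (hr : H.Reachable u v) (h : f u = f v) : u = v := by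
  obtain ⟨p, hp⟩ := hr.exists_isPath
  have h1 : List.IsChain (· ≠ ·) p.edges := hp.isTrail.edges_nodup.isChain
  have h2 := chain_map_of_locinj f hf p h1
  rw [← hC.isPath_iff_isChain] at h2
  have h3 : ∀ (w : W) (hw : w = f v) (q : C.Walk (f u) w), q.IsPath → w = f u → q.length = 0 := by
    intro w hw q hq hwu
    subst hwu
    have := SimpleGraph.Walk.isPath_iff_nil.mp hq
    exact SimpleGraph.Walk.length_eq_zero_iff.mpr this
  have h4 := h3 _ rfl _ h2 h.symm
  rw [SimpleGraph.Walk.length_map] at h4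
  exact SimpleGraph.Walk.eq_of_length_eq_zero h4

lemma acyclic_of_locinj {H : SimpleGraph V} {C : SimpleGraph W} (f : H →g C)
    (hf : ∀ b a c, H.Adj b a → H.Adj b c → f a = f c → a = c) (hC : C.IsAcyclic) :
    H.IsAcyclic := by
  intro v c hc
  have h1 : List.IsChain (· ≠ ·) c.edges := hc.isTrail.edges_nodup.isChain
  have h2 := chain_map_of_locinj f hf c h1
  rw [← hC.isPath_iff_isChain] at h2
  have := SimpleGraph.Walk.isPath_iff_nil.mp h2
  rw [← SimpleGraph.Walk.length_eq_zero_iff, SimpleGraph.Walk.length_map] at this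
  have h3 := hc.three_le_length
  omega

/-- level graph -/
def levelG (F : SimpleGraph V) : SimpleGraph (V × ℤ) where
  Adj p q := F.Adj p.1 q.1 ∧ p.2 = q.2
  symm := ⟨fun _ _ h => ⟨h.1.symm, h.2.symm⟩⟩
  loopless := ⟨fun p h => F.loopless.irrefl p.1 h.1⟩

lemma levelG_acyclic (F : SimpleGraph V) (hF : F.IsAcyclic) : (levelG F).IsAcyclic := by
  refine acyclic_of_locinj (C := F) ⟨Prod.fst, fun {a b} h => h.1⟩ ?_ hF
  rintro ⟨b, i⟩ ⟨a, j⟩ ⟨c, k⟩ ⟨_, h1⟩ ⟨_, h2⟩ h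
  simp at h h1 h2 ⊢
  exact ⟨h, by omega⟩

/-- ℤ-cover graph -/
def covG (F : SimpleGraph V) (a b : V) : SimpleGraph (V × ℤ) where
  Adj p q := (F.Adj p.1 q.1 ∧ p.2 = q.2) ∨ (p.1 = a ∧ q.1 = b ∧ q.2 = p.2 + 1) ∨
    (p.1 = b ∧ q.1 = a ∧ p.2 = q.2 + 1)
  symm := ⟨by
    rintro p q (h | h | h)
    · exact Or.inl ⟨h.1.symm, h.2.symm⟩
    · exact Or.inr (Or.inr ⟨h.2.1, h.1, h.2.2⟩)
    · exact Or.inr (Or.inl ⟨h.2.1, h.1, h.2.2⟩)⟩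
  loopless := ⟨by
    rintro p (h | h | h)
    · exact F.loopless.irrefl p.1 h.1
    · omega
    · omega⟩

lemma covG_bridge (F : SimpleGraph V) (a b : V) (i : ℤ) :
    (covG F a b).IsBridge s((a, i), (b, i + 1)) := by
  rw [SimpleGraph.isBridge_iff]
  rintro ⟨p⟩
  have key : ∀ (u v : V × ℤ) (q : ((covG F a b).deleteEdges {s((a, i), (b, i + 1))}).Walk u v),
      u.2 ≤ i → v.2 ≤ i := by
    intro u v q
    induction q with
    | nil => exact id
    | @cons u v w h q ih =>
      intro hu
      apply ih
      rw [SimpleGraph.deleteEdges_adj] at h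
      obtain ⟨h1, h2⟩ := h
      rcases h1 with h1 | h1 | h1
      · omega
      · by_contra hcon
        apply h2
        obtain ⟨u1, u2⟩ := u
        obtain ⟨v1, v2⟩ := v
        simp at *
        left
        refine ⟨⟨h1.1, by omega⟩, h1.2.1, by omega⟩
      · omega
  have := key _ _ p le_rfl
  simp at this

lemma covG_acyclic (F : SimpleGraph V) (hF : F.IsAcyclic) (a b : V) :
    (covG F a b).IsAcyclic := by
  intro v c hc
  have hno : ∀ e ∈ c.edges, e ∈ (levelG F).edgeSet := by
    intro e he
    have hadj := c.edges_subset_edgeSet he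
    induction e with
    | h p q =>
      rw [SimpleGraph.mem_edgeSet] at hadj ⊢
      rcases hadj with h | h | h
      · exact h
      · exfalso
        have hb := covG_bridge F a b p.2
        have e1 : s(p, q) = s((a, p.2), (b, p.2 + 1)) := by
          rw [← h.1, ← h.2.1, ← h.2.2]
        rw [← e1] at hb
        rw [SimpleGraph.isBridge_iff_forall_cycle_notMem (c.edges_subset_edgeSet he)] at hb
        exact hb c hc he
      · exfalso
        have hb := covG_bridge F a b q.2
        have e1 : s(p, q) = s((a, q.2), (b, q.2 + 1)) := by
          rw [← h.1, ← h.2.1, ← h.2.2]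
          exact Sym2.eq_swap
        rw [← e1] at hb
        rw [SimpleGraph.isBridge_iff_forall_cycle_notMem (c.edges_subset_edgeSet he)] at hb
        exact hb c hc he
  exact levelG_acyclic F hF (c.transfer _ hno) (hc.transfer hno)

/-- potential of an antisymmetric function on a tree -/
lemma exists_potential {Gt : SimpleGraph T} (hT : Gt.IsTree) (z0 : T) (om : T → T → ℤ)
    (hom : ∀ u v, om u v = - om v u) (hb : ∀ u v, |om u v| ≤ 1) :
    ∃ w : T → ℤ, (∀ u v, Gt.Adj u v → w v = w u + om u v) ∧ ∀ z, |w z| ≤ Gt.dist z0 z := by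
  have hex : ∀ z, ∃ p : Gt.Walk z0 z, p.IsPath ∧ p.length = Gt.dist z0 z := fun z =>
    (hT.connected z0 z).exists_path_of_dist
  choose P hP hPl using hex
  refine ⟨fun z => ((P z).darts.map (fun e => om e.fst e.snd)).sum, ?_, ?_⟩
  · have key : ∀ u v, (h : Gt.Adj u v) → u ∈ (P v).support →
        ((P v).darts.map (fun e => om e.fst e.snd)).sum =
        ((P u).darts.map (fun e => om e.fst e.snd)).sum + om u v := by
      intro u v h hu
      rw [hT.isAcyclic.path_concat (hP u) (hP v) h hu]
      simp [SimpleGraph.Walk.darts_concat]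
    intro u v h
    by_cases hu : u ∈ (P v).support
    · exact key u v h hu
    · have := hT.isAcyclic.mem_support_of_ne_mem_support_of_adj_of_isPath (hP u) (hP v) h hu
      have := key v u h.symm this
      have h2 := hom u v
      simp only at *
      omega
  · intro z
    rw [← hPl z, ← SimpleGraph.Walk.length_darts]
    simp only
    generalize (P z).darts = l
    induction l with
    | nil => simp
    | cons e l ih =>
      simp only [List.map_cons, List.sum_cons, List.length_cons]
      refine (abs_add_le _ _).trans ?_
      have := hb e.fst e.snd
      push_cast
      linarith

lemma parent_unique {Gt : SimpleGraph T} (hT : Gt.IsTree) (z0 z u v : T) (hu : Gt.Adj z u)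
    (hv : Gt.Adj z v) (h1 : Gt.dist z0 z = Gt.dist z0 u + 1) (h2 : Gt.dist z0 z = Gt.dist z0 v + 1) :
    u = v := by
  obtain ⟨p, hp, hpl⟩ := (hT.connected z0 z).exists_path_of_dist
  have key : ∀ u, Gt.Adj z u → Gt.dist z0 z = Gt.dist z0 u + 1 → u = p.penultimate := by
    intro u hu h1
    obtain ⟨q, hq, hql⟩ := (hT.connected z0 u).exists_path_of_dist
    have hz : u ∈ p.support := by
      apply hT.isAcyclic.mem_support_of_ne_mem_support_of_adj_of_isPath hp hq hu
      intro hmem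
      have := (q.takeUntil z hmem)
      have h3 : Gt.dist z0 z ≤ (q.takeUntil z hmem).length := SimpleGraph.dist_le _
      have h4 := q.length_takeUntil_le_length hmem
      omega
    exact hT.isAcyclic.eq_penultimate_of_adj_end hp hu hz
  rw [key u hu h1, key v hv h2]

lemma exists_parent {G : SimpleGraph T} (hT : G.Connected) (z0 z : T) (hz : z ≠ z0) :
    ∃ u, G.Adj z u ∧ G.dist z0 z = G.dist z0 u + 1 := by
  obtain ⟨p, hpl⟩ := (hT z z0).exists_walk_length_eq_dist
  cases p with
  | nil => exact absurd rfl hz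
  | @cons _ u _ h p =>
    refine ⟨u, h, ?_⟩
    rw [SimpleGraph.dist_comm, ← hpl, SimpleGraph.Walk.length_cons]
    have h1 : G.dist u z0 ≤ p.length := SimpleGraph.dist_le _
    have h2 : G.dist z z0 ≤ G.dist u z0 + 1 := by
      have := hT.dist_triangle (u := z) (v := u) (w := z0)
      have := SimpleGraph.dist_eq_one_iff_adj.mpr h
      omega
    simp only [SimpleGraph.Walk.length_cons] at hpl
    rw [SimpleGraph.dist_comm (u := z0)]
    omega

lemma ball_reachable {G : SimpleGraph T} (hT : G.Connected) (z0 : T) (M : ℕ) :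
    ∀ (k : ℕ) (z : T) (hz : G.dist z0 z ≤ M), G.dist z0 z = k →
    (G.induce (gball G z0 M)).Reachable ⟨z, hz⟩ ⟨z0, by simp [gball]⟩ := by
  intro k
  induction k with
  | zero =>
    intro z hz h
    have : z0 = z := ((hT z0 z).dist_eq_zero_iff).mp h
    subst this
    rfl
  | succ k ih =>
    intro z hz h
    obtain ⟨u, hu, hd⟩ := exists_parent hT z0 z (by rintro rfl; simp at h)
    have hu' : G.dist z0 u ≤ M := by omega
    have := ih u hu' (by omega)
    refine SimpleGraph.Reachable.trans (SimpleGraph.Adj.reachable ?_) this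
    simpa using hu

lemma ball_connected {G : SimpleGraph T} (hT : G.Connected) (z0 : T) (M : ℕ) :
    (G.induce (gball G z0 M)).Connected := by
  have : Nonempty (gball G z0 M) := ⟨⟨z0, by simp [gball]⟩⟩
  refine SimpleGraph.Connected.mk ?_
  rintro ⟨u, hu⟩ ⟨v, hv⟩
  exact (ball_reachable hT z0 M _ u hu rfl).trans (ball_reachable hT z0 M _ v hv rfl).symm

/-- local injectivity of cover maps -/
lemma cover_locinj {Gt : SimpleGraph T} {G : SimpleGraph V} {d : ℕ} (hd : 0 < d) {π : T → V}
    (hT : IsReg Gt d) (hG : IsReg G d)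
    (hπ : ∀ y : T, π '' (Gt.neighborSet y) = G.neighborSet (π y)) :
    ∀ b a c, Gt.Adj b a → Gt.Adj b c → π a = π c → a = c := by
  intro b a c ha hc h
  have hfin : (Gt.neighborSet b).Finite := by
    apply Set.finite_coe_iff.mp
    apply Nat.finite_of_card_ne_zero
    rw [hT b]; omega
  have h1 : (π '' (Gt.neighborSet b)).ncard = (Gt.neighborSet b).ncard := by
    rw [hπ, ← Nat.card_coe_set_eq, ← Nat.card_coe_set_eq, hT, hG]
  rw [Set.ncard_image_iff hfin] at h1
  exact h1 ha hc h

lemma cover_adj {Gt : SimpleGraph T} {G : SimpleGraph V} {π : T → V}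
    (hπ : ∀ y : T, π '' (Gt.neighborSet y) = G.neighborSet (π y)) {u v : T} (h : Gt.Adj u v) :
    G.Adj (π u) (π v) := by
  have : π v ∈ π '' (Gt.neighborSet u) := ⟨v, h, rfl⟩
  rw [hπ] at this
  exact this

lemma cover_dist_le {Gt : SimpleGraph T} {G : SimpleGraph V} {π : T → V} (hT : Gt.Connected)
    (hπ : ∀ y : T, π '' (Gt.neighborSet y) = G.neighborSet (π y)) (u v : T) :
    G.dist (π u) (π v) ≤ Gt.dist u v := by
  obtain ⟨p, hp⟩ := (hT u v).exists_walk_length_eq_dist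
  let f : Gt →g G := ⟨π, fun {a b} h => cover_adj hπ h⟩
  rw [← hp, ← SimpleGraph.Walk.length_map f]
  exact SimpleGraph.dist_le _

lemma cover_lift {Gt : SimpleGraph T} {G : SimpleGraph V} {π : T → V} (hG : G.Connected)
    (hπ : ∀ y : T, π '' (Gt.neighborSet y) = G.neighborSet (π y)) (z : T) (y : V) :
    ∃ z', π z' = y ∧ Gt.dist z z' ≤ G.dist (π z) y := by
  obtain ⟨p, hp⟩ := (hG (π z) y).exists_walk_length_eq_dist
  rw [← hp]
  have key : ∀ (u v : V) (p : G.Walk u v) (z : T), π z = u →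
      ∃ z', π z' = v ∧ ∃ q : Gt.Walk z z', q.length = p.length := by
    intro u v p
    induction p with
    | nil => intro z hz; exact ⟨z, hz, .nil, rfl⟩
    | @cons a b c h p ih =>
      intro z hz
      have : b ∈ π '' (Gt.neighborSet z) := by rw [hπ, hz]; exact h
      obtain ⟨z1, hz1, rfl⟩ := this
      obtain ⟨z', hz', q, hq⟩ := ih z1 rfl
      have hz1' : Gt.Adj z z1 := hz1
      exact ⟨z', hz', .cons hz1' q, by simp [hq]⟩
  obtain ⟨z', hz', q, hq⟩ := key _ _ p z rfl
  exact ⟨z', hz', hq ▸ SimpleGraph.dist_le q⟩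

end Combi

end GFF

namespace GFF

section Unicyc

variable {V : Type*} {T : Type*}

lemma unicyclic [Fintype V] (G : SimpleGraph V) (hG : G.Connected) (y : V) (M : ℕ)
    (h : adjPairs G (gball G y M) ≤ 2 * (gball G y M).ncard) :
    ∃ (F : SimpleGraph (gball G y M)) (a b : gball G y M), F.IsAcyclic ∧ ¬ F.Adj a b ∧
      ∀ u v : gball G y M, G.Adj u v → F.Adj u v ∨ (u = a ∧ v = b) ∨ (u = b ∧ v = a) := by
  set K := G.induce (gball G y M) with hK
  have hKc : K.Connected := ball_connected hG y M
  obtain ⟨F, hFK, hF⟩ := hKc.exists_isTree_le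
  have hcF := hF.card_edgeFinset
  have hcK := K.dart_card_eq_twice_card_edges
  have hd : Fintype.card K.Dart ≤ adjPairs G (gball G y M) := by
    unfold adjPairs
    let f : K.Dart → V × V := fun e => (e.fst.1, e.snd.1)
    have hf : Function.Injective f := by
      intro e1 e2 h
      simp only [f, Prod.mk.injEq] at h
      apply SimpleGraph.Dart.ext
      exact Prod.ext (Subtype.ext h.1) (Subtype.ext h.2)
    rw [← Nat.card_eq_fintype_card, ← Nat.card_range_of_injective hf, Nat.card_coe_set_eq]
    apply Set.ncard_le_ncard _ (Set.toFinite _)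
    rintro _ ⟨e, rfl⟩
    exact ⟨e.fst.2, e.snd.2, e.adj⟩
  have hB : (gball G y M).ncard = Fintype.card (gball G y M) := by
    rw [← Nat.card_coe_set_eq, Nat.card_eq_fintype_card]
  have hsub : F.edgeFinset ⊆ K.edgeFinset := SimpleGraph.edgeFinset_subset_edgeFinset.mpr hFK
  have hsd : (K.edgeFinset \ F.edgeFinset).card ≤ 1 := by
    rw [Finset.card_sdiff_of_subset hsub]
    omega
  by_cases hne : (K.edgeFinset \ F.edgeFinset).Nonempty
  · obtain ⟨e, he⟩ := hne
    rw [Finset.card_le_one] at hsd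
    induction e with
    | h a b =>
      refine ⟨F, a, b, hF.isAcyclic, ?_, ?_⟩
      · simp at he
        exact he.2
      · intro u v huv
        by_cases hF' : F.Adj u v
        · exact Or.inl hF'
        · right
          have : s(u, v) ∈ K.edgeFinset \ F.edgeFinset := by
            simp [hF', hK, huv]
          have := hsd _ this _ he
          rwa [Sym2.eq_iff] at this
  · rw [Finset.not_nonempty_iff_eq_empty, Finset.sdiff_eq_empty_iff_subset] at hne
    refine ⟨F, ⟨y, by simp [gball]⟩, ⟨y, by simp [gball]⟩, hF.isAcyclic, by simp, ?_⟩
    intro u v huv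
    left
    have : s(u, v) ∈ K.edgeFinset := by simp [hK, huv]
    have := hne this
    simpa using this

/-- number of preimages of `v` at distance `k` from `z0` -/
noncomputable def cnt (Gt : SimpleGraph T) (π : T → V) (z0 : T) (k : ℕ) (v : V) : ℕ :=
  Set.ncard {z | Gt.dist z0 z = k ∧ π z = v}

lemma cnt_le [Fintype V] {Gt : SimpleGraph T} {G : SimpleGraph V} (hT : Gt.IsTree)
    (hG : G.Connected) {d : ℕ} (hd : 0 < d) {π : T → V}
    (hTr : IsReg Gt d) (hGr : IsReg G d)
    (hπ : ∀ y : T, π '' (Gt.neighborSet y) = G.neighborSet (π y)) (z0 : T) (M : ℕ)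
    (h : adjPairs G (gball G (π z0) M) ≤ 2 * (gball G (π z0) M).ncard) (k : ℕ) (hk : k ≤ M)
    (v : V) : cnt Gt π z0 k v ≤ 2 * k + 1 := by
  obtain ⟨F, a, b, hF, hab, hcov⟩ := unicyclic G hG (π z0) M h
  let Pr : T → T → Prop := fun u v => π u = a ∧ π v = b
  let om : T → T → ℤ := fun u v => (if Pr u v then 1 else 0) - (if Pr v u then 1 else 0)
  obtain ⟨w, hw, hwb⟩ := exists_potential hT z0 om (fun u v => by simp only [om]; ring)
    (fun u v => by simp only [om]; split_ifs <;> simp)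
  have hball : ∀ z ∈ gball Gt z0 M, π z ∈ gball G (π z0) M := fun z hz =>
    (cover_dist_le hT.connected hπ z0 z).trans hz
  have hadj : ∀ {u v : gball Gt z0 M}, (Gt.induce (gball Gt z0 M)).Adj u v →
      (covG F a b).Adj (⟨π u, hball u u.2⟩, w u) (⟨π v, hball v v.2⟩, w v) := by
    intro u v huv
    have huv' : Gt.Adj u v := by simpa using huv
    have hw' := hw u v huv'
    have hne : π u ≠ π v := (cover_adj hπ huv').ne
    rcases hcov ⟨π u, hball u u.2⟩ ⟨π v, hball v v.2⟩ (cover_adj hπ huv') with h1 | h1 | h1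
    · left
      refine ⟨h1, ?_⟩
      have n1 : ¬ Pr u v := by
        rintro ⟨e1, e2⟩
        apply hab
        have e1' : (⟨π u, hball u u.2⟩ : gball G (π z0) M) = a := Subtype.ext e1
        have e2' : (⟨π v, hball v v.2⟩ : gball G (π z0) M) = b := Subtype.ext e2
        rwa [e1', e2'] at h1
      have n2 : ¬ Pr v u := by
        rintro ⟨e1, e2⟩
        apply hab
        have e1' : (⟨π v, hball v v.2⟩ : gball G (π z0) M) = a := Subtype.ext e1
        have e2' : (⟨π u, hball u u.2⟩ : gball G (π z0) M) = b := Subtype.ext e2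
        rw [e1', e2'] at h1
        exact h1.symm
      simp [om, n1, n2] at hw'
      exact hw'.symm
    · right; left
      refine ⟨h1.1, h1.2, ?_⟩
      have e1 : π u = a := congrArg Subtype.val h1.1
      have e2 : π v = b := congrArg Subtype.val h1.2
      have n1 : Pr u v := ⟨e1, e2⟩
      have n2 : ¬ Pr v u := by
        rintro ⟨e3, e4⟩
        exact hne (e1.trans e3.symm)
      simp [om, n1, n2] at hw'
      exact hw'
    · right; right
      refine ⟨h1.1, h1.2, ?_⟩
      have e1 : π u = b := congrArg Subtype.val h1.1
      have e2 : π v = a := congrArg Subtype.val h1.2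
      have n1 : Pr v u := ⟨e2, e1⟩
      have n2 : ¬ Pr u v := by
        rintro ⟨e3, e4⟩
        exact hne (e3.trans e2.symm)
      simp [om, n1, n2] at hw'
      simp only
      omega
  let Φ : Gt.induce (gball Gt z0 M) →g covG F a b :=
    ⟨fun z => (⟨π z, hball z z.2⟩, w z), hadj⟩
  have hinj : ∀ u v : gball Gt z0 M, Φ u = Φ v → u = v := by
    intro u v huv
    refine inj_of_locinj Φ ?_ (covG_acyclic F hF a b) ((ball_connected hT.connected z0 M) u v) huv
    intro b' a' c' h1 h2 h3
    have h4 : π a' = π c' := congrArg (fun p => (p.1 : V)) h3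
    exact Subtype.ext (cover_locinj hd hTr hGr hπ b' a' c' (by simpa using h1) (by simpa using h2) h4)
  unfold cnt
  have hle := Set.ncard_le_ncard_of_injOn (s := {z | Gt.dist z0 z = k ∧ π z = v})
    (t := ((Finset.Icc (-(k:ℤ)) k : Finset ℤ) : Set ℤ)) w ?_ ?_ (Finset.finite_toSet _)
  · rw [Set.ncard_coe_finset, Int.card_Icc] at hle
    omega
  · rintro z ⟨hz, -⟩
    have := hwb z
    rw [hz, abs_le] at this
    simpa using this
  · rintro z ⟨hz, hz'⟩ z2 ⟨hz2, hz2'⟩ heq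
    have := hinj ⟨z, by simp [gball, hz, hk]⟩ ⟨z2, by simp [gball, hz2, hk]⟩ (by
      refine Prod.ext (Subtype.ext ?_) heq
      exact hz'.trans hz2'.symm)
    exact congrArg Subtype.val this

end Unicyc

end GFF

namespace GFF

section TreeRec

variable {V : Type*} {T : Type*}

lemma nb_finite {Gt : SimpleGraph T} {d : ℕ} (hd : 0 < d) (hTr : IsReg Gt d) (z : T) :
    (Gt.neighborSet z).Finite := by
  apply Set.finite_coe_iff.mp
  apply Nat.finite_of_card_ne_zero
  rw [hTr z]; omega

lemma sph_finite {Gt : SimpleGraph T} (hT : Gt.Connected) {d : ℕ} (hd : 0 < d) (hTr : IsReg Gt d)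
    (z0 : T) (k : ℕ) : {z | Gt.dist z0 z = k}.Finite := by
  induction k with
  | zero =>
    apply Set.Finite.subset (Set.finite_singleton z0)
    intro z hz
    exact (((hT z0 z).dist_eq_zero_iff).mp hz).symm
  | succ k ih =>
    apply Set.Finite.subset (ih.biUnion (fun z _ => nb_finite hd hTr z))
    intro z hz
    have hz' : Gt.dist z0 z = k + 1 := hz
    obtain ⟨u, hu, hd⟩ := exists_parent hT z0 z (by rintro rfl; simp at hz')
    simp only [Set.mem_iUnion]
    exact ⟨u, by simp only [Set.mem_ofPred_eq]; omega, hu.symm⟩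

lemma tree_countable {Gt : SimpleGraph T} (hT : Gt.Connected) {d : ℕ} (hd : 0 < d)
    (hTr : IsReg Gt d) : Countable T := by
  obtain ⟨z0⟩ := hT.nonempty
  rw [← Set.countable_univ_iff]
  have : (Set.univ : Set T) = ⋃ k : ℕ, {z | Gt.dist z0 z = k} := by
    ext z; simp
  rw [this]
  exact Set.countable_iUnion fun k => (sph_finite hT hd hTr z0 k).countable

variable {Gt : SimpleGraph T} {d : ℕ}

/-- neighbours as a finset -/
noncomputable def nbF (hd : 0 < d) (hTr : IsReg Gt d) (z : T) : Finset T :=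
  (nb_finite hd hTr z).toFinset

/-- sphere as a finset -/
noncomputable def sphF (hT : Gt.IsTree) (hd : 0 < d) (hTr : IsReg Gt d) (z0 : T) (k : ℕ) :
    Finset T :=
  (sph_finite hT.connected hd hTr z0 k).toFinset

/-- children as a finset -/
noncomputable def chF (hd : 0 < d) (hTr : IsReg Gt d) (z0 z : T) : Finset T :=
  (nbF hd hTr z).filter (fun u => Gt.dist z0 u = Gt.dist z0 z + 1)

@[simp] lemma mem_nbF (hd : 0 < d) (hTr : IsReg Gt d) (z u : T) :
    u ∈ nbF hd hTr z ↔ Gt.Adj z u := by simp [nbF]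

@[simp] lemma mem_sphF (hT : Gt.IsTree) (hd : 0 < d) (hTr : IsReg Gt d) (z0 : T) (k : ℕ) (z : T) :
    z ∈ sphF hT hd hTr z0 k ↔ Gt.dist z0 z = k := by simp [sphF]

@[simp] lemma mem_chF (hd : 0 < d) (hTr : IsReg Gt d) (z0 z u : T) :
    u ∈ chF hd hTr z0 z ↔ Gt.Adj z u ∧ Gt.dist z0 u = Gt.dist z0 z + 1 := by simp [chF]

lemma card_nbF (hd : 0 < d) (hTr : IsReg Gt d) (z : T) : (nbF hd hTr z).card = d := by
  rw [nbF, ← Set.ncard_eq_toFinset_card _ (nb_finite hd hTr z), ← Nat.card_coe_set_eq]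
  exact hTr z

lemma sum_sph_succ (hT : Gt.IsTree) (hd : 0 < d) (hTr : IsReg Gt d) (z0 : T) (k : ℕ) (f : T → ℝ) :
    ∑ z ∈ sphF hT hd hTr z0 (k + 1), f z =
      ∑ z ∈ sphF hT hd hTr z0 k, ∑ u ∈ chF hd hTr z0 z, f u := by
  rw [← Finset.sum_biUnion]
  · congr 1
    ext z
    simp only [mem_sphF, Finset.mem_biUnion, mem_chF]
    constructor
    · intro h
      obtain ⟨u, hu, hd⟩ := exists_parent hT.connected z0 z (by rintro rfl; simp at h)
      exact ⟨u, by omega, hu.symm, hd⟩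
    · rintro ⟨u, hu, -, h⟩
      omega
  · intro u _ v _ huv
    rw [Function.onFun, Finset.disjoint_left]
    intro z hz hz'
    rw [mem_chF] at hz hz'
    exact huv (parent_unique hT z0 z u v hz.1.symm hz'.1.symm hz.2 hz'.2)

lemma par_eq (hT : Gt.IsTree) (hd : 0 < d) (hTr : IsReg Gt d) (z0 z u : T)
    (h : Gt.Adj z u) (h' : Gt.dist z0 z = Gt.dist z0 u + 1) :
    (nbF hd hTr z).filter (fun v => ¬ Gt.dist z0 v = Gt.dist z0 z + 1) = {u} := by
  ext v
  simp only [Finset.mem_filter, mem_nbF, Finset.mem_singleton]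
  constructor
  · rintro ⟨h1, h2⟩
    rcases hT.dist_eq_dist_add_one_of_adj z0 h1 with h3 | h3
    · exact parent_unique hT z0 z v u h1 h h3 h'
    · exact absurd h3 h2
  · rintro rfl
    exact ⟨h, by omega⟩

lemma card_chF (hT : Gt.IsTree) (hd : 0 < d) (hTr : IsReg Gt d) (z0 z : T) :
    ((chF hd hTr z0 z).card : ℝ) = if Gt.dist z0 z = 0 then (d : ℝ) else (d : ℝ) - 1 := by
  have h1 := Finset.card_filter_add_card_filter_not (s := nbF hd hTr z)
    (fun u => Gt.dist z0 u = Gt.dist z0 z + 1)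
  rw [card_nbF] at h1
  split_ifs with h0
  · have : z0 = z := ((hT.connected z0 z).dist_eq_zero_iff).mp h0
    subst this
    have : chF hd hTr z0 z0 = nbF hd hTr z0 := by
      ext u
      simp only [mem_chF, mem_nbF, and_iff_left_iff_imp]
      intro h
      rw [SimpleGraph.dist_eq_one_iff_adj.mpr h]; simp
    rw [this, card_nbF]
  · obtain ⟨u, hu, hdd⟩ := exists_parent hT.connected z0 z (by rintro rfl; simp at h0)
    rw [par_eq hT hd hTr z0 z u hu hdd, Finset.card_singleton] at h1
    have h2 : (chF hd hTr z0 z).card + 1 = d := h1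
    have h3 : ((chF hd hTr z0 z).card : ℝ) + 1 = d := by exact_mod_cast h2
    linarith

lemma tree_rec (hT : Gt.IsTree) (hd : 0 < d) (hTr : IsReg Gt d) (z0 : T) (k : ℕ) (f : T → ℝ) :
    ∑ z ∈ sphF hT hd hTr z0 (k + 1), ∑ u ∈ nbF hd hTr z, f u =
      ∑ z ∈ sphF hT hd hTr z0 (k + 2), f z +
        (if k = 0 then (d : ℝ) else (d : ℝ) - 1) * ∑ z ∈ sphF hT hd hTr z0 k, f z := by
  rw [sum_sph_succ hT hd hTr z0 (k + 1)]
  have h1 : ∀ z, ∑ u ∈ nbF hd hTr z, f u = ∑ u ∈ chF hd hTr z0 z, f u +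
      ∑ u ∈ (nbF hd hTr z).filter (fun v => ¬ Gt.dist z0 v = Gt.dist z0 z + 1), f u := by
    intro z
    rw [chF, Finset.sum_filter_add_sum_filter_not]
  simp_rw [h1]
  rw [Finset.sum_add_distrib]
  congr 1
  rw [sum_sph_succ hT hd hTr z0 k, Finset.mul_sum]
  apply Finset.sum_congr rfl
  intro z hz
  rw [mem_sphF] at hz
  have h2 : ∀ w ∈ chF hd hTr z0 z,
      ∑ u ∈ (nbF hd hTr w).filter (fun v => ¬ Gt.dist z0 v = Gt.dist z0 w + 1), f u = f z := by
    intro w hw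
    rw [mem_chF] at hw
    rw [par_eq hT hd hTr z0 w z hw.1.symm hw.2, Finset.sum_singleton]
  rw [Finset.sum_congr rfl h2, Finset.sum_const, nsmul_eq_mul, card_chF hT hd hTr, hz]

lemma sphF_zero (hT : Gt.IsTree) (hd : 0 < d) (hTr : IsReg Gt d) (z0 : T) :
    sphF hT hd hTr z0 0 = {z0} := by
  ext z
  rw [mem_sphF, (hT.connected z0 z).dist_eq_zero_iff, Finset.mem_singleton, eq_comm]

lemma tree_rec_zero (hT : Gt.IsTree) (hd : 0 < d) (hTr : IsReg Gt d) (z0 : T) (f : T → ℝ) :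
    ∑ z ∈ sphF hT hd hTr z0 1, f z = ∑ u ∈ nbF hd hTr z0, f u := by
  apply Finset.sum_congr _ (fun _ _ => rfl)
  ext z
  rw [mem_sphF, mem_nbF, SimpleGraph.dist_eq_one_iff_adj]

/-- The resolvent type identity on the tree for eigenfunctions. -/
lemma tree_identity (hT : Gt.IsTree) (hd3 : 3 ≤ d) (hd : 0 < d) (hTr : IsReg Gt d) (z0 : T)
    (f : T → ℝ) (lam : ℝ) (hf : ∀ z, ∑ u ∈ nbF hd hTr z, f u = d * lam * f z) (M : ℕ) :
    (1 - lam) * ∑ k ∈ Finset.range (M + 1), (((d:ℝ) - 1) / ((d:ℝ) - 2)) *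
        (((d:ℝ) - 1)⁻¹ ^ k - ((d:ℝ) - 1)⁻¹ ^ (M + 1)) * ∑ z ∈ sphF hT hd hTr z0 k, f z =
      f z0 - (((d:ℝ) - 1)⁻¹ ^ M / d) * ∑ z ∈ sphF hT hd hTr z0 (M + 1), f z := by
  set q : ℝ := (d:ℝ) - 1 with hq
  have hdR : (3:ℝ) ≤ d := by exact_mod_cast hd3
  have hq2 : (d:ℝ) - 2 = q - 1 := by rw [hq]; ring
  have hdq : (d:ℝ) = q + 1 := by rw [hq]; ring
  have hq0 : q ≠ 0 := by rw [hq]; linarith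
  have hq1 : q - 1 ≠ 0 := by rw [hq]; intro h; linarith
  have hd0 : q + 1 ≠ 0 := by rw [← hdq]; linarith
  set s : ℕ → ℝ := fun k => ∑ z ∈ sphF hT hd hTr z0 k, f z with hs
  have s0 : s 0 = f z0 := by simp [hs, sphF_zero]
  have s1 : s 1 = d * lam * s 0 := by
    rw [s0, ← hf z0]
    exact tree_rec_zero hT hd hTr z0 f
  have srec : ∀ k, d * lam * s (k + 1) = s (k + 2) + (if k = 0 then (d : ℝ) else q) * s k := by
    intro k
    rw [← tree_rec hT hd hTr z0 k f, Finset.mul_sum]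
    exact Finset.sum_congr rfl fun z _ => (hf z).symm
  have hball : ∀ l, (1 - lam) * ∑ k ∈ Finset.range (l + 2), s k = (q * s (l + 1) - s (l + 2)) / d := by
    intro l
    induction l with
    | zero =>
      have h2 := srec 0
      simp only [if_true] at h2
      simp [Finset.sum_range_succ]
      have h3 : s 2 = d * lam * s 1 - d * s 0 := by linarith
      rw [h3, hdq] at *
      field_simp
      rw [s1]
      ring
    | succ l ih =>
      rw [Finset.sum_range_succ, mul_add, ih]
      have h2 := srec (l + 1)
      simp only [Nat.add_eq_zero_iff, one_ne_zero, and_false, if_false] at h2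
      have h3 : s (l + 3) = d * lam * s (l + 2) - q * s (l + 1) := by linarith
      rw [show l + 1 + 2 = l + 3 from rfl, h3, show l + 1 + 1 = l + 2 from rfl, hdq]
      field_simp
      ring
  change (1 - lam) * ∑ k ∈ Finset.range (M + 1), q / ((d:ℝ) - 2) *
        (q⁻¹ ^ k - q⁻¹ ^ (M + 1)) * s k = f z0 - (q⁻¹ ^ M / d) * s (M + 1)
  rw [hq2]
  induction M with
  | zero =>
    simp [s0]
    rw [s1, s0, hdq]
    field_simp
  | succ M ih =>
    have hstep : ∑ k ∈ Finset.range (M + 1 + 1), q / (q - 1) * (q⁻¹ ^ k - q⁻¹ ^ (M + 1 + 1)) * s k =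
        ∑ k ∈ Finset.range (M + 1), q / (q - 1) * (q⁻¹ ^ k - q⁻¹ ^ (M + 1)) * s k +
        q⁻¹ ^ (M + 1) * ∑ k ∈ Finset.range (M + 2), s k := by
      have : ∑ k ∈ Finset.range (M + 1), q / (q - 1) * (q⁻¹ ^ k - q⁻¹ ^ (M + 1)) * s k =
          ∑ k ∈ Finset.range (M + 2), q / (q - 1) * (q⁻¹ ^ k - q⁻¹ ^ (M + 1)) * s k := by
        rw [Finset.sum_range_succ _ (M + 1)]; simp
      rw [this, Finset.mul_sum, ← Finset.sum_add_distrib]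
      apply Finset.sum_congr rfl
      intro k _
      have : q⁻¹ ^ (M + 1 + 1) = q⁻¹ ^ (M + 1) * q⁻¹ := pow_succ _ _
      rw [this]
      field_simp
      ring
    rw [hstep, mul_add, ih]
    rw [mul_left_comm, hball M, pow_succ q⁻¹ M]
    rw [hdq]
    field_simp
    ring

lemma card_sph (hT : Gt.IsTree) (hd : 0 < d) (hTr : IsReg Gt d) (z0 : T) (k : ℕ) :
    ((sphF hT hd hTr z0 (k + 1)).card : ℝ) = d * ((d:ℝ) - 1) ^ k := by
  have hc : ∀ k, ((sphF hT hd hTr z0 k).card : ℝ) = ∑ z ∈ sphF hT hd hTr z0 k, (1 : ℝ) := by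
    intro k; simp
  induction k with
  | zero =>
    rw [hc, tree_rec_zero]
    simp [card_nbF]
  | succ k ih =>
    rw [hc, sum_sph_succ]
    have : ∀ z ∈ sphF hT hd hTr z0 (k + 1), ∑ u ∈ chF hd hTr z0 z, (1 : ℝ) = (d : ℝ) - 1 := by
      intro z hz
      rw [mem_sphF] at hz
      rw [Finset.sum_const, nsmul_eq_mul, mul_one, card_chF hT hd hTr, if_neg (by omega)]
    rw [Finset.sum_congr rfl this, Finset.sum_const, nsmul_eq_mul, ih]
    ring

lemma sum_nbF_cover [Fintype V] {G : SimpleGraph V} (hd : 0 < d) (hTr : IsReg Gt d)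
    (hGr : IsReg G d) {π : T → V}
    (hπ : ∀ y : T, π '' (Gt.neighborSet y) = G.neighborSet (π y)) (u : V → ℝ) (z : T) :
    ∑ w ∈ nbF hd hTr z, u (π w) = d * Matrix.mulVec (transP G d) u (π z) := by
  have h1 : ∑ w ∈ nbF hd hTr z, u (π w) = ∑ v ∈ (nbF hd hTr z).image π, u v := by
    rw [Finset.sum_image]
    intro a ha b hb hab
    simp at ha hb
    exact cover_locinj hd hTr hGr hπ z a b ha hb hab
  have h2 : (nbF hd hTr z).image π = Finset.univ.filter (fun v => G.Adj (π z) v) := by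
    ext v
    have := Set.ext_iff.mp (hπ z) v
    simpa using this
  rw [h1, h2, Matrix.mulVec, dotProduct, Finset.mul_sum, Finset.sum_filter]
  apply Finset.sum_congr rfl
  intro v _
  simp only [transP, Matrix.of_apply]
  split_ifs
  · have : (d:ℝ) ≠ 0 := by positivity
    field_simp
  · simp

lemma sum_sph_cnt [Fintype V] (hT : Gt.IsTree) (hd : 0 < d) (hTr : IsReg Gt d) (z0 : T) (k : ℕ)
    (π : T → V) (u : V → ℝ) :
    ∑ z ∈ sphF hT hd hTr z0 k, u (π z) = ∑ v, (cnt Gt π z0 k v : ℝ) * u v := by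
  rw [← Finset.sum_fiberwise (sphF hT hd hTr z0 k) π]
  apply Finset.sum_congr rfl
  intro v _
  have h1 : ∀ z ∈ (sphF hT hd hTr z0 k).filter (fun z => π z = v), u (π z) = u v := by
    intro z hz
    simp at hz
    rw [hz.2]
  rw [Finset.sum_congr rfl h1, Finset.sum_const, nsmul_eq_mul]
  congr 2
  rw [cnt, ← Set.ncard_coe_finset]
  congr 1
  ext z
  simp

end TreeRec

end GFF

namespace GFF
section specsec
variable {V : Type*} [Fintype V]

lemma transP_herm (G : SimpleGraph V) (d : ℕ) : (transP G d).IsHermitian := by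
  ext i j
  simp [transP, Matrix.conjTranspose_apply, G.adj_comm]

lemma transP_one {G : SimpleGraph V} {d : ℕ} (hd : 0 < d) (hG : IsReg G d) :
    (transP G d).mulVec (fun _ => (1:ℝ)) = fun _ => 1 := by
  funext x
  simp only [Matrix.mulVec, dotProduct, transP, Matrix.of_apply, mul_one]
  rw [← Finset.sum_filter, Finset.sum_const, nsmul_eq_mul]
  have : (Finset.univ.filter (fun y => G.Adj x y)).card = d := by
    rw [← hG x, Nat.card_coe_set_eq, Set.ncard_eq_toFinset_card']
    congr 1; ext; simp
  rw [this]
  have : (d:ℝ) ≠ 0 := by positivity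
  field_simp

/-- eigenfunctions for eigenvalue one are constant -/
lemma eig_one_const {G : SimpleGraph V} {d : ℕ} (hd : 0 < d) (hG : IsReg G d) (hc : G.Connected)
    (f : V → ℝ) (hf : (transP G d).mulVec f = f) (x y : V) : f x = f y := by
  have hdd : ∀ v, (G.degree v : ℝ) = d := by
    intro v
    rw [← SimpleGraph.card_neighborSet_eq_degree, ← Nat.card_eq_fintype_card]
    exact_mod_cast hG v
  have h0 : (G.lapMatrix ℝ).mulVec f = 0 := by
    funext v
    have h1 := congrFun hf v
    simp only [Matrix.mulVec, dotProduct, transP, Matrix.of_apply] at h1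
    simp only [SimpleGraph.lapMatrix, Matrix.sub_mulVec, Pi.sub_apply, SimpleGraph.degMatrix,
      Matrix.mulVec_diagonal, SimpleGraph.adjMatrix_mulVec_apply, Pi.zero_apply, hdd]
    have h2 : ∑ u ∈ G.neighborFinset v, f u = d * f v := by
      rw [← h1, Finset.mul_sum]
      rw [SimpleGraph.neighborFinset_eq_filter, Finset.sum_filter]
      apply Finset.sum_congr rfl
      intro u _
      have : (d:ℝ) ≠ 0 := by positivity
      split_ifs <;> field_simp
      simp
    rw [h2]; ring
  exact (G.lapMatrix_mulVec_eq_zero_iff_forall_reachable).mp h0 x y (hc x y)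

structure SpecData (G : SimpleGraph V) (d : ℕ) (β : ℝ) (u : V → V → ℝ) (lam : V → ℝ) : Prop where
  eig : ∀ i, (transP G d).mulVec (u i) = lam i • u i
  compl : ∀ x y, ∑ i, u i x * u i y = if x = y then 1 else 0
  orth : ∀ i j, ∑ x, u i x * u j x = if i = j then 1 else 0
  gap : ∀ i, lam i = 1 ∨ β ≤ 1 - lam i

lemma exists_specData {G : SimpleGraph V} {d : ℕ} {β : ℝ} (hgap : SpectralGapLB G d β) :
    ∃ u lam, SpecData G d β u lam := by
  have hA := transP_herm G d
  have horth : ∀ i j, ∑ x, hA.eigenvectorBasis i x * hA.eigenvectorBasis j x =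
      if i = j then 1 else 0 := by
    intro i j
    have h := orthonormal_iff_ite.mp hA.eigenvectorBasis.orthonormal i j
    rw [← h]
    simp [PiLp.inner_apply, mul_comm]
  have heig : ∀ i, (transP G d).mulVec (fun x => hA.eigenvectorBasis i x) =
      hA.eigenvalues i • (fun x => hA.eigenvectorBasis i x) := by
    intro i
    exact hA.mulVec_eigenvectorBasis i
  refine ⟨fun i x => hA.eigenvectorBasis i x, hA.eigenvalues, heig, ?_, horth, ?_⟩
  · intro x y
    have h := hA.eigenvectorBasis.sum_inner_mul_inner (EuclideanSpace.single x (1:ℝ))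
      (EuclideanSpace.single y (1:ℝ))
    simpa [EuclideanSpace.inner_single_left, EuclideanSpace.inner_single_right,
      PiLp.inner_apply, Pi.single_apply, eq_comm] using h
  · intro i
    have := hgap (fun x => hA.eigenvectorBasis i x) (1 - hA.eigenvalues i) ?_ ?_
    · rcases this with h | h
      · left; linarith
      · right; exact h
    · rw [Matrix.sub_mulVec, heig, Matrix.one_mulVec, sub_smul, one_smul]
    · intro h0
      have := horth i i
      have h1 : ∀ x, hA.eigenvectorBasis i x = 0 := fun x => congrFun h0 x
      simp [h1] at this

variable {G : SimpleGraph V} {d : ℕ} {β : ℝ} {u : V → V → ℝ} {lam : V → ℝ}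

lemma SpecData.expand (S : SpecData G d β u lam) (f : V → ℝ) (x : V) :
    f x = ∑ i, u i x * ∑ v, u i v * f v := by
  simp_rw [Finset.mul_sum]
  rw [Finset.sum_comm]
  have : ∀ y, ∑ i, u i x * (u i y * f y) = (if x = y then 1 else 0) * f y := by
    intro y
    rw [← S.compl, Finset.sum_mul]
    exact Finset.sum_congr rfl fun _ _ => by ring
  simp [this]

lemma SpecData.pow (S : SpecData G d β u lam) (k : ℕ) (x y : V) :
    ((transP G d) ^ k) x y = ∑ i, lam i ^ k * (u i x * u i y) := by
  induction k generalizing x with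
  | zero => simp [S.compl, Matrix.one_apply]
  | succ k ih =>
    rw [pow_succ', Matrix.mul_apply]
    simp_rw [ih, Finset.mul_sum]
    rw [Finset.sum_comm]
    apply Finset.sum_congr rfl
    intro i _
    have := congrFun (S.eig i) x
    simp only [Matrix.mulVec, dotProduct, Pi.smul_apply, smul_eq_mul] at this
    calc _ = (∑ w, transP G d x w * u i w) * (lam i ^ k * u i y) := by
          rw [Finset.sum_mul]; exact Finset.sum_congr rfl fun _ _ => by ring
      _ = _ := by rw [this]; ring

lemma SpecData.one (S : SpecData G d β u lam) (hd : 0 < d) (hG : IsReg G d) (hc : G.Connected)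
    (x y : V) : ∑ i, (if lam i = 1 then u i x * u i y else 0) = 1 / (Nat.card V : ℝ) := by
  have h0 : ∀ i, lam i ≠ 1 → ∑ v, u i v * 1 = 0 := by
    intro i hi
    have h1 : ∑ v, (transP G d).mulVec (u i) v = ∑ v, u i v := by
      have := Matrix.dotProduct_mulVec (fun _ => (1:ℝ)) (transP G d) (u i)
      have h2 : Matrix.vecMul (fun _ => (1:ℝ)) (transP G d) = fun _ => 1 := by
        rw [← Matrix.mulVec_transpose, show (transP G d).transpose = transP G d from ?_]
        · exact transP_one hd hG
        · simpa [Matrix.IsHermitian] using transP_herm G d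
      rw [h2] at this
      simpa [dotProduct] using this
    rw [S.eig i] at h1
    simp only [Pi.smul_apply, smul_eq_mul, ← Finset.mul_sum] at h1
    simp only [mul_one]
    have : (lam i - 1) * ∑ v, u i v = 0 := by linarith
    rcases mul_eq_zero.mp this with h | h
    · exact absurd (by linarith) hi
    · exact h
  have h1 := S.expand (fun _ => 1) x
  have hN : (Nat.card V : ℝ) ≠ 0 := by
    have := hc.nonempty
    exact_mod_cast Nat.card_pos.ne'
  have h2 : (1:ℝ) = ∑ i, (if lam i = 1 then u i x * u i y else 0) * Nat.card V := by
    refine h1.trans ?_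
    apply Finset.sum_congr rfl
    intro i _
    split_ifs with hi
    · have hcst : ∀ v, u i v = u i y := fun v =>
        eig_one_const hd hG hc (u i) (by rw [S.eig i, hi, one_smul]) v y
      rw [Finset.sum_congr rfl fun v _ => by rw [hcst v]]
      simp; ring
    · rw [h0 i hi]; simp
  rw [← Finset.sum_mul] at h2
  field_simp; linarith

/-- reciprocal of the nonzero eigenvalues of the Laplacian -/
noncomputable def gcoef (lam : ℝ) : ℝ := if lam = 1 then 0 else 1 / (1 - lam)

lemma SpecData.heat (S : SpecData G d β u lam) (t : ℝ) (x y : V) :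
    heatK G d t x y = ∑ i, Real.exp (-((1 - lam i) * t)) * (u i x * u i y) := by
  unfold heatK
  have h : ∀ i, HasSum (fun k : ℕ => Real.exp (-t) * t ^ k / (Nat.factorial k) *
      (lam i ^ k * (u i x * u i y))) (Real.exp (-((1 - lam i) * t)) * (u i x * u i y)) := by
    intro i
    have h1 := NormedSpace.expSeries_div_hasSum_exp (lam i * t)
    rw [← Real.exp_eq_exp_ℝ] at h1
    have h2 := (h1.mul_left (Real.exp (-t))).mul_right (u i x * u i y)
    rw [← Real.exp_add] at h2
    rw [show -((1 - lam i) * t) = -t + lam i * t by ring]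
    have h3 : (fun k : ℕ => Real.exp (-t) * t ^ k / (Nat.factorial k) *
      (lam i ^ k * (u i x * u i y))) = fun k : ℕ => Real.exp (-t) *
      ((lam i * t) ^ k / (Nat.factorial k)) * (u i x * u i y) := by
      funext k; ring
    rw [h3]; exact h2
  have h2 := hasSum_sum (s := Finset.univ) fun i _ => h i
  rw [← h2.tsum_eq]
  congr 1
  funext k
  rw [S.pow, Finset.mul_sum]

lemma SpecData.green (S : SpecData G d β u lam) (hβ : 0 < β) (hd : 0 < d) (hG : IsReg G d)
    (hc : G.Connected) (x y : V) :
    zGreen G d (Nat.card V) x y = ∑ i, gcoef (lam i) * (u i x * u i y) := by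
  unfold zGreen
  have h1 : ∀ t, heatK G d t x y - 1 / (Nat.card V : ℝ) =
      ∑ i, (if lam i = 1 then 0 else Real.exp (-(1 - lam i) * t) * (u i x * u i y)) := by
    intro t
    rw [S.heat, ← S.one hd hG hc x y, ← Finset.sum_sub_distrib]
    apply Finset.sum_congr rfl
    intro i _
    split_ifs with h
    · simp [h]
    · simp only [neg_mul, sub_zero]
  simp_rw [h1]
  rw [integral_finsetSum]
  · apply Finset.sum_congr rfl
    intro i _
    unfold gcoef
    by_cases h : lam i = 1
    · simp [h]
    · simp only [h, if_false]
      have hpos : 0 < 1 - lam i := by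
        rcases S.gap i with h' | h'
        · exact absurd h' h
        · linarith
      rw [integral_mul_const, integral_exp_mul_Ioi (by linarith)]
      simp
      left
      rw [← neg_sub, neg_div_neg_eq, one_div]
  · intro i _
    by_cases h : lam i = 1
    · simp [h]
    · simp only [h, if_false]
      have hpos : 0 < 1 - lam i := by
        rcases S.gap i with h' | h'
        · exact absurd h' h
        · linarith
      apply Integrable.mul_const
      exact integrableOn_exp_mul_Ioi (by linarith) 0

lemma SpecData.gcoef_nonneg (S : SpecData G d β u lam) (hβ : 0 < β) (i : V) :
    0 ≤ gcoef (lam i) := by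
  unfold gcoef
  split_ifs with h
  · rfl
  · rcases S.gap i with h' | h'
    · exact absurd h' h
    · apply one_div_nonneg.mpr; linarith

lemma SpecData.gcoef_le (S : SpecData G d β u lam) (hβ : 0 < β) (i : V) :
    gcoef (lam i) ≤ 1 / β := by
  unfold gcoef
  split_ifs with h
  · positivity
  · rcases S.gap i with h' | h'
    · exact absurd h' h
    · exact one_div_le_one_div_of_le hβ h'

lemma SpecData.parseval (S : SpecData G d β u lam) (f : V → ℝ) :
    ∑ i, (∑ v, u i v * f v) ^ 2 = ∑ v, f v ^ 2 := by
  have : ∀ v, f v ^ 2 = f v * ∑ i, u i v * ∑ w, u i w * f w := by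
    intro v; rw [← S.expand]; ring
  simp_rw [this, Finset.mul_sum]
  rw [Finset.sum_comm]
  apply Finset.sum_congr rfl
  intro i _
  simp_rw [← Finset.mul_sum]
  rw [sq, Finset.sum_mul]
  exact Finset.sum_congr rfl fun _ _ => by ring

lemma SpecData.approx (S : SpecData G d β u lam) (hβ : 0 < β) (hd : 0 < d) (hG : IsReg G d)
    (hc : G.Connected) (y y' : V) (H ν : V → ℝ)
    (hH : ∀ i, (1 - lam i) * ∑ v, u i v * H v = u i y' - ∑ v, u i v * ν v) :
    |zGreen G d (Nat.card V) y y' - (H y - (∑ v, H v) / Nat.card V)| ≤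
      (1 / β) * Real.sqrt (∑ v, ν v ^ 2) := by
  have h1 : zGreen G d (Nat.card V) y y' - (H y - (∑ v, H v) / Nat.card V) =
      ∑ i, (gcoef (lam i) * u i y) * ∑ v, u i v * ν v := by
    have h2 : (∑ v, H v) / Nat.card V =
        ∑ i, (if lam i = 1 then u i y * ∑ v, u i v * H v else 0) := by
      have : ∀ i, (if lam i = 1 then u i y * ∑ v, u i v * H v else 0) =
          ∑ v, (if lam i = 1 then u i y * u i v else 0) * H v := by
        intro i
        split_ifs
        · rw [Finset.mul_sum]; exact Finset.sum_congr rfl fun _ _ => by ring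
        · simp
      simp_rw [this]
      rw [Finset.sum_comm]
      simp_rw [← Finset.sum_mul, S.one hd hG hc]
      rw [← Finset.mul_sum]; ring
    rw [S.green hβ hd hG hc, S.expand H y, h2, ← Finset.sum_sub_distrib, ← Finset.sum_sub_distrib]
    apply Finset.sum_congr rfl
    intro i _
    have := hH i
    unfold gcoef
    split_ifs with h
    · simp
    · have hne : 1 - lam i ≠ 0 := fun h0 => h (by linarith)
      field_simp
      rw [show u i y' = (1 - lam i) * (∑ v, u i v * H v) + ∑ v, u i v * ν v by linarith]
      ring
  rw [h1, show (1/β) * Real.sqrt (∑ v, ν v ^ 2) = Real.sqrt ((1/β)^2 * ∑ v, ν v ^ 2) by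
    rw [Real.sqrt_mul (by positivity), Real.sqrt_sq (by positivity)]]
  apply Real.abs_le_sqrt
  refine (Finset.sum_mul_sq_le_sq_mul_sq _ _ _).trans ?_
  rw [S.parseval]
  apply mul_le_mul_of_nonneg_right _ (Finset.sum_nonneg fun _ _ => sq_nonneg _)
  calc ∑ i, (gcoef (lam i) * u i y) ^ 2 ≤ ∑ i, (1/β)^2 * (u i y * u i y) := by
        apply Finset.sum_le_sum
        intro i _
        rw [mul_pow, ← sq (u i y)]
        apply mul_le_mul_of_nonneg_right _ (sq_nonneg _)
        exact pow_le_pow_left₀ (S.gcoef_nonneg hβ i) (S.gcoef_le hβ i) 2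
    _ = (1/β)^2 := by rw [← Finset.mul_sum, S.compl]; simp

lemma zGreen_symm {N : ℕ} (hgap : SpectralGapLB G d β) (hβ : 0 < β) (hd : 0 < d) (hG : IsReg G d)
    (hc : G.Connected) (hN : Nat.card V = N) (x y : V) :
    zGreen G d N x y = zGreen G d N y x := by
  obtain ⟨u, lam, S⟩ := exists_specData hgap
  subst hN
  rw [S.green hβ hd hG hc, S.green hβ hd hG hc]
  exact Finset.sum_congr rfl fun _ _ => by ring

lemma zGreen_quad {N : ℕ} (hgap : SpectralGapLB G d β) (hβ : 0 < β) (hd : 0 < d) (hG : IsReg G d)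
    (hc : G.Connected) (hN : Nat.card V = N) (s : Finset V) (c : V → ℝ) :
    0 ≤ ∑ x ∈ s, ∑ y ∈ s, c x * c y * zGreen G d N x y := by
  obtain ⟨u, lam, S⟩ := exists_specData hgap
  subst hN
  simp_rw [S.green hβ hd hG hc, Finset.mul_sum]
  have : ∑ x ∈ s, ∑ y ∈ s, ∑ i, c x * c y * (gcoef (lam i) * (u i x * u i y)) =
      ∑ i, gcoef (lam i) * (∑ x ∈ s, c x * u i x) ^ 2 := by
    simp_rw [sq, Finset.sum_mul_sum, Finset.mul_sum]
    rw [Finset.sum_congr rfl fun x _ => Finset.sum_comm, Finset.sum_comm]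
    refine Finset.sum_congr rfl fun _ _ => Finset.sum_congr rfl fun _ _ =>
      Finset.sum_congr rfl fun _ _ => by ring
  rw [this]
  exact Finset.sum_nonneg fun i _ => mul_nonneg (S.gcoef_nonneg hβ i) (sq_nonneg _)

end specsec
end GFF

namespace GFF
section estsec
variable {V : Type*} {T : Type*} [Fintype V] {G : SimpleGraph V} {Gt : SimpleGraph T}
  {d : ℕ} {β : ℝ}

lemma tail_sum (q : ℝ) (hq : 2 ≤ q) (m M : ℕ) :
    ∑ k ∈ Finset.range M, (if m ≤ k then (2 * (k:ℝ) + 1) * q⁻¹ ^ k else 0) ≤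
      2 * (2 * (m:ℝ) + 3) * q⁻¹ ^ m := by
  have hq0 : 0 < q := by linarith
  have key : ∀ M, ∑ k ∈ Finset.range M, (if m ≤ k then (2 * (k:ℝ) + 1) * q⁻¹ ^ k else 0) +
      (if m ≤ M then 2 * (2 * (M:ℝ) + 3) * q⁻¹ ^ M else 2 * (2 * (m:ℝ) + 3) * q⁻¹ ^ m) ≤
      2 * (2 * (m:ℝ) + 3) * q⁻¹ ^ m := by
    intro M
    induction M with
    | zero =>
      by_cases h : m ≤ 0
      · have : m = 0 := by omega
        subst this; simp
      · simp [h]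
    | succ M ih =>
      rw [Finset.sum_range_succ]
      by_cases h : m ≤ M
      · rw [if_pos h, if_pos (by omega)]
        rw [if_pos h] at ih
        have h2 : q⁻¹ ≤ 1 / 2 := by rw [one_div]; exact inv_anti₀ (by norm_num) hq
        have h3 : 0 < q⁻¹ ^ M := by positivity
        have h4 : 2 * (2 * ((M + 1 : ℕ):ℝ) + 3) * q⁻¹ ^ (M+1) ≤ (2 * (M:ℝ) + 5) * q⁻¹ ^ M := by
          push_cast
          rw [pow_succ]
          have : (0:ℝ) ≤ (2 * (2 * ((M:ℝ) + 1) + 3)) * q⁻¹ ^ M := by positivity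
          nlinarith [mul_le_mul_of_nonneg_left h2 this]
        nlinarith
      · rw [if_neg h] at ih ⊢
        by_cases h' : m ≤ M + 1
        · have : m = M + 1 := by omega
          subst this
          simp at ih ⊢
          linarith
        · rw [if_neg h']; linarith
  have := key M
  have h0 : 0 ≤ (if m ≤ M then 2 * (2 * (M:ℝ) + 3) * q⁻¹ ^ M else 2 * (2 * (m:ℝ) + 3) * q⁻¹ ^ m) := by
    split_ifs <;> positivity
  linarith

lemma cnt_split (hT : Gt.IsTree) (hd : 0 < d) (hTr : IsReg Gt d) (π : T → V) (z0 w : T) (k : ℕ) :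
    ∃ e : ℕ, cnt Gt π z0 k (π w) = (if Gt.dist z0 w = k then 1 else 0) + e ∧
      ((∀ z, π z = π w → z ≠ w → Gt.dist z0 z ≠ k) → e = 0) := by
  have hfin : {z | Gt.dist z0 z = k ∧ π z = π w}.Finite :=
    (sph_finite hT.connected hd hTr z0 k).subset fun z hz => hz.1
  unfold cnt
  split_ifs with h
  · refine ⟨({z | Gt.dist z0 z = k ∧ π z = π w} \ {w}).ncard, ?_, ?_⟩
    · rw [add_comm, Set.ncard_sdiff_singleton_add_one _ hfin]
      exact ⟨h, rfl⟩
    · intro h1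
      rw [Set.ncard_eq_zero hfin.sdiff]
      ext z
      simp only [Set.mem_sdiff, Set.mem_ofPred_eq, Set.mem_singleton_iff, Set.mem_empty_iff_false,
        iff_false, not_and, not_not]
      intro h2
      by_contra h3
      exact h1 z h2.2 h3 h2.1
  · refine ⟨_, (zero_add _).symm, ?_⟩
    intro h1
    rw [Set.ncard_eq_zero hfin]
    ext z
    simp only [Set.mem_ofPred_eq, Set.mem_empty_iff_false, iff_false, not_and]
    intro h2 h3
    by_cases h4 : z = w
    · subst h4; exact h h2
    · exact h1 z h3 h4 h2

lemma green_est (hT : Gt.IsTree) (hd3 : 3 ≤ d) (hTr : IsReg Gt d) (hG : G.Connected)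
    (hGr : IsReg G d) {π : T → V} (hπ : ∀ y : T, π '' (Gt.neighborSet y) = G.neighborSet (π y))
    (hβ : 0 < β) (hgap : SpectralGapLB G d β) (z0 w : T) (M0 m : ℕ)
    (hcyc : adjPairs G (gball G (π z0) (M0 + 1)) ≤ 2 * (gball G (π z0) (M0 + 1)).ncard)
    (hm : ∀ z, π z = π w → z ≠ w → m ≤ Gt.dist z0 z) :
    |zGreen G d (Nat.card V) (π w) (π z0) - treeGreen Gt d w z0| ≤
      2 * ((d:ℝ) - 1)⁻¹ ^ (M0 + 1) + 4 * (2 * (m:ℝ) + 3) * ((d:ℝ) - 1)⁻¹ ^ m +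
      3 * ((M0:ℝ) + 1) / (Nat.card V) +
      (1 / β) * Real.sqrt ((2 * (M0:ℝ) + 3) * ((d:ℝ) - 1)⁻¹ ^ (M0 + 1)) := by
  have hd : 0 < d := by omega
  have hdR : (3:ℝ) ≤ d := by exact_mod_cast hd3
  obtain ⟨u, lam, S⟩ := exists_specData hgap
  set q : ℝ := (d:ℝ) - 1 with hq
  have hq2 : 2 ≤ q := by rw [hq]; linarith
  have hq0 : 0 < q := by linarith
  set c : ℝ := q / ((d:ℝ) - 2) with hc
  have hd2 : (0:ℝ) < (d:ℝ) - 2 := by linarith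
  have hc0 : 0 < c := by positivity
  have hc2 : c ≤ 2 := by rw [hc, div_le_iff₀ hd2]; rw [hq]; linarith
  set b : ℕ → ℝ := fun k => c * (q⁻¹ ^ k - q⁻¹ ^ (M0 + 1)) with hb
  have hqi : q⁻¹ ≤ 1 := inv_le_one_of_one_le₀ (by linarith)
  have hqi0 : 0 < q⁻¹ := by positivity
  have hb0 : ∀ k ∈ Finset.range (M0 + 1), 0 ≤ b k := by
    intro k hk
    simp at hk
    have : q⁻¹ ^ (M0 + 1) ≤ q⁻¹ ^ k := pow_le_pow_of_le_one hqi0.le hqi (by omega)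
    exact mul_nonneg hc0.le (by linarith)
  have hb1 : ∀ k, b k ≤ c * q⁻¹ ^ k := by
    intro k
    apply mul_le_mul_of_nonneg_left _ hc0.le
    have : 0 < q⁻¹ ^ (M0 + 1) := by positivity
    linarith
  set H : V → ℝ := fun v => ∑ k ∈ Finset.range (M0 + 1), b k * (cnt Gt π z0 k v : ℝ) with hH
  set ν : V → ℝ := fun v => (q⁻¹ ^ M0 / d) * (cnt Gt π z0 (M0 + 1) v : ℝ) with hν
  have hid : ∀ i, (1 - lam i) * ∑ v, u i v * H v = u i (π z0) - ∑ v, u i v * ν v := by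
    intro i
    have h1 := tree_identity hT hd3 hd hTr z0 (fun z => u i (π z)) (lam i) (by
      intro z
      rw [sum_nbF_cover hd hTr hGr hπ, S.eig i]
      simp; ring) M0
    simp only [sum_sph_cnt hT hd hTr z0 _ π (u i)] at h1
    have h2 : ∑ v, u i v * H v = ∑ k ∈ Finset.range (M0 + 1),
        b k * ∑ v, (cnt Gt π z0 k v : ℝ) * u i v := by
      simp only [hH, Finset.mul_sum]
      rw [Finset.sum_comm]
      exact Finset.sum_congr rfl fun _ _ => Finset.sum_congr rfl fun _ _ => by ring
    have h3 : ∑ v, u i v * ν v = (q⁻¹ ^ M0 / d) * ∑ v, (cnt Gt π z0 (M0 + 1) v : ℝ) * u i v := by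
      simp only [hν, Finset.mul_sum]
      exact Finset.sum_congr rfl fun _ _ => by ring
    rw [h2, h3]
    exact h1
  have hap := S.approx hβ hd hGr hG (π w) (π z0) H ν hid
  have hcl : ∀ k ≤ M0 + 1, ∀ v, (cnt Gt π z0 k v : ℝ) ≤ 2 * k + 1 := by
    intro k hk v
    exact_mod_cast cnt_le hT hG hd hTr hGr hπ z0 (M0 + 1) hcyc k hk v
  have hcs : ∀ k, ∑ v, (cnt Gt π z0 k v : ℝ) = (sphF hT hd hTr z0 k).card := by
    intro k
    have := sum_sph_cnt hT hd hTr z0 k π (fun _ => (1:ℝ))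
    simp only [mul_one] at this
    rw [← this]; simp
  -- bound on nu
  have hν2 : ∑ v, ν v ^ 2 ≤ (2 * (M0:ℝ) + 3) * q⁻¹ ^ (M0 + 1) := by
    have h1 : ∀ v, ν v ^ 2 ≤ (q⁻¹ ^ M0 / d) ^ 2 * ((2 * (M0:ℝ) + 3) * (cnt Gt π z0 (M0 + 1) v : ℝ)) := by
      intro v
      simp only [hν, mul_pow]
      apply mul_le_mul_of_nonneg_left _ (by positivity)
      rw [sq]
      apply mul_le_mul_of_nonneg_right _ (by positivity)
      have := hcl (M0 + 1) le_rfl v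
      push_cast at this
      linarith
    refine (Finset.sum_le_sum fun v _ => h1 v).trans ?_
    rw [← Finset.mul_sum, ← Finset.mul_sum, hcs, card_sph]
    rw [← hq]
    have h2 : (q⁻¹ ^ M0 / d) ^ 2 * ((2 * (M0:ℝ) + 3) * (d * q ^ M0)) =
        (2 * (M0:ℝ) + 3) * q⁻¹ ^ M0 * (1 / d) := by
      rw [inv_pow]
      have : (d:ℝ) ≠ 0 := by positivity
      field_simp
    rw [h2, pow_succ, mul_assoc]
    apply mul_le_mul_of_nonneg_left _ (by positivity)
    apply mul_le_mul_of_nonneg_left _ (by positivity)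
    rw [one_div]
    exact inv_anti₀ hq0 (by rw [hq]; linarith)
  -- average of H
  have hHs : ∑ v, H v = ∑ k ∈ Finset.range (M0 + 1), b k * (sphF hT hd hTr z0 k).card := by
    simp only [hH]
    rw [Finset.sum_comm]
    exact Finset.sum_congr rfl fun k _ => by rw [← Finset.mul_sum, hcs]
  have hHs0 : 0 ≤ ∑ v, H v := by
    rw [hHs]
    exact Finset.sum_nonneg fun k hk => mul_nonneg (hb0 k hk) (by positivity)
  have hHs1 : ∑ v, H v ≤ 3 * ((M0:ℝ) + 1) := by
    rw [hHs]
    have : ∀ k ∈ Finset.range (M0 + 1), b k * ((sphF hT hd hTr z0 k).card : ℝ) ≤ 3 := by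
      intro k hk
      refine (mul_le_mul_of_nonneg_right (hb1 k) (by positivity)).trans ?_
      cases k with
      | zero => rw [sphF_zero]; simp; linarith
      | succ k =>
        rw [card_sph, ← hq, inv_pow, hc, pow_succ]
        have h3 : q / ((d:ℝ) - 2) * (q ^ k * q)⁻¹ * (d * q ^ k) = d / ((d:ℝ) - 2) := by
          field_simp
        rw [h3, div_le_iff₀ hd2]; linarith
    refine (Finset.sum_le_sum this).trans ?_
    simp; linarith
  -- H vs tree Green
  have hHt : |H (π w) - treeGreen Gt d w z0| ≤
      2 * q⁻¹ ^ (M0 + 1) + 4 * (2 * (m:ℝ) + 3) * q⁻¹ ^ m := by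
    choose e he1 he2 using fun k => cnt_split hT hd hTr π z0 w k
    have he3 : ∀ k ∈ Finset.range (M0 + 1), b k * (e k : ℝ) ≤
        2 * (if m ≤ k then (2 * (k:ℝ) + 1) * q⁻¹ ^ k else 0) := by
      intro k hk
      split_ifs with h
      · have h1 := hcl k (by simp at hk; omega) (π w)
        rw [he1] at h1
        have h2 : (e k : ℝ) ≤ 2 * k + 1 := by
          push_cast at h1
          have : (0:ℝ) ≤ if Gt.dist z0 w = k then 1 else 0 := by split_ifs <;> simp
          linarith
        calc b k * (e k:ℝ) ≤ (c * q⁻¹ ^ k) * (2 * k + 1) :=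
              mul_le_mul (hb1 k) h2 (by positivity) (by positivity)
          _ ≤ (2 * q⁻¹ ^ k) * (2 * k + 1) := by gcongr
          _ = _ := by ring
      · rw [he2 k]
        · simp
        · intro z hz hzw hk'
          have := hm z hz hzw
          omega
    have hE0 : 0 ≤ ∑ k ∈ Finset.range (M0 + 1), b k * (e k : ℝ) :=
      Finset.sum_nonneg fun k hk => mul_nonneg (hb0 k hk) (by positivity)
    have hE1 : ∑ k ∈ Finset.range (M0 + 1), b k * (e k : ℝ) ≤
        4 * (2 * (m:ℝ) + 3) * q⁻¹ ^ m := by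
      refine (Finset.sum_le_sum he3).trans ?_
      rw [← Finset.mul_sum]
      have := tail_sum q hq2 m (M0 + 1)
      linarith
    have hHE : H (π w) = (if Gt.dist z0 w < M0 + 1 then b (Gt.dist z0 w) else 0) +
        ∑ k ∈ Finset.range (M0 + 1), b k * (e k : ℝ) := by
      simp only [hH, he1]
      push_cast
      simp only [mul_add, Finset.sum_add_distrib]
      congr 1
      simp [Finset.sum_ite_eq]
    have ht : treeGreen Gt d w z0 = c * q⁻¹ ^ (Gt.dist z0 w) := by
      rw [treeGreen, SimpleGraph.dist_comm]
    have hmain : |(if Gt.dist z0 w < M0 + 1 then b (Gt.dist z0 w) else 0) -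
        c * q⁻¹ ^ (Gt.dist z0 w)| ≤ 2 * q⁻¹ ^ (M0 + 1) := by
      split_ifs with h
      · simp only [hb]
        rw [show c * (q⁻¹ ^ (Gt.dist z0 w) - q⁻¹ ^ (M0 + 1)) - c * q⁻¹ ^ (Gt.dist z0 w) =
          - (c * q⁻¹ ^ (M0 + 1)) by ring, abs_neg, abs_of_pos (by positivity)]
        gcongr
      · rw [zero_sub, abs_neg, abs_of_pos (by positivity)]
        have : q⁻¹ ^ (Gt.dist z0 w) ≤ q⁻¹ ^ (M0 + 1) := pow_le_pow_of_le_one hqi0.le hqi (by omega)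
        gcongr
    rw [hHE, ht]
    rw [abs_le] at hmain ⊢
    constructor
    · have : 0 ≤ 4 * (2 * (m:ℝ) + 3) * q⁻¹ ^ m := by positivity
      linarith [hmain.1]
    · linarith [hmain.2]
  have hN : (0:ℝ) < Nat.card V := by
    have := hG.nonempty
    exact_mod_cast Nat.card_pos
  have hav0 : 0 ≤ (∑ v, H v) / (Nat.card V : ℝ) := by positivity
  have hav1 : (∑ v, H v) / (Nat.card V : ℝ) ≤ 3 * ((M0:ℝ) + 1) / (Nat.card V) := by gcongr
  have hs : (1 / β) * Real.sqrt (∑ v, ν v ^ 2) ≤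
      (1 / β) * Real.sqrt ((2 * (M0:ℝ) + 3) * q⁻¹ ^ (M0 + 1)) := by gcongr
  have hap' := hap.trans hs
  rw [abs_le] at hap' hHt ⊢
  constructor <;> linarith [hap'.1, hap'.2, hHt.1, hHt.2]

end estsec
end GFF

namespace GFF
section gausssec
variable {ι : Type*} [Fintype ι]

section
open scoped MatrixOrder
lemma exists_root (A : Matrix ι ι ℝ) (hA : A.PosSemidef) :
    ∃ S : Matrix ι ι ℝ, S.PosSemidef ∧ S * S = A := by
  refine ⟨CFC.sqrt A, ?_, CFC.sqrt_mul_sqrt_self A hA.nonneg⟩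
  exact Matrix.nonneg_iff_posSemidef.mp (CFC.sqrt_nonneg A)
end

open Matrix in
lemma root_close (A B S R : Matrix ι ι ℝ) (hS : S.PosSemidef) (hR : R.PosSemidef)
    (hSA : S * S = A) (hRB : R * R = B) (δ : ℝ) (hδ : ∀ i j, |A i j - B i j| ≤ δ) (i : ι) :
    ∑ j, (S i j - R i j) ^ 2 ≤ Fintype.card ι * δ := by
  have hδ0 : 0 ≤ δ := (abs_nonneg _).trans (hδ i i)
  have hD : (S - R).IsHermitian := hS.1.sub hR.1
  set v : ι → ι → ℝ := fun k x => hD.eigenvectorBasis k x with hv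
  set l : ι → ℝ := hD.eigenvalues with hl
  have heig : ∀ k, (S - R) *ᵥ v k = l k • v k := fun k => hD.mulVec_eigenvectorBasis k
  have horth : ∀ k, v k ⬝ᵥ v k = 1 := by
    intro k
    have h := orthonormal_iff_ite.mp hD.eigenvectorBasis.orthonormal k k
    simp only [PiLp.inner_apply, if_true] at h
    simpa [dotProduct, hv, sq] using h
  have hcompl : ∀ x y, ∑ k, v k x * v k y = if x = y then 1 else 0 := by
    intro x y
    have h := hD.eigenvectorBasis.sum_inner_mul_inner (EuclideanSpace.single x (1:ℝ))
      (EuclideanSpace.single y (1:ℝ))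
    simpa [EuclideanSpace.inner_single_left, EuclideanSpace.inner_single_right,
      PiLp.inner_apply, Pi.single_apply, eq_comm] using h
  have hlk : ∀ k, l k ^ 2 ≤ Fintype.card ι * δ := by
    intro k
    have hs0 : 0 ≤ v k ⬝ᵥ (S *ᵥ v k) := by simpa using hS.dotProduct_mulVec_nonneg (v k)
    have hr0 : 0 ≤ v k ⬝ᵥ (R *ᵥ v k) := by simpa using hR.dotProduct_mulVec_nonneg (v k)
    have h1 : v k ⬝ᵥ ((S - R) *ᵥ v k) = l k := by
      rw [heig, dotProduct_smul, horth]; simp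
    have h1' : v k ⬝ᵥ (S *ᵥ v k) - v k ⬝ᵥ (R *ᵥ v k) = l k := by
      rw [← h1, sub_mulVec, dotProduct_sub]
    have hvm : v k ᵥ* (S - R) = l k • v k := by
      rw [← heig, ← mulVec_transpose]
      rw [show (S - R)ᵀ = S - R by simpa [Matrix.IsHermitian] using hD]
    have h2 : v k ⬝ᵥ ((A - B) *ᵥ v k) = l k * (v k ⬝ᵥ (S *ᵥ v k) + v k ⬝ᵥ (R *ᵥ v k)) := by
      have e : A - B = (1/2:ℝ) • ((S - R) * (S + R) + (S + R) * (S - R)) := by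
        rw [← hSA, ← hRB]
        have : (S - R) * (S + R) + (S + R) * (S - R) = (2:ℝ) • (S * S - R * R) := by
          rw [two_smul]; noncomm_ring
        rw [this, smul_smul]; norm_num
      rw [e, smul_mulVec, add_mulVec, dotProduct_smul, dotProduct_add, ← mulVec_mulVec,
        ← mulVec_mulVec, heig, mulVec_smul, dotProduct_smul, dotProduct_mulVec (v k) (S - R), hvm,
        smul_dotProduct, add_mulVec, dotProduct_add]
      simp only [smul_eq_mul]; ring
    have h3 : |v k ⬝ᵥ ((A - B) *ᵥ v k)| ≤ Fintype.card ι * δ := by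
      have e : v k ⬝ᵥ ((A - B) *ᵥ v k) = ∑ x, ∑ y, v k x * (A x y - B x y) * v k y := by
        simp only [dotProduct, mulVec, Finset.mul_sum, Matrix.sub_apply]
        exact Finset.sum_congr rfl fun _ _ => Finset.sum_congr rfl fun _ _ => by ring
      rw [e]
      have h4 : |∑ x, ∑ y, v k x * (A x y - B x y) * v k y| ≤ ∑ x, ∑ y, |v k x| * δ * |v k y| := by
        refine (Finset.abs_sum_le_sum_abs _ _).trans (Finset.sum_le_sum fun x _ => ?_)
        refine (Finset.abs_sum_le_sum_abs _ _).trans (Finset.sum_le_sum fun y _ => ?_)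
        rw [abs_mul, abs_mul]
        gcongr
        exact hδ x y
      refine h4.trans ?_
      have h5 : ∑ x, ∑ y, |v k x| * δ * |v k y| = δ * (∑ x, |v k x|) ^ 2 := by
        rw [sq, Finset.sum_mul_sum, Finset.mul_sum]
        refine Finset.sum_congr rfl fun x _ => ?_
        rw [Finset.mul_sum]
        exact Finset.sum_congr rfl fun _ _ => by ring
      rw [h5, mul_comm]
      apply mul_le_mul_of_nonneg_right _ hδ0
      have h6 := sq_sum_le_card_mul_sum_sq (s := Finset.univ) (f := fun x => |v k x|)
      refine h6.trans ?_
      have : ∑ x, |v k x| ^ 2 = 1 := by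
        rw [← horth k, dotProduct]
        exact Finset.sum_congr rfl fun _ _ => by rw [sq_abs, sq]
      rw [this]; simp
    rw [h2, abs_mul] at h3
    refine le_trans ?_ h3
    rw [← sq_abs, sq]
    apply mul_le_mul_of_nonneg_left _ (abs_nonneg _)
    rw [← h1', abs_of_nonneg (add_nonneg hs0 hr0)]
    rw [abs_le]; constructor <;> linarith
  -- entries of D
  have hDij : ∀ j, S i j - R i j = ∑ k, l k * v k i * v k j := by
    intro j
    have h1 : ∀ k, l k * v k i = ∑ x, (S i x - R i x) * v k x := by
      intro k
      have := congrFun (heig k) i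
      simp only [mulVec, dotProduct, Pi.smul_apply, smul_eq_mul, Matrix.sub_apply] at this
      exact this.symm
    simp_rw [h1, Finset.sum_mul]
    rw [Finset.sum_comm]
    have : ∀ x, ∑ k, (S i x - R i x) * v k x * v k j = (S i x - R i x) * (if x = j then 1 else 0) := by
      intro x
      rw [← hcompl, Finset.mul_sum]
      exact Finset.sum_congr rfl fun _ _ => by ring
    simp [this]
  have hsum : ∑ j, (S i j - R i j) ^ 2 = ∑ k, l k ^ 2 * (v k i * v k i) := by
    have h1 : ∀ k, l k * v k i = ∑ x, (S i x - R i x) * v k x := by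
      intro k
      have := congrFun (heig k) i
      simp only [mulVec, dotProduct, Pi.smul_apply, smul_eq_mul, Matrix.sub_apply] at this
      exact this.symm
    have : ∀ j, (S i j - R i j) ^ 2 = ∑ k, (S i j - R i j) * (l k * v k i * v k j) := by
      intro j
      rw [← Finset.mul_sum, ← hDij, sq]
    simp_rw [this]
    rw [Finset.sum_comm]
    refine Finset.sum_congr rfl fun k _ => ?_
    calc _ = (l k * v k i) * ∑ x, (S i x - R i x) * v k x := by
          rw [Finset.mul_sum]; exact Finset.sum_congr rfl fun _ _ => by ring
      _ = _ := by rw [← h1]; ring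
  rw [hsum]
  calc _ ≤ ∑ k, (Fintype.card ι * δ) * (v k i * v k i) := by
        refine Finset.sum_le_sum fun k _ => mul_le_mul_of_nonneg_right (hlk k) (mul_self_nonneg _)
    _ = _ := by rw [← Finset.mul_sum, hcompl]; simp

lemma std_lin (a : ι → ℝ) : (stdGaussian (EuclideanSpace ℝ ι)).map (fun z => ∑ i, a i * z i) =
    gaussianReal 0 (Real.toNNReal (∑ i, a i ^ 2)) := by
  have h := IsGaussian.map_eq_gaussianReal (μ := stdGaussian (EuclideanSpace ℝ ι))
    (innerSL ℝ (WithLp.toLp 2 a))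
  rw [integral_strongDual_stdGaussian, variance_dual_stdGaussian] at h
  rw [innerSL_apply_norm, EuclideanSpace.norm_sq_eq] at h
  simp only [Real.norm_eq_abs, sq_abs] at h
  rw [← h]
  congr 1
  funext z
  simp [PiLp.inner_apply, mul_comm]

lemma gauss_tail (v : ℝ≥0) (s ε : ℝ) (hs : 0 < s) (hv : (v:ℝ) ≤ s) (hε : 0 < ε) :
    gaussianReal 0 v {x | ε < |x|} ≤ ENNReal.ofReal (2 * Real.exp (-(ε ^ 2 / (2 * s)))) := by
  have h1 : HasSubgaussianMGF id s.toNNReal (gaussianReal 0 v) := by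
    refine ⟨fun t => integrable_exp_mul_gaussianReal t, fun t => ?_⟩
    rw [mgf_id_gaussianReal]
    simp only [zero_mul, zero_add]
    apply Real.exp_le_exp.mpr
    rw [Real.coe_toNNReal s hs.le]
    gcongr
  have h2 := h1.measure_ge_le hε.le
  have h3 := h1.neg.measure_ge_le hε.le
  have h4 : {x : ℝ | ε < |x|} ⊆ {x | ε ≤ id x} ∪ {x | ε ≤ (-id) x} := by
    intro x hx
    simp only [Set.mem_ofPred_eq, lt_abs] at hx
    rcases hx with h | h
    · left; exact h.le
    · right; exact h.le
  refine (measure_mono h4).trans ((measure_union_le _ _).trans ?_)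
  rw [two_mul, ENNReal.ofReal_add (Real.exp_pos _).le (Real.exp_pos _).le]
  have e : -ε ^ 2 / (2 * (s.toNNReal : ℝ)) = -(ε ^ 2 / (2 * s)) := by
    rw [Real.coe_toNNReal s hs.le]
    ring
  rw [e] at h2 h3
  apply add_le_add
  · rw [← ENNReal.ofReal_toReal (measure_ne_top _ _)]
    exact ENNReal.ofReal_le_ofReal h2
  · rw [← ENNReal.ofReal_toReal (measure_ne_top _ _)]
    exact ENNReal.ofReal_le_ofReal h3

lemma psd_of_quad (K : ι → ι → ℝ) (hs : ∀ i j, K i j = K j i)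
    (h0 : ∀ c : ι → ℝ, 0 ≤ ∑ i, ∑ j, c i * c j * K i j) : (Matrix.of K).PosSemidef := by
  refine Matrix.PosSemidef.of_dotProduct_mulVec_nonneg ?_ ?_
  · ext i j; simp [Matrix.conjTranspose_apply, hs i j]
  · intro x
    refine (h0 x).trans (le_of_eq ?_)
    simp only [dotProduct, Matrix.mulVec, Finset.mul_sum, Matrix.of_apply]
    refine Finset.sum_congr rfl fun _ _ => Finset.sum_congr rfl fun _ _ => ?_
    change _ = x _ * (_ * x _)
    ring

lemma quad_root (K : ι → ι → ℝ) (S : Matrix ι ι ℝ) (hS : S.PosSemidef)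
    (hSK : S * S = Matrix.of K) (c : ι → ℝ) :
    ∑ j, (∑ i, c i * S i j) ^ 2 = ∑ i, ∑ j, c i * c j * K i j := by
  have hsym : ∀ i j, S i j = S j i := by
    intro i j
    have := hS.1.apply i j
    simpa using this.symm
  have h1 : ∀ i j, K i j = ∑ k, S i k * S j k := by
    intro i j
    have := congrFun (congrFun hSK i) j
    rw [Matrix.mul_apply] at this
    simp only [Matrix.of_apply] at this
    rw [← this]
    exact Finset.sum_congr rfl fun k _ => by rw [hsym k j]
  simp_rw [h1, sq, Finset.sum_mul_sum, Finset.mul_sum]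
  rw [Finset.sum_comm]
  refine Finset.sum_congr rfl fun i _ => ?_
  rw [Finset.sum_comm]
  exact Finset.sum_congr rfl fun _ _ => Finset.sum_congr rfl fun _ _ => by ring

theorem gauss_coupling (K1 K2 : ι → ι → ℝ) (hs1 : ∀ i j, K1 i j = K1 j i)
    (hs2 : ∀ i j, K2 i j = K2 j i)
    (h1 : ∀ c : ι → ℝ, 0 ≤ ∑ i, ∑ j, c i * c j * K1 i j)
    (h2 : ∀ c : ι → ℝ, 0 ≤ ∑ i, ∑ j, c i * c j * K2 i j) (δ s : ℝ)
    (hδ : ∀ i j, |K1 i j - K2 i j| ≤ δ) (hs : 0 < s) (hcs : Fintype.card ι * δ ≤ s) :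
    ∃ P : Measure ((ι → ℝ) × (ι → ℝ)), IsProbabilityMeasure P ∧
      (∀ c : ι → ℝ, (P.map Prod.fst).map (fun ω => ∑ i, c i * ω i) =
        gaussianReal 0 (Real.toNNReal (∑ i, ∑ j, c i * c j * K1 i j))) ∧
      (∀ c : ι → ℝ, (P.map Prod.snd).map (fun ω => ∑ i, c i * ω i) =
        gaussianReal 0 (Real.toNNReal (∑ i, ∑ j, c i * c j * K2 i j))) ∧
      ∀ ε : ℝ, 0 < ε → P {p | ∃ i, ε < |p.1 i - p.2 i|} ≤
        ENNReal.ofReal (2 * Fintype.card ι * Real.exp (-(ε ^ 2 / (2 * s)))) := by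
  obtain ⟨S, hS, hSK⟩ := exists_root _ (psd_of_quad K1 hs1 h1)
  obtain ⟨R, hR, hRK⟩ := exists_root _ (psd_of_quad K2 hs2 h2)
  set γ := stdGaussian (EuclideanSpace ℝ ι) with hγ
  set F : EuclideanSpace ℝ ι → (ι → ℝ) × (ι → ℝ) :=
    fun z => (fun i => ∑ j, S i j * z j, fun i => ∑ j, R i j * z j) with hF
  have hFm : Measurable F := by
    apply Measurable.prodMk
    · refine measurable_pi_lambda _ fun i => ?_
      fun_prop
    · refine measurable_pi_lambda _ fun i => ?_
      fun_prop
  have lin : ∀ (A : Matrix ι ι ℝ) (c : ι → ℝ) (z : EuclideanSpace ℝ ι),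
      ∑ i, c i * ∑ j, A i j * z j = ∑ j, (∑ i, c i * A i j) * z j := by
    intro A c z
    simp_rw [Finset.mul_sum, Finset.sum_mul]
    rw [Finset.sum_comm]
    exact Finset.sum_congr rfl fun _ _ => Finset.sum_congr rfl fun _ _ => by ring
  refine ⟨γ.map F, Measure.isProbabilityMeasure_map hFm.aemeasurable, ?_, ?_, ?_⟩
  · intro c
    rw [Measure.map_map measurable_fst hFm, Measure.map_map (by fun_prop) (by fun_prop),
      ← quad_root K1 S hS hSK, ← std_lin]
    congr 1
    funext z
    exact lin S c z
  · intro c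
    rw [Measure.map_map measurable_snd hFm, Measure.map_map (by fun_prop) (by fun_prop),
      ← quad_root K2 R hR hRK, ← std_lin]
    congr 1
    funext z
    exact lin R c z
  · intro ε hε
    have hsub : {p : (ι → ℝ) × (ι → ℝ) | ∃ i, ε < |p.1 i - p.2 i|} =
        ⋃ i, {p : (ι → ℝ) × (ι → ℝ) | ε < |p.1 i - p.2 i|} := by
      ext p; simp
    rw [hsub]
    have hi : ∀ i, (γ.map F) {p : (ι → ℝ) × (ι → ℝ) | ε < |p.1 i - p.2 i|} ≤
        ENNReal.ofReal (2 * Real.exp (-(ε ^ 2 / (2 * s)))) := by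
      intro i
      have hlaw : (γ.map F).map (fun p => p.1 i - p.2 i) =
          gaussianReal 0 (Real.toNNReal (∑ j, (S i j - R i j) ^ 2)) := by
        rw [Measure.map_map (by fun_prop) hFm, ← std_lin]
        congr 1
        funext z
        simp only [hF, Function.comp, sub_mul, Finset.sum_sub_distrib]
      have hset : {p : (ι → ℝ) × (ι → ℝ) | ε < |p.1 i - p.2 i|} =
          (fun p => p.1 i - p.2 i) ⁻¹' {x : ℝ | ε < |x|} := rfl
      rw [hset, ← Measure.map_apply (by fun_prop)
        (measurableSet_lt measurable_const (by fun_prop)), hlaw]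
      apply gauss_tail _ _ _ hs _ hε
      rw [Real.coe_toNNReal _ (Finset.sum_nonneg fun _ _ => sq_nonneg _)]
      exact (root_close _ _ S R hS hR hSK hRK δ hδ i).trans hcs
    refine (measure_iUnion_fintype_le _ _).trans ((Finset.sum_le_sum fun i _ => hi i).trans ?_)
    rw [Finset.sum_const, nsmul_eq_mul, show 2 * (Fintype.card ι : ℝ) * Real.exp (-(ε ^ 2 / (2 * s))) =
      Fintype.card ι * (2 * Real.exp (-(ε ^ 2 / (2 * s)))) by ring,
      ENNReal.ofReal_mul (Nat.cast_nonneg (Fintype.card ι)), ENNReal.ofReal_natCast,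
      Finset.card_univ]

/-- a finite measure on a finite product is determined by the laws of linear functionals -/
lemma ext_lin {μ ν : Measure (ι → ℝ)} [IsFiniteMeasure μ] [IsFiniteMeasure ν]
    (h : ∀ c : ι → ℝ, μ.map (fun ω => ∑ i, c i * ω i) = ν.map (fun ω => ∑ i, c i * ω i)) :
    μ = ν := by
  apply Measure.ext_of_charFunDual
  funext L
  rw [charFunDual_eq_charFun_map_one, charFunDual_eq_charFun_map_one]
  congr 1
  have hL : (L : (ι → ℝ) → ℝ) = fun ω => ∑ i, L (Pi.single i 1) * ω i := by
    funext ω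
    conv_lhs => rw [← Finset.univ_sum_single ω]
    rw [map_sum]
    refine Finset.sum_congr rfl fun i _ => ?_
    have : (Pi.single i (ω i) : ι → ℝ) = ω i • Pi.single i 1 := by
      rw [← Pi.single_smul]; simp
    rw [this, map_smul]; simp [mul_comm]
  rw [hL]
  exact h _

end gausssec
end GFF

namespace GFF
section gluesec

lemma glue_half {A C D : Type*} [MeasurableSpace A] [MeasurableSpace C] [MeasurableSpace D]
    [StandardBorelSpace D] [Nonempty D] (μ : Measure A) [IsProbabilityMeasure μ]
    (f : A → C) (hf : Measurable f)
    (P : Measure (C × D)) [IsProbabilityMeasure P] (hP : P.map Prod.fst = μ.map f) :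
    ∃ Q : Measure (A × D), IsProbabilityMeasure Q ∧ Q.map Prod.fst = μ ∧
      Q.map (Prod.map f id) = P := by
  refine ⟨μ.compProd (P.condKernel.comap f hf), inferInstance, Measure.fst_compProd _ _, ?_⟩
  have hP' : P.fst = μ.map f := hP
  conv_rhs => rw [← P.disintegrate P.condKernel, hP']
  ext s hs
  have hm : Measurable (Prod.map f (id : D → D)) := hf.prodMap measurable_id
  rw [Measure.map_apply hm hs, Measure.compProd_apply (hm hs), Measure.compProd_apply hs,
    lintegral_map (Kernel.measurable_kernel_prodMk_left hs) hf]
  rfl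

lemma glue_s11 {A B C D : Type*} [MeasurableSpace A] [MeasurableSpace B] [MeasurableSpace C]
    [MeasurableSpace D] [StandardBorelSpace D] [Nonempty D] [StandardBorelSpace A] [Nonempty A]
    (μ : Measure A) [IsProbabilityMeasure μ] (ν : Measure B) [IsProbabilityMeasure ν]
    (f : A → C) (hf : Measurable f) (g : B → D) (hg : Measurable g)
    (P : Measure (C × D)) [IsProbabilityMeasure P] (hP1 : P.map Prod.fst = μ.map f)
    (hP2 : P.map Prod.snd = ν.map g) :
    ∃ Q : Measure (A × B), Q.map Prod.fst = μ ∧ Q.map Prod.snd = ν ∧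
      Q.map (Prod.map f g) = P := by
  obtain ⟨Q, hQp, hQ1, hQ2⟩ := glue_half μ f hf P hP1
  have hsw : IsProbabilityMeasure (Q.map Prod.swap) :=
    Measure.isProbabilityMeasure_map measurable_swap.aemeasurable
  have hfi : Measurable (Prod.map f (id : D → D)) := hf.prodMap measurable_id
  have hgi : Measurable (Prod.map g (id : A → A)) := hg.prodMap measurable_id
  have h1 : (Q.map Prod.swap).map Prod.fst = ν.map g := by
    rw [← hP2, ← hQ2, Measure.map_map measurable_fst measurable_swap,
      Measure.map_map measurable_snd hfi]
    rfl
  obtain ⟨Q', hQp', hQ1', hQ2'⟩ := glue_half ν g hg (Q.map Prod.swap) h1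
  refine ⟨Q'.map Prod.swap, ?_, ?_, ?_⟩
  · rw [Measure.map_map measurable_fst measurable_swap]
    have : (Prod.fst ∘ Prod.swap : B × A → A) = (Prod.snd ∘ (Prod.map g (id : A → A))) := rfl
    rw [this, ← Measure.map_map measurable_snd hgi, hQ2',
      Measure.map_map measurable_snd measurable_swap]
    exact hQ1
  · rw [Measure.map_map measurable_snd measurable_swap]
    exact hQ1'
  · rw [Measure.map_map (hf.prodMap hg) measurable_swap]
    have : (Prod.map f g ∘ Prod.swap : B × A → C × D) =
        (Prod.map f id ∘ Prod.swap) ∘ (Prod.map g (id : A → A)) := rfl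
    rw [this, ← Measure.map_map (hfi.comp measurable_swap) hgi, hQ2',
      Measure.map_map (hfi.comp measurable_swap) measurable_swap]
    have : ((Prod.map f id ∘ Prod.swap) ∘ Prod.swap : A × D → C × D) = Prod.map f id := rfl
    rw [this, hQ2]

lemma field_marg {I ι : Type*} [Fintype ι] {μ : Measure (I → ℝ)} {K : I → I → ℝ}
    (h : IsGaussianField μ K) (f : ι → I) (hf : Function.Injective f) (c : ι → ℝ) :
    (μ.map (fun ω i => ω (f i))).map (fun ω => ∑ i, c i * ω i) =
      gaussianReal 0 (Real.toNNReal (∑ i, ∑ j, c i * c j * K (f i) (f j))) := by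
  set C : I →₀ ℝ := Finsupp.embDomain ⟨f, hf⟩ (Finsupp.equivFunOnFinite.symm c) with hC
  have hs : ∀ F : I → ℝ → ℝ, (∀ i, F i 0 = 0) →
      ∑ i ∈ C.support, F i (C i) = ∑ i, F (f i) (c i) := by
    intro F hF
    change C.sum F = _
    rw [hC, Finsupp.sum_embDomain, Finsupp.sum_fintype _ _ (fun i => hF _)]
    rfl
  have h2 := h.2 C
  have e1 : ∀ ω : I → ℝ, ∑ i ∈ C.support, C i * ω i = ∑ i, c i * ω (f i) := fun ω =>
    hs (fun i a => a * ω i) (by simp)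
  have e2 : ∑ i ∈ C.support, ∑ j ∈ C.support, C i * C j * K i j =
      ∑ i, ∑ j, c i * c j * K (f i) (f j) := by
    rw [hs (fun i a => ∑ j ∈ C.support, a * C j * K i j) (by simp)]
    exact Finset.sum_congr rfl fun i _ => hs (fun j b => c i * b * K (f i) j) (by simp)
  simp only [e1, e2] at h2
  rw [Measure.map_map (by fun_prop) (by fun_prop)]
  exact h2

lemma quad_nonneg {ι : Type*} [Fintype ι] {ν : Measure (ι → ℝ)} [IsProbabilityMeasure ν]
    {K : ι → ι → ℝ} (hsym : ∀ i j, K i j = K j i) (hK : ∀ i j, 0 ≤ K i j)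
    (h : ∀ c : ι → ℝ, ν.map (fun ω => ∑ i, c i * ω i) =
      gaussianReal 0 (Real.toNNReal (∑ i, ∑ j, c i * c j * K i j))) (c : ι → ℝ) :
    0 ≤ ∑ i, ∑ j, c i * c j * K i j := by
  have hvar : ∀ c : ι → ℝ, Var[fun ω => ∑ i, c i * ω i; ν] =
      Real.toNNReal (∑ i, ∑ j, c i * c j * K i j) := by
    intro c
    have := variance_map (X := id) (Y := fun ω : ι → ℝ => ∑ i, c i * ω i) (μ := ν)
      aemeasurable_id (Measurable.aemeasurable (by fun_prop))
    rw [h c, variance_id_gaussianReal] at this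
    rw [this]; rfl
  have hL : ∀ i, MemLp (fun ω : ι → ℝ => ω i) 2 ν := by
    intro i
    have h1 := h (Pi.single i 1)
    have h2 : (fun ω : ι → ℝ => ∑ j, (Pi.single i 1 : ι → ℝ) j * ω j) = fun ω => ω i := by
      funext ω; simp [Pi.single_apply]
    rw [h2] at h1
    have h3 : MemLp id 2 (ν.map fun ω => ω i) := by
      rw [h1]; exact memLp_id_gaussianReal 2
    exact (memLp_map_measure_iff aestronglyMeasurable_id (measurable_pi_apply i).aemeasurable).mp h3
  have hv1 : ∀ i, Var[fun ω : ι → ℝ => ω i; ν] = K i i := by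
    intro i
    have h1 := hvar (Pi.single i 1)
    have h2 : (fun ω : ι → ℝ => ∑ j, (Pi.single i 1 : ι → ℝ) j * ω j) = fun ω => ω i := by
      funext ω; simp [Pi.single_apply]
    rw [h2] at h1
    rw [h1]
    simp [Pi.single_apply, hK]
  have hv2 : ∀ i j, Var[fun ω : ι → ℝ => ω i + ω j; ν] = K i i + 2 * K i j + K j j := by
    intro i j
    have h1 := hvar (Pi.single i 1 + Pi.single j 1)
    have h2 : (fun ω : ι → ℝ => ∑ k, (Pi.single i 1 + Pi.single j 1 : ι → ℝ) k * ω k) =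
        fun ω => ω i + ω j := by
      funext ω; simp [Pi.single_apply, add_mul, Finset.sum_add_distrib]
    rw [h2] at h1
    rw [h1]
    have h3 : ∑ a, ∑ b, (Pi.single i 1 + Pi.single j 1 : ι → ℝ) a *
        (Pi.single i 1 + Pi.single j 1 : ι → ℝ) b * K a b = K i i + 2 * K i j + K j j := by
      simp [Pi.single_apply, add_mul, mul_add, Finset.sum_add_distrib]
      rw [hsym j i]; ring
    rw [h3, Real.coe_toNNReal]
    linarith [hK i i, hK i j, hK j j]
  have hcov : ∀ i j, cov[fun ω : ι → ℝ => ω i, fun ω => ω j; ν] = K i j := by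
    intro i j
    have := variance_fun_add (hL i) (hL j)
    rw [hv2, hv1, hv1] at this
    linarith
  have hfin : Var[fun ω => ∑ i, c i * ω i; ν] = ∑ i, ∑ j, c i * c j * K i j := by
    rw [← covariance_self (Measurable.aemeasurable (by fun_prop)), covariance_fun_sum_fun_sum
      (fun i => (hL i).const_mul _) (fun i => (hL i).const_mul _)]
    refine Finset.sum_congr rfl fun i _ => Finset.sum_congr rfl fun j _ => ?_
    rw [covariance_const_mul_left, covariance_const_mul_right, hcov]; ring
  rw [← hfin]
  exact variance_nonneg _ _

/-- coupling of two Gaussian fields from entrywise closeness of covariances on a finite set -/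
theorem field_coupling {I J : Type*} [Countable I] {μ : Measure (I → ℝ)} {ν : Measure (J → ℝ)}
    {K1 : I → I → ℝ} {K2 : J → J → ℝ} (hμ : IsGaussianField μ K1) (hν : IsGaussianField ν K2)
    (hs1 : ∀ i j, K1 i j = K1 j i) (hs2 : ∀ i j, K2 i j = K2 j i)
    (h1 : ∀ (s : Finset I) (c : I → ℝ), 0 ≤ ∑ x ∈ s, ∑ y ∈ s, c x * c y * K1 x y)
    (h2 : ∀ i j, 0 ≤ K2 i j)
    (B : Finset I) (ρ : I → J) (hρ : Set.InjOn ρ B) (δ s : ℝ)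
    (hδ : ∀ x ∈ B, ∀ y ∈ B, |K1 x y - K2 (ρ x) (ρ y)| ≤ δ) (hs : 0 < s) (hcs : B.card * δ ≤ s) :
    ∃ Q : Measure ((I → ℝ) × (J → ℝ)), Q.map Prod.fst = μ ∧ Q.map Prod.snd = ν ∧
      ∀ ε : ℝ, 0 < ε → Q {q | ∃ y ∈ B, ε < |q.1 y - q.2 (ρ y)|} ≤
        ENNReal.ofReal (2 * B.card * Real.exp (-(ε ^ 2 / (2 * s)))) := by
  have := hμ.1
  have := hν.1
  set f : B → I := fun b => b.1 with hf
  set g : B → J := fun b => ρ b.1 with hg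
  have hfi : Function.Injective f := Subtype.val_injective
  have hgi : Function.Injective g := fun a b hab => Subtype.ext (hρ a.2 b.2 hab)
  have hrf : Measurable (fun (ω : I → ℝ) (i : B) => ω (f i)) := by fun_prop
  have hrg : Measurable (fun (ω : J → ℝ) (i : B) => ω (g i)) := by fun_prop
  have hp1 : IsProbabilityMeasure (μ.map (fun ω i => ω (f i))) :=
    Measure.isProbabilityMeasure_map hrf.aemeasurable
  have hp2 : IsProbabilityMeasure (ν.map (fun ω i => ω (g i))) :=
    Measure.isProbabilityMeasure_map hrg.aemeasurable
  have hq1 : ∀ c : B → ℝ, 0 ≤ ∑ i, ∑ j, c i * c j * K1 (f i) (f j) := by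
    intro c
    have := h1 B (fun x => if hx : x ∈ B then c ⟨x, hx⟩ else 0)
    rw [← Finset.sum_coe_sort] at this
    simp_rw [← Finset.sum_coe_sort B] at this
    simpa using this
  have hq2 : ∀ c : B → ℝ, 0 ≤ ∑ i, ∑ j, c i * c j * K2 (g i) (g j) :=
    quad_nonneg (K := fun i j => K2 (g i) (g j)) (fun _ _ => hs2 _ _) (fun _ _ => h2 _ _)
      (field_marg hν g hgi)
  obtain ⟨P, hP, hP1, hP2, hP3⟩ := gauss_coupling (fun i j => K1 (f i) (f j))
    (fun i j => K2 (g i) (g j)) (fun _ _ => hs1 _ _) (fun _ _ => hs2 _ _) hq1 hq2 δ s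
    (fun i j => hδ i.1 i.2 j.1 j.2) hs (by simpa using hcs)
  have hPp1 : IsProbabilityMeasure (P.map Prod.fst) :=
    Measure.isProbabilityMeasure_map measurable_fst.aemeasurable
  have hPp2 : IsProbabilityMeasure (P.map Prod.snd) :=
    Measure.isProbabilityMeasure_map measurable_snd.aemeasurable
  have e1 : P.map Prod.fst = μ.map (fun ω i => ω (f i)) :=
    ext_lin fun c => by rw [hP1, field_marg hμ f hfi]
  have e2 : P.map Prod.snd = ν.map (fun ω i => ω (g i)) :=
    ext_lin fun c => by rw [hP2, field_marg hν g hgi]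
  obtain ⟨Q, hQ1, hQ2, hQ3⟩ := glue_s11 μ ν _ hrf _ hrg P e1 e2
  refine ⟨Q, hQ1, hQ2, fun ε hε => ?_⟩
  have hset : {q : (I → ℝ) × (J → ℝ) | ∃ y ∈ B, ε < |q.1 y - q.2 (ρ y)|} =
      (Prod.map (fun (ω : I → ℝ) (i : B) => ω (f i)) (fun (ω : J → ℝ) (i : B) => ω (g i))) ⁻¹'
        {p | ∃ i, ε < |p.1 i - p.2 i|} := by
    ext q
    simp [hf, hg]
  have hms : MeasurableSet {p : (B → ℝ) × (B → ℝ) | ∃ i, ε < |p.1 i - p.2 i|} := by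
    have : {p : (B → ℝ) × (B → ℝ) | ∃ i, ε < |p.1 i - p.2 i|} =
        ⋃ i, {p : (B → ℝ) × (B → ℝ) | ε < |p.1 i - p.2 i|} := by
      ext p; simp
    rw [this]
    refine MeasurableSet.iUnion fun i => measurableSet_lt measurable_const ?_
    fun_prop
  rw [hset, ← Measure.map_apply (hrf.prodMap hrg) hms, hQ3]
  simpa using hP3 ε hε

end gluesec
end GFF

namespace GFF
section fin
variable {V : Type*} {T : Type*}

lemma asym (q β : ℝ) (hq : 2 ≤ q) : ∃ M1 : ℕ, ∀ M ≥ M1, ∀ R : ℕ, 6 * R ≤ M →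
    2 * q⁻¹ ^ M + 3 * (M:ℝ) * q⁻¹ ^ M + (1 / β) * Real.sqrt ((2 * (M:ℝ) + 1) * q⁻¹ ^ M)
      ≤ 1 / 2 * q⁻¹ ^ R := by
  have hq0 : 0 < q := by linarith
  set b : ℝ := Real.sqrt q⁻¹ with hb
  have hb0 : 0 < b := Real.sqrt_pos.mpr (by positivity)
  have hb2 : b ^ 2 = q⁻¹ := Real.sq_sqrt (by positivity)
  have hqi : q⁻¹ < 1 := inv_lt_one_of_one_lt₀ (by linarith)
  have hb1 : b < 1 := by
    rw [hb, Real.sqrt_lt' one_pos]; simpa using hqi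
  have t1 : Tendsto (fun M : ℕ => b ^ M) atTop (nhds 0) :=
    tendsto_pow_atTop_nhds_zero_of_lt_one hb0.le hb1
  have t2 : Tendsto (fun M : ℕ => (M:ℝ) * b ^ M) atTop (nhds 0) :=
    tendsto_self_mul_const_pow_of_lt_one hb0.le hb1
  have t3 : Tendsto (fun M : ℕ => 2 * b ^ M + 3 * ((M:ℝ) * b ^ M) +
      |1 / β| * Real.sqrt (2 * ((M:ℝ) * b ^ M) + b ^ M)) atTop (nhds 0) := by
    have h1 := ((t2.const_mul 2).add t1).sqrt
    have := ((t1.const_mul 2).add (t2.const_mul 3)).add (h1.const_mul |1/β|)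
    simpa using this
  obtain ⟨M1, h⟩ := eventually_atTop.mp (t3.eventually (gt_mem_nhds (show (0:ℝ) < 1/2 by norm_num)))
  refine ⟨M1, fun M hM R hR => ?_⟩
  have h3 := (h M hM).le
  have e1 : q⁻¹ ^ M ≤ q⁻¹ ^ R * b ^ M := by
    rw [← hb2, ← pow_mul, ← pow_mul, ← pow_add]
    exact pow_le_pow_of_le_one hb0.le hb1.le (by omega)
  have e2 : q⁻¹ ^ M ≤ (q⁻¹ ^ R) ^ 2 * b ^ M := by
    rw [← hb2, ← pow_mul, ← pow_mul, ← pow_mul, ← pow_add]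
    exact pow_le_pow_of_le_one hb0.le hb1.le (by omega)
  have hR0 : 0 < q⁻¹ ^ R := by positivity
  have e3 : Real.sqrt ((2 * (M:ℝ) + 1) * q⁻¹ ^ M) ≤
      q⁻¹ ^ R * Real.sqrt (2 * ((M:ℝ) * b ^ M) + b ^ M) := by
    nth_rewrite 1 [← Real.sqrt_sq hR0.le]
    rw [← Real.sqrt_mul (by positivity)]
    apply Real.sqrt_le_sqrt
    calc _ ≤ (2 * (M:ℝ) + 1) * ((q⁻¹ ^ R) ^ 2 * b ^ M) := by gcongr
      _ = _ := by ring
  calc _ ≤ 2 * (q⁻¹ ^ R * b ^ M) + 3 * (M:ℝ) * (q⁻¹ ^ R * b ^ M) +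
        |1/β| * (q⁻¹ ^ R * Real.sqrt (2 * ((M:ℝ) * b ^ M) + b ^ M)) := by
        gcongr
        exact le_abs_self _
    _ = q⁻¹ ^ R * (2 * b ^ M + 3 * ((M:ℝ) * b ^ M) +
      |1 / β| * Real.sqrt (2 * ((M:ℝ) * b ^ M) + b ^ M)) := by ring
    _ ≤ q⁻¹ ^ R * (1/2) := by gcongr
    _ = _ := by ring

lemma ball_card [Fintype V] {Gt : SimpleGraph T} {G : SimpleGraph V} {d : ℕ} (hT : Gt.IsTree)
    (hd3 : 3 ≤ d) (hTr : IsReg Gt d) (hG : G.Connected) {π : T → V}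
    (hπ : ∀ y : T, π '' (Gt.neighborSet y) = G.neighborSet (π y)) (z : T) (r : ℕ) :
    ((gball G (π z) r).toFinset.card : ℝ) ≤ d * ((d:ℝ) - 1) ^ r / ((d:ℝ) - 2) := by
  have hd : 0 < d := by omega
  have hdR : (3:ℝ) ≤ d := by exact_mod_cast hd3
  have hsub : (gball G (π z) r).toFinset ⊆
      ((Finset.range (r+1)).biUnion fun k => sphF hT hd hTr z k).image π := by
    intro y hy
    rw [Set.mem_toFinset] at hy
    obtain ⟨w, hw, hw2⟩ := cover_lift hG hπ z y
    have hy' : G.dist (π z) y ≤ r := hy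
    refine Finset.mem_image.mpr ⟨w, ?_, hw⟩
    simp only [Finset.mem_biUnion, Finset.mem_range, mem_sphF]
    exact ⟨Gt.dist z w, by omega, by simp⟩
  have h1 : ((gball G (π z) r).toFinset.card : ℝ) ≤
      ∑ k ∈ Finset.range (r+1), ((sphF hT hd hTr z k).card : ℝ) := by
    exact_mod_cast (Finset.card_le_card hsub).trans (Finset.card_image_le.trans Finset.card_biUnion_le)
  refine h1.trans ?_
  have h2 : ∀ r : ℕ, ∑ k ∈ Finset.range (r+1), ((sphF hT hd hTr z k).card : ℝ) ≤
      (d * ((d:ℝ) - 1) ^ r - 2) / ((d:ℝ) - 2) := by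
    intro r
    induction r with
    | zero =>
      rw [le_div_iff₀ (by linarith)]
      simp [sphF_zero]
    | succ r ih =>
      rw [Finset.sum_range_succ, card_sph]
      refine (add_le_add_left ih _).trans (le_of_eq ?_)
      have : (d:ℝ) - 2 ≠ 0 := by linarith
      field_simp
      ring
  refine (h2 r).trans ?_
  apply div_le_div_of_nonneg_right _ (by linarith)
  linarith

lemma pow_bound (q : ℝ) (hq : 2 ≤ q) (R : ℕ) (hR : 2 ≤ R) :
    4 * (4 * (R:ℝ) + 3) * q⁻¹ ^ (R + 1) ≤ 5.5 := by
  have hq0 : 0 < q := by linarith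
  have h2 : (8:ℝ) * (4 * R + 3) ≤ 11 * 2 ^ (R + 1) := by
    induction R, hR using Nat.le_induction with
    | base => norm_num
    | succ R hR ih =>
      have : (2:ℝ) ≤ R := by exact_mod_cast hR
      rw [pow_succ]; push_cast; nlinarith
  have h3 : (2:ℝ) ^ (R+1) ≤ q ^ (R+1) := by gcongr
  rw [inv_pow, ← div_eq_mul_inv, div_le_iff₀ (by positivity)]
  nlinarith

theorem core_s11 [Fintype V] {Gt : SimpleGraph T} {G : SimpleGraph V} {d : ℕ} (hT : Gt.IsTree)
    (hd3 : 3 ≤ d) (hTr : IsReg Gt d) (hG : G.Connected) (hGr : IsReg G d) {β : ℝ} (hβ : 0 < β)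
    (hgap : SpectralGapLB G d β) {N : ℕ} (hN : Nat.card V = N)
    {π : T → V} (hπ : ∀ y : T, π '' (Gt.neighborSet y) = G.neighborSet (π y))
    (M : ℕ) (hM : 1 ≤ M) (hcyc : ∀ x, adjPairs G (gball G x M) ≤ 2 * (gball G x M).ncard)
    (r R : ℕ) (hr : 1 ≤ r) (hrR : r < R)
    (has : 2 * ((d:ℝ) - 1)⁻¹ ^ M + 3 * (M:ℝ) / N +
      (1 / β) * Real.sqrt ((2 * (M:ℝ) + 1) * ((d:ℝ) - 1)⁻¹ ^ M) ≤ 1 / 2 * ((d:ℝ) - 1)⁻¹ ^ R)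
    {μ : Measure (V → ℝ)} (hμ : IsGaussianField μ (zGreen G d N))
    {μT : Measure (T → ℝ)} (hμT : IsGaussianField μT (treeGreen Gt d))
    (C : Finset T) (hC : C.card ≤ 2) (ρ : V → T)
    (hρ : ∀ z ∈ C, ∀ w, Gt.dist z w ≤ 2 * R → ρ (π w) = w) :
    ∃ Q : Measure ((V → ℝ) × (T → ℝ)), Q.map Prod.fst = μ ∧ Q.map Prod.snd = μT ∧
      ∀ ε : ℝ, 0 < ε → Q {q | ∃ z ∈ C, ∃ y ∈ gball G (π z) r, ε < |q.1 y - q.2 (ρ y)|} ≤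
              ENNReal.ofReal (8 * d * ((d : ℝ) - 1) ^ r *
                Real.exp (-(ε ^ 2 * ((d : ℝ) - 1) * ((d : ℝ) - 2) / (24 * (d : ℝ) ^ 2)) *
                  ((d : ℝ) - 1) ^ ((R : ℤ) - 2 * (r : ℤ)))) := by
  have hd : 0 < d := by omega
  have hdR : (3:ℝ) ≤ d := by exact_mod_cast hd3
  set B : Finset V := C.biUnion fun z => (gball G (π z) r).toFinset with hB
  have hmB : ∀ y, y ∈ B ↔ ∃ z ∈ C, y ∈ gball G (π z) r := by
    intro y; simp [hB]
  -- lifts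
  have hl : ∀ y ∈ B, π (ρ y) = y ∧ ∃ z ∈ C, Gt.dist z (ρ y) ≤ r := by
    intro y hy
    obtain ⟨z, hz, hy⟩ := (hmB y).mp hy
    have hy' : G.dist (π z) y ≤ r := hy
    obtain ⟨w, hw, hw2⟩ := cover_lift hG hπ z y
    have := hρ z hz w (by omega)
    rw [hw] at this
    rw [this]
    exact ⟨hw, z, hz, by omega⟩
  have hinj : Set.InjOn ρ B := by
    intro a ha b hb hab
    rw [← (hl a ha).1, ← (hl b hb).1, hab]
  set q : ℝ := (d:ℝ) - 1 with hq
  have hq2 : 2 ≤ q := by rw [hq]; linarith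
  have hq0 : 0 < q := by linarith
  have hcB : (B.card : ℝ) ≤ 2 * (d * q ^ r / ((d:ℝ) - 2)) := by
    have h1 : (B.card : ℝ) ≤ ∑ z ∈ C, ((gball G (π z) r).toFinset.card : ℝ) := by
      exact_mod_cast Finset.card_biUnion_le
    refine h1.trans ((Finset.sum_le_sum fun z _ => ball_card hT hd3 hTr hG hπ z r).trans ?_)
    rw [Finset.sum_const, nsmul_eq_mul]
    have : (C.card:ℝ) ≤ 2 := by exact_mod_cast hC
    have : 0 ≤ d * q ^ r / ((d:ℝ) - 2) := div_nonneg (by positivity) (by linarith)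
    gcongr
  set δ : ℝ := 6 * q⁻¹ ^ (R - r) with hδd
  set s : ℝ := 12 * (d:ℝ)^2 / (q * ((d:ℝ) - 2)) * (q ^ ((R:ℤ) - 2 * (r:ℤ)))⁻¹ with hsd
  have hd2 : 0 < (d:ℝ) - 2 := by linarith
  have hs : 0 < s := by positivity
  have hδ : ∀ x ∈ B, ∀ y ∈ B, |zGreen G d N x y - treeGreen Gt d (ρ x) (ρ y)| ≤ δ := by
    intro x hx y hy
    obtain ⟨hx1, zx, hzx, hdx⟩ := hl x hx
    obtain ⟨hy1, zy, hzy, hdy⟩ := hl y hy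
    have hm : ∀ z, π z = π (ρ x) → z ≠ ρ x → (2 * R + 1 - r) ≤ Gt.dist (ρ y) z := by
      intro z hz hne
      by_contra hlt
      apply hne
      have h1 := hρ zy hzy z (by
        have := hT.1.dist_triangle (u := zy) (v := ρ y) (w := z)
        omega)
      rw [← h1, hz, hx1]
    have hge := green_est hT hd3 hTr hG hGr hπ hβ hgap (ρ y) (ρ x) (M - 1) (2 * R + 1 - r)
      (by rw [Nat.sub_add_cancel hM]; exact hcyc _) hm
    rw [Nat.sub_add_cancel hM, hx1, hy1, hN, ← hq] at hge
    refine hge.trans ?_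
    have c1 : ((M - 1 : ℕ) : ℝ) = (M:ℝ) - 1 := by rw [Nat.cast_sub hM]; simp
    have c2 : ((2 * R + 1 - r : ℕ) : ℝ) = 2 * (R:ℝ) + 1 - r := by
      rw [Nat.cast_sub (by omega)]; push_cast; ring
    rw [c1, c2]
    have e1 : 2 * ((M:ℝ) - 1) + 3 = 2 * M + 1 := by ring
    have e2 : (M:ℝ) - 1 + 1 = M := by ring
    rw [e1, e2]
    have e3 : q⁻¹ ^ (2 * R + 1 - r) = q⁻¹ ^ (R + 1) * q⁻¹ ^ (R - r) := by
      rw [← pow_add]; congr 1; omega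
    have hr1 : (1:ℝ) ≤ r := by exact_mod_cast hr
    have hpos : 0 < q⁻¹ ^ (R - r) := by positivity
    have hb1 : 4 * (2 * (2 * (R:ℝ) + 1 - r) + 3) * q⁻¹ ^ (2 * R + 1 - r) ≤
        5.5 * q⁻¹ ^ (R - r) := by
      rw [e3, ← mul_assoc]
      refine mul_le_mul_of_nonneg_right (le_trans ?_ (pow_bound q hq2 R (by omega))) hpos.le
      refine mul_le_mul_of_nonneg_right ?_ (by positivity)
      linarith
    have hb2 : q⁻¹ ^ R ≤ q⁻¹ ^ (R - r) :=
      pow_le_pow_of_le_one (by positivity) (inv_le_one_of_one_le₀ (by linarith)) (by omega)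
    rw [hδd]
    linarith
  have hpw : q ^ r * q⁻¹ ^ (R - r) = (q ^ ((R:ℤ) - 2 * (r:ℤ)))⁻¹ := by
    rw [← zpow_natCast, ← zpow_natCast, inv_zpow', ← zpow_add₀ hq0.ne', ← zpow_neg]
    congr 1
    rw [Nat.cast_sub hrR.le]; ring
  have hcs : B.card * δ ≤ s := by
    have hδ0 : 0 ≤ δ := by positivity
    refine (mul_le_mul_of_nonneg_right hcB hδ0).trans ?_
    have : 2 * (d * q ^ r / ((d:ℝ) - 2)) * δ = 12 * d / ((d:ℝ) - 2) * (q ^ r * q⁻¹ ^ (R - r)) := by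
      rw [hδd]; ring
    rw [this, hpw, hsd]
    refine mul_le_mul_of_nonneg_right ?_ (by positivity)
    rw [div_le_div_iff₀ hd2 (by positivity)]
    have : q ≤ d := by rw [hq]; linarith
    have h0 : 0 ≤ 12 * (d:ℝ) * ((d:ℝ) - 2) := by positivity
    nlinarith [mul_le_mul_of_nonneg_left this h0]
  obtain ⟨Q, hQ1, hQ2, hQ3⟩ := field_coupling hμ hμT
    (fun x y => zGreen_symm hgap hβ hd hGr hG hN x y)
    (fun x y => by unfold treeGreen; rw [SimpleGraph.dist_comm])
    (fun S c => zGreen_quad hgap hβ hd hGr hG hN S c)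
    (fun x y => by unfold treeGreen; rw [← hq]; positivity) B ρ hinj δ s hδ hs hcs
  refine ⟨Q, hQ1, hQ2, fun ε hε => ?_⟩
  have hset : {p : (V → ℝ) × (T → ℝ) | ∃ z ∈ C, ∃ y ∈ gball G (π z) r, ε < |p.1 y - p.2 (ρ y)|} ⊆
      {p | ∃ y ∈ B, ε < |p.1 y - p.2 (ρ y)|} := by
    rintro p ⟨z, hz, y, hy, h⟩
    exact ⟨y, (hmB y).mpr ⟨z, hz, hy⟩, h⟩
  refine (measure_mono hset).trans ((hQ3 ε hε).trans (ENNReal.ofReal_le_ofReal ?_))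
  have hexp : -(ε ^ 2 / (2 * s)) = -(ε ^ 2 * q * ((d : ℝ) - 2) / (24 * (d : ℝ) ^ 2)) *
                  q ^ ((R : ℤ) - 2 * (r : ℤ)) := by
    have hz : q ^ ((R : ℤ) - 2 * (r : ℤ)) ≠ 0 := by positivity
    rw [hsd]
    generalize q ^ ((R : ℤ) - 2 * (r : ℤ)) = Z at hz ⊢
    have : (d:ℝ) - 2 ≠ 0 := hd2.ne'
    field_simp
    ring
  rw [hexp]
  refine mul_le_mul_of_nonneg_right ?_ (Real.exp_pos _).le
  have h1 : d * q ^ r / ((d:ℝ) - 2) ≤ d * q ^ r := div_le_self (by positivity) (by linarith)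
  have : 0 ≤ d * q ^ r := by positivity
  linarith

lemma as_N {d : ℕ} (hd : 3 ≤ d) {α β : ℝ} (hα : 0 < α ∧ α ≤ 1) (hβ : 0 < β ∧ β ≤ 2) :
    ∃ n₀ : ℕ, ∀ N ≥ n₀, 1 ≤ ⌊α * Real.logb ((d : ℝ) - 1) (N : ℝ)⌋₊ ∧
      ∀ R : ℕ, (R : ℝ) ≤ c0 d α β / 6 * Real.logb ((d : ℝ) - 1) (N : ℝ) →
      2 * ((d:ℝ) - 1)⁻¹ ^ ⌊α * Real.logb ((d : ℝ) - 1) (N : ℝ)⌋₊ +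
        3 * ((⌊α * Real.logb ((d : ℝ) - 1) (N : ℝ)⌋₊ : ℕ):ℝ) / N +
      (1 / β) * Real.sqrt ((2 * ((⌊α * Real.logb ((d : ℝ) - 1) (N : ℝ)⌋₊:ℕ):ℝ) + 1) *
        ((d:ℝ) - 1)⁻¹ ^ ⌊α * Real.logb ((d : ℝ) - 1) (N : ℝ)⌋₊) ≤ 1 / 2 * ((d:ℝ) - 1)⁻¹ ^ R := by
  have hdR : (3:ℝ) ≤ d := by exact_mod_cast hd
  set q : ℝ := (d:ℝ) - 1 with hq
  have hq2 : 2 ≤ q := by rw [hq]; linarith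
  have hq0 : 0 < q := by linarith
  obtain ⟨M1, h⟩ := asym q β hq2
  have ht : Tendsto (fun N : ℕ => ⌊α * Real.logb q (N : ℝ)⌋₊) atTop atTop :=
    tendsto_nat_floor_atTop.comp
      (((Real.tendsto_logb_atTop (by linarith)).comp tendsto_natCast_atTop_atTop).const_mul_atTop hα.1)
  obtain ⟨n0, hn0⟩ := eventually_atTop.mp
    ((ht.eventually (eventually_ge_atTop (max 1 M1))).and (eventually_ge_atTop 1))
  refine ⟨n0, fun N hN => ?_⟩
  obtain ⟨h1, h2⟩ := hn0 N hN
  refine ⟨le_trans (le_max_left _ _) h1, fun R hR => ?_⟩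
  have hN1 : (1:ℝ) ≤ N := by exact_mod_cast h2
  set L := Real.logb q (N:ℝ) with hL
  have hL0 : 0 ≤ L := Real.logb_nonneg (by linarith) hN1
  have hc : c0 d α β ≤ α := by
    unfold c0
    rw [← hq, div_le_iff₀ hq0]
    exact mul_le_mul_of_nonneg_left (by linarith) hα.1.le
  have h6 : 6 * R ≤ ⌊α * L⌋₊ := by
    apply Nat.le_floor
    push_cast
    nlinarith [mul_le_mul_of_nonneg_right hc hL0]
  have hMN : q ^ ⌊α * L⌋₊ ≤ (N:ℝ) := by
    have h3 : ((⌊α * L⌋₊:ℕ):ℝ) ≤ L := (Nat.floor_le (mul_nonneg hα.1.le hL0)).trans (by nlinarith)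
    rw [← Real.rpow_natCast]
    calc _ ≤ q ^ L := Real.rpow_le_rpow_of_exponent_le (by linarith) h3
      _ = N := Real.rpow_logb hq0 (by linarith) (by linarith)
  have := h _ (le_trans (le_max_right _ _) h1) R h6
  refine le_trans ?_ this
  gcongr
  rw [div_eq_mul_inv, inv_pow]
  gcongr

end fin
end GFF

/-- local approximation of the zero-average GFF by the tree GFF on
tree-like neighbourhoods, with a quantitative coupling bound. -/
theorem gff_local_approximation_coupling
    (d : ℕ) (hd : 3 ≤ d)
    (V : ℕ → Type) [∀ n, Fintype (V n)]
    (G : ∀ n, SimpleGraph (V n)) (N : ℕ → ℕ) (α β : ℝ)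
    (hα : 0 < α ∧ α ≤ 1) (hβ : 0 < β ∧ β ≤ 2)
    (hNmono : StrictMono N) (hNpos : ∀ n, 1 ≤ N n)
    (hcard : ∀ n, Nat.card (V n) = N n)
    (hconn : ∀ n, (G n).Connected)
    (hreg : ∀ n, GFF.IsReg (G n) d)
    (hcyc : ∀ n (x : V n),
      GFF.adjPairs (G n) (GFF.gball (G n) x ⌊α * Real.logb ((d : ℝ) - 1) (N n : ℝ)⌋₊) ≤
        2 * (GFF.gball (G n) x ⌊α * Real.logb ((d : ℝ) - 1) (N n : ℝ)⌋₊).ncard)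
    (hgap : ∀ n, GFF.SpectralGapLB (G n) d β)
    (μ : ∀ n, Measure (V n → ℝ))
    (hμ : ∀ n, GFF.IsGaussianField (μ n) (GFF.zGreen (G n) d (N n)))
    (T : Type) (Gt : SimpleGraph T) (o : T) (htree : GFF.IsRegTree Gt d)
    (μT : Measure (T → ℝ)) (hμT : GFF.IsGaussianField μT (GFF.treeGreen Gt d)) :
    ∃ n₀ : ℕ, ∀ n ≥ n₀,
      (∀ (x x' : V n) (π : T → V n), GFF.IsCoverMap Gt (G n) o x π →
        ∀ r R : ℕ, 1 ≤ r → r < R →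
        (R : ℝ) ≤ GFF.c0 d α β / 6 * Real.logb ((d : ℝ) - 1) (N n : ℝ) →
        GFF.TxZero (G n) (GFF.gball (G n) x (2 * R)) →
        GFF.TxZero (G n) (GFF.gball (G n) x' (2 * R)) →
        GFF.gball (G n) x (2 * R) ∩ GFF.gball (G n) x' (2 * R) = ∅ →
        ∀ z' : T, π z' = x' →
        ∀ ρ : V n → T,
          (∀ z ∈ GFF.gball Gt o (2 * R) ∪ GFF.gball Gt z' (2 * R), ρ (π z) = z) →
          (∀ v ∈ GFF.gball (G n) x (2 * R) ∪ GFF.gball (G n) x' (2 * R),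
            π (ρ v) = v ∧ ρ v ∈ GFF.gball Gt o (2 * R) ∪ GFF.gball Gt z' (2 * R)) →
        ∃ Q : Measure ((V n → ℝ) × (T → ℝ)),
          Q.map Prod.fst = μ n ∧ Q.map Prod.snd = μT ∧
          ∀ ε : ℝ, 0 < ε →
            Q {q | ∃ y ∈ GFF.gball (G n) x r ∪ GFF.gball (G n) x' r,
                ε < |q.1 y - q.2 (ρ y)|} ≤
              ENNReal.ofReal (8 * d * ((d : ℝ) - 1) ^ r *
                Real.exp (-(ε ^ 2 * ((d : ℝ) - 1) * ((d : ℝ) - 2) / (24 * (d : ℝ) ^ 2)) *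
                  ((d : ℝ) - 1) ^ ((R : ℤ) - 2 * (r : ℤ)))) ) ∧
      (∀ (x : V n) (π : T → V n), GFF.IsCoverMap Gt (G n) o x π →
        ∀ r R : ℕ, 1 ≤ r → r < R →
        (R : ℝ) ≤ GFF.c0 d α β / 6 * Real.logb ((d : ℝ) - 1) (N n : ℝ) →
        GFF.TxZero (G n) (GFF.gball (G n) x (2 * R)) →
        ∀ ρ : V n → T,
          (∀ z ∈ GFF.gball Gt o (2 * R), ρ (π z) = z) →
          (∀ v ∈ GFF.gball (G n) x (2 * R), π (ρ v) = v ∧ ρ v ∈ GFF.gball Gt o (2 * R)) →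
        ∃ Q : Measure ((V n → ℝ) × (T → ℝ)),
          Q.map Prod.fst = μ n ∧ Q.map Prod.snd = μT ∧
          ∀ ε : ℝ, 0 < ε →
            Q {q | ∃ y ∈ GFF.gball (G n) x r, ε < |q.1 y - q.2 (ρ y)|} ≤
              ENNReal.ofReal (8 * d * ((d : ℝ) - 1) ^ r *
                Real.exp (-(ε ^ 2 * ((d : ℝ) - 1) * ((d : ℝ) - 2) / (24 * (d : ℝ) ^ 2)) *
                  ((d : ℝ) - 1) ^ ((R : ℤ) - 2 * (r : ℤ)))) ) := by
  obtain ⟨n0, h0⟩ := GFF.as_N hd hα hβ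
  have hT : Gt.IsTree := ⟨htree.1, htree.2.1⟩
  refine ⟨n0, fun n hn => ?_⟩
  obtain ⟨hM, has⟩ := h0 (N n) (le_trans hn (hNmono.id_le n))
  constructor
  · intro x x' π hπ r R hr hrR hR _ _ _ z' hz' ρ hρ _
    obtain ⟨Q, h1, h2, h3⟩ := GFF.core_s11 hT hd htree.2.2 (hconn n) (hreg n) hβ.1 (hgap n) (hcard n)
      hπ.2.2 _ hM (hcyc n) r R hr hrR (has R hR) (hμ n) hμT {o, z'} Finset.card_le_two ρ (by
        intro z hz w hw
        rcases Finset.mem_insert.mp hz with rfl | hz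
        · exact hρ w (Or.inl hw)
        · rw [Finset.mem_singleton] at hz
          subst hz
          exact hρ w (Or.inr hw))
    refine ⟨Q, h1, h2, fun ε hε => (measure_mono ?_).trans (h3 ε hε)⟩
    rintro p ⟨y, hy | hy, h⟩
    · exact ⟨o, by simp, y, by rw [hπ.1]; exact hy, h⟩
    · exact ⟨z', by simp, y, by rw [hz']; exact hy, h⟩
  · intro x π hπ r R hr hrR hR _ ρ hρ _
    obtain ⟨Q, h1, h2, h3⟩ := GFF.core_s11 hT hd htree.2.2 (hconn n) (hreg n) hβ.1 (hgap n) (hcard n)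
      hπ.2.2 _ hM (hcyc n) r R hr hrR (has R hR) (hμ n) hμT {o} (by simp) ρ (by
        intro z hz w hw
        rw [Finset.mem_singleton] at hz
        subst hz
        exact hρ w hw)
    refine ⟨Q, h1, h2, fun ε hε => (measure_mono ?_).trans (h3 ε hε)⟩
    rintro p ⟨y, hy, h⟩
    exact ⟨o, by simp, y, by rw [hπ.1]; exact hy, h⟩
end
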